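/- Let J ≤ Γ_g, let Υ = J\~Σ_g, let Y be a strongly boundary reduced tiled surface embedded in Υ, and let C ⊆ Y^(1) be a non-nullhomotopic cycle. Then every shortest representative in Υ^(1) of the free homotopy class of C in Υ is contained in Y. -/

import Mathlib

/-!
Formalization preamble for "Core Surfaces" (Magee–Puder).

We work with a fixed combinatorial (CW) model.  The surface `Σ_g` has one vertex,
`2g` directed labeled edges (the label `2i` plays the role of `a_{i+1}` and `2i+1`
the role of `b_{i+1}`), and one `4g`-gon glued along `[a₁,b₁]⋯[a_g,b_g]`.

* `Gamma g` is the surface group, presented by the single relator.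
* A `Complex g` is a combinatorial 2-complex with directed, labeled edges and
  2-cells given by their boundary walks; coverings of `Σ_g` are the complexes in
  which every vertex has exactly one incoming/outgoing edge of each label, every
  walk reading the relator is closed, and every closed walk reading the relator
  bounds exactly one face (`IsCovering`).  A tiled surface is a complex that
  embeds into such a covering (`IsTiledSurface`).
* Blocks, chains, boundary cycles (via the ribbon structure coming from the fixed
  cyclic order of the `4g` half-edges around a vertex of `Σ_g`), boundary-reduced
  and strongly boundary-reduced surfaces are defined combinatorially.
* Homotopy of edge-walks is the edge-path-group homotopy: backtrack insertions and
  insertions of boundaries of (present) faces.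
* `cover g J` is the covering space `J\~Σ_g` of `Σ_g` associated to a subgroup
  `J ≤ Γ_g` (vertices = right cosets), and `coreSub g J` is the core surface of
  `J`, defined exactly as in the paper: the union of all shortest representative
  cycles of essential free-homotopy classes, together with all components of the
  complement containing finitely many `4g`-gons.
-/

noncomputable section

namespace CS

/-- Signed letters over the generators `a₁,b₁,…,a_g,b_g` of `Γ_g`
(`a_{i+1} ↦ 2i`, `b_{i+1} ↦ 2i+1`); `true` means a positive letter. -/
abbrev Letter (g : ℕ) := Fin (2 * g) × Bool

/-- The label of the `p`-th letter of the relator `[a₁,b₁][a₂,b₂]⋯[a_g,b_g]`. -/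
def relLabel (g : ℕ) (p : Fin (4 * g)) : Fin (2 * g) :=
  ⟨2 * ((p : ℕ) / 4) + ((p : ℕ) % 4) % 2, by have := p.2; omega⟩

/-- The sign of the `p`-th letter of the relator. -/
def relSign (g : ℕ) (p : Fin (4 * g)) : Bool := decide ((p : ℕ) % 4 < 2)

/-- The relator `[a₁,b₁][a₂,b₂]⋯[a_g,b_g]` as a word (list of signed letters). -/
def relatorWord (g : ℕ) : List (Letter g) :=
  (List.finRange (4 * g)).map fun p => (relLabel g p, relSign g p)

/-- The relator as an element of the free group on the `2g` generators. -/
def relatorF (g : ℕ) : FreeGroup (Fin (2 * g)) :=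
  ((relatorWord g).map fun l => if l.2 then FreeGroup.of l.1 else (FreeGroup.of l.1)⁻¹).prod

/-- The surface group `Γ_g = ⟨a₁,b₁,…,a_g,b_g ∣ [a₁,b₁]⋯[a_g,b_g]⟩`. -/
abbrev Gamma (g : ℕ) := PresentedGroup ({relatorF g} : Set (FreeGroup (Fin (2 * g))))

/-- The image of a signed letter in `Γ_g`. -/
def letterG {g : ℕ} (l : Letter g) : Gamma g :=
  if l.2 then PresentedGroup.of l.1 else (PresentedGroup.of l.1)⁻¹

/-- The image of a word in `Γ_g`. -/
def wordG {g : ℕ} (w : List (Letter g)) : Gamma g := (w.map letterG).prod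

/-- `ℓ(γ^{Γ_g})`: the minimal length of a word in the generators representing the
conjugacy class of `γ` in `Γ_g`. -/
def conjLen {g : ℕ} (γ : Gamma g) : ℕ :=
  sInf {n | ∃ w : List (Letter g), w.length = n ∧ ∃ x : Gamma g, x * wordG w * x⁻¹ = γ}

/-! ### Half-edge positions around a vertex of `Σ_g`

The `4g` half-edges around the vertex `o` of `Σ_g` come in the (clockwise) cyclic
order `a₁`-out, `b₁`-in, `a₁`-in, `b₁`-out, `a₂`-out, `b₂`-in, `a₂`-in, `b₂`-out, …
-/

/-- Position of the outgoing `ℓ`-labeled half-edge in the cyclic order. -/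
def posOut {g : ℕ} (ℓ : Fin (2 * g)) : ℕ :=
  if (ℓ : ℕ) % 2 = 0 then 2 * (ℓ : ℕ) else 2 * (ℓ : ℕ) + 1

/-- Position of the incoming `ℓ`-labeled half-edge in the cyclic order. -/
def posIn {g : ℕ} (ℓ : Fin (2 * g)) : ℕ :=
  if (ℓ : ℕ) % 2 = 0 then 2 * (ℓ : ℕ) + 2 else 2 * (ℓ : ℕ) - 1

/-- The position of the half-edge through which a traversal of a dart with signed
letter `s` *arrives* at its terminal vertex. -/
def posArr {g : ℕ} (s : Letter g) : ℕ := if s.2 then posIn s.1 else posOut s.1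

/-- The position of the half-edge through which a traversal of a dart with signed
letter `s` *leaves* its initial vertex. -/
def posLv {g : ℕ} (s : Letter g) : ℕ := if s.2 then posOut s.1 else posIn s.1

/-- The number of half-edges strictly between the arrival half-edge of `s` and the
departure half-edge of `t`, in the clockwise cyclic order of the `4g` half-edges
around a vertex. -/
def gapN {g : ℕ} (s t : Letter g) : ℕ := (posLv t + 4 * g - (posArr s + 1)) % (4 * g)

/-! ### Combinatorial complexes -/

/-- A combinatorial at-most-2-dimensional CW-complex with directed edges labeled by
the generators of `Γ_g`, and 2-cells recorded by their boundary walks (lists of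
darts, i.e. edges with a direction of traversal). -/
structure Complex (g : ℕ) where
  V : Type
  E : Type
  F : Type
  src : E → V
  dst : E → V
  lab : E → Fin (2 * g)
  bdry : F → List (E × Bool)

namespace Complex

variable {g : ℕ} (Y : Complex g)

/-- Darts: edges together with a direction of traversal (`true` = forward). -/
abbrev D := Y.E × Bool

/-- The initial vertex of a dart. -/
def dTail (d : Y.D) : Y.V := if d.2 then Y.src d.1 else Y.dst d.1

/-- The terminal vertex of a dart. -/
def dHead (d : Y.D) : Y.V := if d.2 then Y.dst d.1 else Y.src d.1

/-- The reversal of a dart. -/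
def dRev (d : Y.D) : Y.D := (d.1, !d.2)

/-- The signed letter read by a dart. -/
def dLet (d : Y.D) : Letter g := (Y.lab d.1, d.2)

/-- The word read along a list of darts. -/
def wordOf (l : List Y.D) : List (Letter g) := l.map Y.dLet

/-- The reversed walk. -/
def revW (l : List Y.D) : List Y.D := (l.map Y.dRev).reverse

/-- `WalkFrom u v l` : `l` is a walk (edge-path) from `u` to `v`. -/
inductive WalkFrom : Y.V → Y.V → List Y.D → Prop
  | nil (v : Y.V) : WalkFrom v v []
  | cons (d : Y.D) {v : Y.V} {l : List Y.D} :
      WalkFrom (Y.dHead d) v l → WalkFrom (Y.dTail d) v (d :: l)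

/-- All darts of `l` use edges from the set `sE`. -/
def InSet (sE : Set Y.E) (l : List Y.D) : Prop := ∀ d ∈ l, d.1 ∈ sE

/-- Two darts are adjacent (can be traversed consecutively). -/
def adj (d d' : Y.D) : Prop := Y.dHead d = Y.dTail d'

/-- A nonempty closed walk. -/
def IsCycle (c : List Y.D) : Prop := c ≠ [] ∧ ∃ v, Y.WalkFrom v v c

/-- **P1**: at most one incoming and at most one outgoing `ℓ`-labeled edge at every
vertex, for every label `ℓ`. -/
def P1 : Prop :=
  (∀ e e' : Y.E, Y.src e = Y.src e' → Y.lab e = Y.lab e' → e = e') ∧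
  (∀ e e' : Y.E, Y.dst e = Y.dst e' → Y.lab e = Y.lab e' → e = e')

/-- **P2**: every walk reading a word equal to `1` in `Γ_g` is closed. -/
def P2 : Prop :=
  ∀ (u v : Y.V) (l : List Y.D), Y.WalkFrom u v l → wordG (Y.wordOf l) = 1 → u = v

/-- **P3**: every 2-cell is glued along a closed walk reading the relator
`[a₁,b₁]⋯[a_g,b_g]`, and every such closed walk bounds at most one 2-cell. -/
def P3 : Prop :=
  (∀ f : Y.F, (∃ v, Y.WalkFrom v v (Y.bdry f)) ∧ Y.wordOf (Y.bdry f) = relatorWord g) ∧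
  Function.Injective Y.bdry

/-- A combinatorial covering space of `Σ_g`: every vertex has exactly one outgoing
and one incoming edge of each label, every walk reading the relator is closed, and
every closed walk reading the relator bounds exactly one `4g`-gon. -/
def IsCovering : Prop :=
  Y.P1 ∧ Y.P3 ∧
  (∀ (v : Y.V) (ℓ : Fin (2 * g)), ∃ e, Y.src e = v ∧ Y.lab e = ℓ) ∧
  (∀ (v : Y.V) (ℓ : Fin (2 * g)), ∃ e, Y.dst e = v ∧ Y.lab e = ℓ) ∧
  (∀ (u v : Y.V) (l : List Y.D), Y.WalkFrom u v l → Y.wordOf l = relatorWord g → u = v) ∧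
  (∀ (v : Y.V) (l : List Y.D), Y.WalkFrom v v l → Y.wordOf l = relatorWord g →
    ∃ f, Y.bdry f = l)

end Complex

/-- A morphism of labeled complexes: maps cells to cells of the same dimension and
respects sources, targets, labels and face boundaries (equivalently, commutes with
the immersions to `Σ_g`). -/
structure Hom {g : ℕ} (Y Z : Complex g) where
  mV : Y.V → Z.V
  mE : Y.E → Z.E
  mF : Y.F → Z.F
  hsrc : ∀ e, Z.src (mE e) = mV (Y.src e)
  hdst : ∀ e, Z.dst (mE e) = mV (Y.dst e)
  hlab : ∀ e, Z.lab (mE e) = Y.lab e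
  hbdry : ∀ f, Z.bdry (mF f) = (Y.bdry f).map fun d => (mE d.1, d.2)

namespace Hom

variable {g : ℕ} {Y Z : Complex g}

/-- The induced map on darts. -/
def mD (φ : Hom Y Z) (d : Y.D) : Z.D := (φ.mE d.1, d.2)

/-- Injectivity (an embedding of complexes). -/
def Inj (φ : Hom Y Z) : Prop :=
  Function.Injective φ.mV ∧ Function.Injective φ.mE ∧ Function.Injective φ.mF

end Hom

namespace Complex

variable {g : ℕ} (Y : Complex g)

/-- A tiled surface: a complex which embeds into a combinatorial covering space of
`Σ_g` (compatibly with directions and labels). -/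
def IsTiledSurface : Prop :=
  ∃ Z : Complex g, Z.IsCovering ∧ ∃ φ : Hom Y Z, φ.Inj

/-- Connectivity of a complex (any two vertices are joined by a walk). -/
def Connected : Prop := Nonempty Y.V ∧ ∀ v w : Y.V, ∃ l, Y.WalkFrom v w l

/-! ### Blocks and chains -/

/-- A block: a nonempty walk such that successive darts have no half-edges between
them (hence it reads a subword of the cyclic relator, of length at most `4g`). -/
def IsBlock (l : List Y.D) : Prop :=
  l ≠ [] ∧ l.length ≤ 4 * g ∧
  List.Chain' (fun d d' => Y.adj d d' ∧ gapN (Y.dLet d) (Y.dLet d') = 0) l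

/-- Two blocks are consecutive: concatenation is a walk and there is exactly one
half-edge between the last dart of the first and the first dart of the second. -/
def chainStep (b b' : List Y.D) : Prop :=
  ∃ d d', b.getLast? = some d ∧ b'.head? = some d' ∧ Y.adj d d' ∧
    gapN (Y.dLet d) (Y.dLet d') = 1

/-- A chain: a nonempty sequence of consecutive blocks. -/
def IsChain (bs : List (List Y.D)) : Prop :=
  bs ≠ [] ∧ (∀ b ∈ bs, Y.IsBlock b) ∧ List.Chain' Y.chainStep bs

/-- A cyclic chain: a chain whose blocks pave an entire cycle. -/
def IsCyclicChain (bs : List (List Y.D)) : Prop :=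
  Y.IsChain bs ∧ ∃ b b', bs.getLast? = some b ∧ bs.head? = some b' ∧ Y.chainStep b b'

/-- A long chain: a chain of consecutive blocks of lengths `2g, 2g−1, …, 2g−1, 2g`. -/
def IsLongChain (bs : List (List Y.D)) : Prop :=
  Y.IsChain bs ∧ ∃ k, bs.map List.length = 2 * g :: (List.replicate k (2 * g - 1) ++ [2 * g])

/-- A half-chain: a cyclic chain all of whose blocks have length `2g − 1`. -/
def IsHalfChain (bs : List (List Y.D)) : Prop :=
  Y.IsCyclicChain bs ∧ ∀ b ∈ bs, b.length = 2 * g - 1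

/-! ### Boundary cycles of the thick version (relative to sets of present edges and
faces), via the ribbon structure -/

/-- `nextD sE d d'`: among darts (with edge in `sE`) leaving the head of `d`, the
dart `d'` is the first one in clockwise order after the arrival half-edge of `d`.
This is the successor map whose orbits trace the boundary components of the thick
version of the ribbon graph. -/
def nextD (sE : Set Y.E) (d d' : Y.D) : Prop :=
  d'.1 ∈ sE ∧ Y.adj d d' ∧
  ∀ d'' : Y.D, d''.1 ∈ sE → Y.adj d d'' →
    gapN (Y.dLet d) (Y.dLet d') ≤ gapN (Y.dLet d) (Y.dLet d'')

/-- The corner between the consecutive darts `d, d'` is filled by a face from `sF`. -/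
def faceStep (sF : Set Y.F) (d d' : Y.D) : Prop :=
  ∃ f ∈ sF, [d, d'] <:+: (Y.bdry f ++ Y.bdry f)

/-- One step along the boundary of the thick version. -/
def bStep (sE : Set Y.E) (sF : Set Y.F) (d d' : Y.D) : Prop :=
  d.1 ∈ sE ∧ Y.nextD sE d d' ∧ ¬ Y.faceStep sF d d'

/-- A (finite segment of a) boundary cycle of the thick version. -/
def BPath (sE : Set Y.E) (sF : Set Y.F) (l : List Y.D) : Prop :=
  l ≠ [] ∧ Y.InSet sE l ∧ List.Chain' (Y.bStep sE sF) l

/-- A (finite) boundary cycle of the thick version. -/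
def BCycle (sE : Set Y.E) (sF : Set Y.F) (l : List Y.D) : Prop :=
  Y.BPath sE sF l ∧ ∃ d d', l.getLast? = some d ∧ l.head? = some d' ∧ Y.bStep sE sF d d'

/-- A dart lying on the boundary of the thick version. -/
def IsBDart (sE : Set Y.E) (sF : Set Y.F) (d : Y.D) : Prop :=
  d.1 ∈ sE ∧ ∃ d', Y.nextD sE d d' ∧ ¬ Y.faceStep sF d d'

/-- Boundary reduced: no boundary cycle contains a long block (length `≥ 2g+1`) or
a long chain. -/
def BoundaryReduced (sE : Set Y.E) (sF : Set Y.F) : Prop :=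
  (∀ l, Y.BPath sE sF l → ¬ (Y.IsBlock l ∧ 2 * g + 1 ≤ l.length)) ∧
  (∀ bs, Y.IsLongChain bs → ¬ Y.BPath sE sF bs.flatten)

/-- Strongly boundary reduced: no boundary cycle contains a half-block (length
exactly `2g`) or a half-chain. -/
def StronglyBoundaryReduced (sE : Set Y.E) (sF : Set Y.F) : Prop :=
  (∀ l, Y.BPath sE sF l → ¬ (Y.IsBlock l ∧ l.length = 2 * g)) ∧
  (∀ bs, Y.IsHalfChain bs → ¬ Y.BCycle sE sF bs.flatten)

/-! ### Combinatorial homotopy of walks -/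

/-- A closed walk traversing the boundary of a face from `sF` (in either direction,
starting anywhere). -/
def faceLoop (sF : Set Y.F) (b : List Y.D) : Prop :=
  ∃ f ∈ sF, ∃ n, b = (Y.bdry f).rotate n ∨ b = Y.revW ((Y.bdry f).rotate n)

/-- Elementary homotopy move: insertion of a backtrack or of a face boundary. -/
def elemMove (sE : Set Y.E) (sF : Set Y.F) (l l' : List Y.D) : Prop :=
  (∃ (l₁ l₂ : List Y.D) (d : Y.D), d.1 ∈ sE ∧ l = l₁ ++ l₂ ∧ l' = l₁ ++ d :: Y.dRev d :: l₂) ∨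
  (∃ l₁ l₂ b, Y.faceLoop sF b ∧ l = l₁ ++ l₂ ∧ l' = l₁ ++ b ++ l₂)

/-- Homotopy (rel endpoints) of walks from `u` to `v`, inside the subcomplex with
edge set `sE` and face set `sF`. -/
def Homotopic (sE : Set Y.E) (sF : Set Y.F) (u v : Y.V) (c c' : List Y.D) : Prop :=
  Relation.EqvGen
    (fun a b =>
      Y.WalkFrom u v a ∧ Y.WalkFrom u v b ∧ Y.InSet sE a ∧ Y.InSet sE b ∧
        (Y.elemMove sE sF a b ∨ Y.elemMove sE sF b a)) c c'

/-- A closed walk which is null-homotopic. -/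
def NullHomotopic (sE : Set Y.E) (sF : Set Y.F) (c : List Y.D) : Prop :=
  ∃ v, Y.WalkFrom v v c ∧ Y.Homotopic sE sF v v c []

/-- An essential cycle: a nonempty closed walk which is not null-homotopic. -/
def Essential (sE : Set Y.E) (sF : Set Y.F) (c : List Y.D) : Prop :=
  Y.IsCycle c ∧ Y.InSet sE c ∧ ¬ Y.NullHomotopic sE sF c

/-- Free homotopy of closed walks. -/
def FreelyHomotopic (sE : Set Y.E) (sF : Set Y.F) (c c' : List Y.D) : Prop :=
  ∃ u v q, Y.WalkFrom u u c ∧ Y.WalkFrom v v c' ∧ Y.WalkFrom u v q ∧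
    Y.InSet sE q ∧ Y.InSet sE c ∧ Y.InSet sE c' ∧
    Y.Homotopic sE sF u u c (q ++ c' ++ Y.revW q)

/-- `c` is a shortest representative of its free homotopy class. -/
def ShortestRep (sE : Set Y.E) (sF : Set Y.F) (c : List Y.D) : Prop :=
  ∀ c', Y.FreelyHomotopic sE sF c c' → c.length ≤ c'.length

end Complex

/-- `s` occurs as a contiguous subword of the cyclic word `c`. -/
def cycContains {α : Type*} (c s : List α) : Prop :=
  s ≠ [] ∧ s.length ≤ c.length ∧ s <:+: (c ++ c)

namespace Complex

variable {g : ℕ} (Y : Complex g)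

/-- The cycle `c` contains no long block and no long chain. -/
def NoLongBlockOrChainCyc (c : List Y.D) : Prop :=
  (∀ s, cycContains c s → ¬ (Y.IsBlock s ∧ 2 * g + 1 ≤ s.length)) ∧
  (∀ bs, Y.IsLongChain bs → ¬ cycContains c bs.flatten)

/-- A (cyclically) non-backtracking cycle. -/
def NonBacktrackingCyc (c : List Y.D) : Prop :=
  ¬ ∃ d : Y.D, cycContains c [d, Y.dRev d]

/-- A cycle which is essential and a shortest representative of its
free homotopy class. -/
def GoodCycle (c : List Y.D) : Prop :=
  Y.IsCycle c ∧ Y.Essential Set.univ Set.univ c ∧ Y.ShortestRep Set.univ Set.univ c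

/-! ### Cells and components of complements -/

/-- The cells of a complex. -/
def Cell := Y.V ⊕ Y.E ⊕ Y.F

def vCell (v : Y.V) : Y.Cell := Sum.inl v
def eCell (e : Y.E) : Y.Cell := Sum.inr (Sum.inl e)
def fCell (f : Y.F) : Y.Cell := Sum.inr (Sum.inr f)

/-- Basic incidence of (open) cells. -/
def inc0 : Y.Cell → Y.Cell → Prop := fun c c' =>
  match c, c' with
  | Sum.inl v, Sum.inr (Sum.inl e) => Y.src e = v ∨ Y.dst e = v
  | Sum.inl v, Sum.inr (Sum.inr f) => ∃ d ∈ Y.bdry f, Y.dTail d = v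
  | Sum.inr (Sum.inl e), Sum.inr (Sum.inr f) => ∃ b, (e, b) ∈ Y.bdry f
  | _, _ => False

/-- Symmetrized incidence of cells. -/
def incid (c c' : Y.Cell) : Prop := Y.inc0 c c' ∨ Y.inc0 c' c

end Complex

/-- A triple of subsets of the cells of a complex `Y` (a prospective subcomplex). -/
structure SubC {g : ℕ} (Y : Complex g) where
  sV : Set Y.V
  sE : Set Y.E
  sF : Set Y.F

namespace SubC

variable {g : ℕ} {Y : Complex g}

/-- `S` is an actual subcomplex: closed under taking boundaries of cells. -/
def IsSub (S : SubC Y) : Prop :=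
  (∀ e ∈ S.sE, Y.src e ∈ S.sV ∧ Y.dst e ∈ S.sV) ∧
  (∀ f ∈ S.sF, ∀ d ∈ Y.bdry f, d.1 ∈ S.sE)

/-- Containment of subcomplexes. -/
def le (S T : SubC Y) : Prop := S.sV ⊆ T.sV ∧ S.sE ⊆ T.sE ∧ S.sF ⊆ T.sF

/-- Compactness: finitely many cells. -/
def Compact (S : SubC Y) : Prop := S.sV.Finite ∧ S.sE.Finite ∧ S.sF.Finite

/-- Connectivity of the subcomplex. -/
def Connected (S : SubC Y) : Prop :=
  S.sV.Nonempty ∧ ∀ v ∈ S.sV, ∀ w ∈ S.sV, ∃ l, Y.WalkFrom v w l ∧ Y.InSet S.sE l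

/-- Image of a subcomplex under a morphism. -/
def image {Z : Complex g} (φ : Hom Y Z) (S : SubC Y) : SubC Z :=
  ⟨φ.mV '' S.sV, φ.mE '' S.sE, φ.mF '' S.sF⟩

end SubC

/-- The whole complex, as a subcomplex of itself. -/
def fullSub {g : ℕ} (Y : Complex g) : SubC Y := ⟨Set.univ, Set.univ, Set.univ⟩

namespace Complex

variable {g : ℕ} (Y : Complex g)

/-- Membership of a cell in a subcomplex. -/
def inSub (S : SubC Y) : Y.Cell → Prop := fun c =>
  match c with
  | Sum.inl v => v ∈ S.sV
  | Sum.inr (Sum.inl e) => e ∈ S.sE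
  | Sum.inr (Sum.inr f) => f ∈ S.sF

/-- Reachability of cells through the open complement of the subcomplex `S`
(= lying in the same connected component of the complement). -/
def reachS (S : SubC Y) (c c' : Y.Cell) : Prop :=
  Relation.ReflTransGen (fun a b => Y.incid a b ∧ ¬ Y.inSub S a ∧ ¬ Y.inSub S b) c c'

end Complex

/-- The closure (as a subcomplex) of the connected component of the cell `c₀` in the
complement of the subcomplex `S`. -/
def compCl {g : ℕ} (Y : Complex g) (S : SubC Y) (c₀ : Y.Cell) : SubC Y :=
  let cF : Set Y.F := {f | Y.reachS S c₀ (Y.fCell f)}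
  let cE : Set Y.E :=
    {e | Y.reachS S c₀ (Y.eCell e)} ∪ {e | ∃ f ∈ cF, ∃ b, (e, b) ∈ Y.bdry f}
  let cV : Set Y.V :=
    {v | Y.reachS S c₀ (Y.vCell v)} ∪ {v | ∃ e ∈ cE, Y.src e = v ∨ Y.dst e = v}
  ⟨cV, cE, cF⟩

/-- The subcomplex has exactly one boundary cycle (which covers all boundary darts). -/
def OneBdry {g : ℕ} (Y : Complex g) (S : SubC Y) : Prop :=
  ∃ δ, Y.BCycle S.sE S.sF δ ∧ ∀ d, Y.IsBDart S.sE S.sF d → d ∈ δ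

/-- The subcomplex has exactly two (disjoint) boundary cycles, covering all
boundary darts. -/
def TwoBdry {g : ℕ} (Y : Complex g) (S : SubC Y) : Prop :=
  ∃ δ₁ δ₂, Y.BCycle S.sE S.sF δ₁ ∧ Y.BCycle S.sE S.sF δ₂ ∧ δ₁.Disjoint δ₂ ∧
    ∀ d, Y.IsBDart S.sE S.sF d → d ∈ δ₁ ∨ d ∈ δ₂

/-- The boundary-reduced closure of `S` inside `Y`: the intersection of all
intermediate boundary reduced subcomplexes. -/
def BRcl {g : ℕ} (Y : Complex g) (S : SubC Y) : SubC Y where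
  sV := ⋂ T ∈ {T : SubC Y | T.IsSub ∧ S.le T ∧ Y.BoundaryReduced T.sE T.sF}, T.sV
  sE := ⋂ T ∈ {T : SubC Y | T.IsSub ∧ S.le T ∧ Y.BoundaryReduced T.sE T.sF}, T.sE
  sF := ⋂ T ∈ {T : SubC Y | T.IsSub ∧ S.le T ∧ Y.BoundaryReduced T.sE T.sF}, T.sF

/-- The strongly-boundary-reduced closure of `S` inside `Y`. -/
def SBRcl {g : ℕ} (Y : Complex g) (S : SubC Y) : SubC Y where
  sV := ⋂ T ∈ {T : SubC Y | T.IsSub ∧ S.le T ∧ Y.StronglyBoundaryReduced T.sE T.sF}, T.sV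
  sE := ⋂ T ∈ {T : SubC Y | T.IsSub ∧ S.le T ∧ Y.StronglyBoundaryReduced T.sE T.sF}, T.sE
  sF := ⋂ T ∈ {T : SubC Y | T.IsSub ∧ S.le T ∧ Y.StronglyBoundaryReduced T.sE T.sF}, T.sF

/-- An isomorphism between the subcomplex `S` of `Y` and the subcomplex `T` of `Z`. -/
structure SubEquiv {g : ℕ} (Y : Complex g) (S : SubC Y) (Z : Complex g) (T : SubC Z) where
  fV : Y.V → Z.V
  fE : Y.E → Z.E
  fF : Y.F → Z.F
  bijV : Set.BijOn fV S.sV T.sV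
  bijE : Set.BijOn fE S.sE T.sE
  bijF : Set.BijOn fF S.sF T.sF
  hsrc : ∀ e ∈ S.sE, Z.src (fE e) = fV (Y.src e)
  hdst : ∀ e ∈ S.sE, Z.dst (fE e) = fV (Y.dst e)
  hlab : ∀ e ∈ S.sE, Z.lab (fE e) = Y.lab e
  hbdry : ∀ f ∈ S.sF, Z.bdry (fF f) = (Y.bdry f).map fun d => (fE d.1, d.2)

/-- `FunnelComponent Y S c₀`: the connected component of the cell `c₀` in the
complement of the subcomplex `S` is a twice-punctured sphere with one funnel and
one fake-puncture.  Rendered combinatorially: the component contains infinitely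
many `4g`-gons (the funnel); there is a boundary cycle `δ` of `S` adjacent to the
component, it is unique (one fake-puncture), and every closed walk inside the
closure of the component is freely homotopic there to a power of `δ` or of its
inverse (so the closure is a half-open annulus bounded by `δ`). -/
def FunnelComponent {g : ℕ} (Y : Complex g) (S : SubC Y) (c₀ : Y.Cell) : Prop :=
  {f : Y.F | Y.reachS S c₀ (Y.fCell f)}.Infinite ∧
  ∃ δ : List Y.D, Y.BCycle S.sE S.sF δ ∧
    (∃ d ∈ δ, ∃ c', Y.incid (Y.eCell d.1) c' ∧ Y.reachS S c₀ c') ∧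
    (∀ δ', Y.BCycle S.sE S.sF δ' →
      (∃ d ∈ δ', ∃ c', Y.incid (Y.eCell d.1) c' ∧ Y.reachS S c₀ c') →
      ∃ n, δ' = δ.rotate n) ∧
    (∀ (v : Y.V) (l : List Y.D), Y.WalkFrom v v l →
      Y.InSet ({e | Y.reachS S c₀ (Y.eCell e)} ∪ {e | ∃ b, (e, b) ∈ δ}) l →
      ∃ n,
        Y.FreelyHomotopic ({e | Y.reachS S c₀ (Y.eCell e)} ∪ {e | ∃ b, (e, b) ∈ δ})
          {f | Y.reachS S c₀ (Y.fCell f)} l ((List.replicate n δ).flatten) ∨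
        Y.FreelyHomotopic ({e | Y.reachS S c₀ (Y.eCell e)} ∪ {e | ∃ b, (e, b) ∈ δ})
          {f | Y.reachS S c₀ (Y.fCell f)} l ((List.replicate n (Y.revW δ)).flatten))

/-- `Y` contains a funnel: an essential cycle `δ` of `Y` cutting off an infinite
region of `Y` which is attached to the rest of `Y` only along `δ`, contains no
boundary of `Y`, and is a half-open annulus (every loop inside is freely homotopic
to a power of `δ`); i.e. an end of `Y` which is a puncture of the ambient covering. -/
def HasFunnel {g : ℕ} (Y : Complex g) : Prop :=
  ∃ (δ : List Y.D) (sE : Set Y.E) (sF : Set Y.F),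
    Y.IsCycle δ ∧ Y.Essential Set.univ Set.univ δ ∧
    (∀ d ∈ δ, d.1 ∉ sE) ∧ sE.Nonempty ∧ sF.Infinite ∧
    (∀ f ∈ sF, ∀ d ∈ Y.bdry f, d.1 ∈ sE ∨ ∃ b, (d.1, b) ∈ δ) ∧
    (∀ f : Y.F, (∃ d ∈ Y.bdry f, d.1 ∈ sE) → f ∈ sF) ∧
    (∀ d : Y.D, d.1 ∈ sE → ¬ Y.IsBDart Set.univ Set.univ d) ∧
    (∀ v : Y.V, (∃ e ∈ sE, Y.src e = v ∨ Y.dst e = v) → (∀ d ∈ δ, Y.dTail d ≠ v) →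
      ∀ e' : Y.E, (Y.src e' = v ∨ Y.dst e' = v) → e' ∈ sE) ∧
    (∀ (v : Y.V) (l : List Y.D), Y.WalkFrom v v l →
      Y.InSet (sE ∪ {e | ∃ b, (e, b) ∈ δ}) l →
      ∃ n,
        Y.FreelyHomotopic (sE ∪ {e | ∃ b, (e, b) ∈ δ}) sF l
          ((List.replicate n δ).flatten) ∨
        Y.FreelyHomotopic (sE ∪ {e | ∃ b, (e, b) ∈ δ}) sF l
          ((List.replicate n (Y.revW δ)).flatten))

/-- The fundamental group of `Y` is cyclic: some closed walk `c` generates all free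
homotopy classes of loops.  (For a connected surface this is *equivalent to NOT
having genus ≥ 1 or at least 3 boundary components/punctures*.) -/
def CyclicPi1 {g : ℕ} (Y : Complex g) : Prop :=
  ∃ c : List Y.D, ∀ (v : Y.V) (l : List Y.D), Y.WalkFrom v v l →
    ∃ n,
      Y.FreelyHomotopic Set.univ Set.univ l ((List.replicate n c).flatten) ∨
      Y.FreelyHomotopic Set.univ Set.univ l ((List.replicate n (Y.revW c)).flatten)

/-! ### The covering space `J\~Σ_g` and the core surface of `J` -/

/-- Right cosets `Jx` of `J` in `Γ_g` — the vertices (and faces) of `J\~Σ_g`. -/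
abbrev Cos (g : ℕ) (J : Subgroup (Gamma g)) := Quotient (QuotientGroup.rightRel J)

/-- The coset `Jx`. -/
def mkCos (g : ℕ) (J : Subgroup (Gamma g)) (x : Gamma g) : Cos g J :=
  Quotient.mk _ x

/-- Right multiplication on right cosets. -/
def rmul (g : ℕ) (J : Subgroup (Gamma g)) (x : Gamma g) : Cos g J → Cos g J :=
  Quotient.map (· * x) (by
    intro a b hab
    have h1 : b * a⁻¹ ∈ J := QuotientGroup.rightRel_apply.mp hab
    refine QuotientGroup.rightRel_apply.mpr ?_
    have h2 : b * x * (a * x)⁻¹ = b * a⁻¹ := by group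
    rw [h2]; exact h1)

/-- The walk in `J\~Σ_g` starting at a vertex and reading a given word. -/
def relWalk (g : ℕ) (J : Subgroup (Gamma g)) :
    Cos g J → List (Letter g) → List ((Cos g J × Fin (2 * g)) × Bool)
  | _, [] => []
  | v, (ℓ, true) :: w =>
      ((v, ℓ), true) :: relWalk g J (rmul g J (PresentedGroup.of ℓ) v) w
  | v, (ℓ, false) :: w =>
      ((rmul g J (PresentedGroup.of ℓ)⁻¹ v, ℓ), false) ::
        relWalk g J (rmul g J (PresentedGroup.of ℓ)⁻¹ v) w

/-- The covering space `Υ = J\~Σ_g` of `Σ_g` corresponding to the subgroup `J`,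
with the CW-structure pulled back from `Σ_g`: vertices and `4g`-gons are the right
cosets of `J`, and each vertex carries one outgoing edge per label. -/
def cover (g : ℕ) (J : Subgroup (Gamma g)) : Complex g where
  V := Cos g J
  E := Cos g J × Fin (2 * g)
  F := Cos g J
  src e := e.1
  dst e := rmul g J (PresentedGroup.of e.2) e.1
  lab e := e.2
  bdry v := relWalk g J v (relatorWord g)

/-- The map `J₁\~Σ_g → J₂\~Σ_g` on vertices, for `J₁ ≤ J₂`. -/
def coverMapV {g : ℕ} {J₁ J₂ : Subgroup (Gamma g)} (h : J₁ ≤ J₂) :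
    Cos g J₁ → Cos g J₂ :=
  Quotient.map id (by
    intro a b hab
    have h1 : b * a⁻¹ ∈ J₁ := QuotientGroup.rightRel_apply.mp hab
    exact QuotientGroup.rightRel_apply.mpr (h h1))

/-- The natural covering morphism on edges. -/
def coverMapE {g : ℕ} {J₁ J₂ : Subgroup (Gamma g)} (h : J₁ ≤ J₂)
    (e : (cover g J₁).E) : (cover g J₂).E :=
  (coverMapV h e.1, e.2)

/-- The natural covering morphism on darts. -/
def coverMapD {g : ℕ} {J₁ J₂ : Subgroup (Gamma g)} (h : J₁ ≤ J₂)
    (d : (cover g J₁).D) : (cover g J₂).D :=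
  (coverMapE h d.1, d.2)

/-- The cycle `c` in `J\~Σ_g` represents the conjugacy class of `γ` in `J`
(conjugacy classes in `J` ↔ free homotopy classes of essential loops in `J\~Σ_g`). -/
def RepCls {g : ℕ} (J : Subgroup (Gamma g)) (c : List ((cover g J).D))
    (γ : Gamma g) : Prop :=
  ∃ x j : Gamma g, j ∈ J ∧
    (cover g J).WalkFrom (mkCos g J x) (mkCos g J x) c ∧
    x * wordG ((cover g J).wordOf c) * x⁻¹ = j * γ * j⁻¹

/-- Step (i) of the definition of the core surface: the edges lying on some
shortest representative cycle of an essential free homotopy class. -/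
def coreE1 (g : ℕ) (J : Subgroup (Gamma g)) : Set (cover g J).E :=
  {e | ∃ c, (cover g J).GoodCycle c ∧ ∃ b, (e, b) ∈ c}

/-- The vertices of step (i) of the definition of the core surface. -/
def coreV1 (g : ℕ) (J : Subgroup (Gamma g)) : Set (cover g J).V :=
  {v | ∃ e ∈ coreE1 g J, (cover g J).src e = v ∨ (cover g J).dst e = v}

/-- Step (i) of the definition of the core surface, as a subcomplex of `J\~Σ_g`. -/
def coreS1 (g : ℕ) (J : Subgroup (Gamma g)) : SubC (cover g J) :=
  ⟨coreV1 g J, coreE1 g J, ∅⟩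

/-- A cell of `J\~Σ_g` lying in a connected component of the complement of step (i)
which contains only finitely many `4g`-gons. -/
def coreFin (g : ℕ) (J : Subgroup (Gamma g)) (c : (cover g J).Cell) : Prop :=
  ¬ (cover g J).inSub (coreS1 g J) c ∧
  {f : (cover g J).F | (cover g J).reachS (coreS1 g J) c ((cover g J).fCell f)}.Finite

open Classical in
/-- The core surface `Core(J)` of a subgroup `J ≤ Γ_g`, as a subcomplex of
`Υ = J\~Σ_g`: (i) the union of all shortest representative cycles of essential
free homotopy classes in `Υ`, together with (ii) all connected components of the
complement containing finitely many `4g`-gons.  For the trivial subgroup it is a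
single vertex. -/
def coreSub (g : ℕ) (J : Subgroup (Gamma g)) : SubC (cover g J) :=
  if J = ⊥ then ⟨{mkCos g J 1}, ∅, ∅⟩
  else
    ⟨coreV1 g J ∪ {v | coreFin g J ((cover g J).vCell v)},
     coreE1 g J ∪ {e | coreFin g J ((cover g J).eCell e)},
     {f | coreFin g J ((cover g J).fCell f)}⟩

end CS

section
set_option linter.all false
namespace CoxH
open CoxeterSystem List

variable {B W : Type*} [Group W] {M : CoxeterMatrix B} (cs : CoxeterSystem M W)

def alt {B : Type*} : B → B → ℕ → List B
  | _, _, 0 => []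
  | i, j, n+1 => i :: alt j i n

theorem alt_len {B : Type*} (n : ℕ) : ∀ i j : B, (alt i j n).length = n := by
  induction n with
  | zero => intro i j; rfl
  | succ n ih => intro i j; simp [alt, ih]

theorem alt_add2 {B : Type*} (m : ℕ) (i j : B) : alt i j (2*m+2) = alt i j (2*m) ++ [i,j] := by
  induction m with
  | zero => rfl
  | succ m ih =>
    have h1 : alt i j (2*(m+1)+2) = i :: j :: alt i j (2*m+2) := rfl
    have h2 : alt i j (2*(m+1)) = i :: j :: alt i j (2*m) := rfl
    rw [h1, h2, ih]; rfl

theorem alt_rev {B : Type*} (m : ℕ) (i j : B) : (alt i j (2*m)).reverse = alt j i (2*m) := by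
  induction m with
  | zero => rfl
  | succ m ih =>
    have h1 : alt i j (2*(m+1)) = i :: j :: alt i j (2*m) := rfl
    have h2 : alt j i (2*(m+1)) = alt j i (2*m) ++ [j,i] := alt_add2 m j i
    rw [h1, h2, reverse_cons, reverse_cons, ih]; simp

theorem lis_alt (n : ℕ) : ∀ i j : B, cs.leftInvSeq (alt i j n) =
    (List.range n).map (fun k => (cs.simple i * cs.simple j)^k * cs.simple i) := by
  induction n with
  | zero => intro i j; rfl
  | succ n ih =>
    intro i j
    rw [alt, leftInvSeq, ih, List.range_succ_eq_map]
    simp only [map_cons, map_map, pow_zero, one_mul]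
    congr 1
    apply List.map_congr_left
    intro k _
    simp only [Function.comp, MulAut.conj_apply, inv_simple]
    have : ∀ k : ℕ, cs.simple i * (cs.simple j * cs.simple i)^k = (cs.simple i * cs.simple j)^k * cs.simple i := by
      intro k
      induction k with
      | zero => simp
      | succ k ih => rw [pow_succ, ← mul_assoc, ih, pow_succ]; simp only [mul_assoc]
    rw [← mul_assoc, this, pow_succ]; simp only [mul_assoc]

open Classical in
noncomputable def fP (i : B) : Equiv.Perm (W × ZMod 2) where
  toFun x := (cs.simple i * x.1 * cs.simple i, x.2 + if x.1 = cs.simple i then 1 else 0)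
  invFun x := (cs.simple i * x.1 * cs.simple i, x.2 + if x.1 = cs.simple i then 1 else 0)
  left_inv := by
    rintro ⟨t, e⟩
    have h : (cs.simple i * t * cs.simple i = cs.simple i) ↔ t = cs.simple i := by
      constructor
      · intro h
        have := congrArg (fun z => cs.simple i * z * cs.simple i) h
        simpa [mul_assoc] using this
      · rintro rfl; simp
    ext
    · simp [mul_assoc]
    · simp only [h]
      split_ifs
      · rw [add_assoc]; simp; decide
      · simp
  right_inv := by
    rintro ⟨t, e⟩
    have h : (cs.simple i * t * cs.simple i = cs.simple i) ↔ t = cs.simple i := by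
      constructor
      · intro h
        have := congrArg (fun z => cs.simple i * z * cs.simple i) h
        simpa [mul_assoc] using this
      · rintro rfl; simp
    ext
    · simp [mul_assoc]
    · simp only [h]
      split_ifs
      · rw [add_assoc]; simp; decide
      · simp

open Classical in
theorem fP_word (ω : List B) (t : W) (e : ZMod 2) : ((ω.map (fP cs)).prod) (t, e) =
    (cs.wordProd ω * t * (cs.wordProd ω)⁻¹, e + (cs.rightInvSeq ω).count t) := by
  induction ω with
  | nil => simp
  | cons i ω ih =>
    rw [map_cons, prod_cons, Equiv.Perm.mul_apply, ih]
    simp only [fP, Equiv.coe_fn_mk, rightInvSeq, wordProd_cons, List.count_cons]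
    have : (cs.wordProd ω * t * (cs.wordProd ω)⁻¹ = cs.simple i) ↔
      (((cs.wordProd ω)⁻¹ * cs.simple i * cs.wordProd ω == t) = true) := by
      rw [beq_iff_eq]
      constructor
      · intro h; rw [← h]; group
      · rintro rfl; group
    ext
    · simp [mul_assoc]
    · simp only [this]
      split_ifs <;> push_cast <;> ring

theorem fP_liftable : M.IsLiftable (fP cs) := by
  classical
  intro i j
  have h1 : ∀ m : ℕ, (fP cs i * fP cs j)^m = ((alt i j (2*m)).map (fP cs)).prod := by
    intro m
    induction m with
    | zero => simp [alt]
    | succ m ih =>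
      rw [pow_succ, ih, show 2*(m+1) = 2*m+2 by ring, alt_add2]
      simp [mul_assoc]
  have h1' : ∀ m : ℕ, (cs.simple i * cs.simple j)^m = cs.wordProd (alt i j (2*m)) := by
    intro m
    induction m with
    | zero => simp [alt]
    | succ m ih =>
      rw [pow_succ, ih, show 2*(m+1) = 2*m+2 by ring, alt_add2]
      simp [mul_assoc, wordProd_append, wordProd_cons]
  rw [h1]
  apply Equiv.ext
  rintro ⟨t, e⟩
  rw [fP_word, ← h1', cs.simple_mul_simple_pow]
  have h2 : cs.rightInvSeq (alt i j (2 * M i j)) = (cs.leftInvSeq (alt j i (2 * M i j))).reverse := by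
    rw [← alt_rev, cs.rightInvSeq_reverse]
  rw [h2, List.count_reverse, lis_alt, two_mul, List.range_add, List.map_append, List.count_append,
    List.map_map]
  have h3 : (List.range (M i j)).map ((fun k => (cs.simple j * cs.simple i)^k * cs.simple j) ∘ fun x => M i j + x)
     = (List.range (M i j)).map (fun k => (cs.simple j * cs.simple i)^k * cs.simple j) := by
    apply List.map_congr_left
    intro k _
    simp [pow_add]
  rw [h3]
  push_cast
  rw [CharTwo.add_self_eq_zero]
  simp

open Classical in
theorem count_ris {ω ω' : List B} (h : cs.wordProd ω = cs.wordProd ω') (t : W) :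
    ((cs.rightInvSeq ω).count t : ZMod 2) = (cs.rightInvSeq ω').count t := by
  have key : ∀ ω : List B, cs.lift ⟨fP cs, fP_liftable cs⟩ (cs.wordProd ω) = (ω.map (fP cs)).prod := by
    intro ω
    induction ω with
    | nil => simp
    | cons i ω ih => rw [wordProd_cons, map_mul, ih, lift_apply_simple]; simp
  have h1 := key ω
  rw [h, key ω'] at h1
  have h2 := congrArg (fun f => (f (t, (0: ZMod 2))).2) h1
  simp only [fP_word, zero_add] at h2
  exact h2.symm

open Classical in
theorem count_lis {ω ω' : List B} (h : cs.wordProd ω = cs.wordProd ω') (t : W) :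
    ((cs.leftInvSeq ω).count t : ZMod 2) = (cs.leftInvSeq ω').count t := by
  have := count_ris cs (ω := ω.reverse) (ω' := ω'.reverse) (by simp [h]) t
  rwa [cs.rightInvSeq_reverse, cs.rightInvSeq_reverse, List.count_reverse, List.count_reverse] at this

theorem mem_of_nodup {ω ω' : List B} (h : cs.wordProd ω = cs.wordProd ω') (hn : (cs.leftInvSeq ω).Nodup)
    {t : W} (ht : t ∈ cs.leftInvSeq ω) : t ∈ cs.leftInvSeq ω' := by
  classical
  have := count_lis cs h t
  rw [List.count_eq_one_of_mem hn ht] at this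
  by_contra hc
  rw [List.count_eq_zero_of_not_mem hc] at this
  simp at this

theorem reduced_of_nodup {ω : List B} (hn : (cs.leftInvSeq ω).Nodup) : cs.IsReduced ω := by
  obtain ⟨ω', hr, h⟩ := cs.exists_isReduced (cs.wordProd ω)
  have h1 : (cs.leftInvSeq ω) ⊆ cs.leftInvSeq ω' := fun t ht => mem_of_nodup cs h hn ht
  have h2 := (hn.subperm h1).length_le
  simp at h2
  have h3 := cs.length_wordProd_le ω
  have h4 : cs.length (cs.wordProd ω') = ω'.length := hr
  rw [← h] at h4
  unfold CoxeterSystem.IsReduced; omega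

/-- exchange -/
theorem exchange {ω : List B} (hr : cs.IsReduced ω) {i : B} (hi : cs.IsLeftDescent (cs.wordProd ω) i) :
    ∃ k, k < ω.length ∧ cs.simple i * cs.wordProd ω = cs.wordProd (ω.eraseIdx k) := by
  obtain ⟨ω', hr', h⟩ := cs.exists_isReduced (cs.simple i * cs.wordProd ω)
  have hw : cs.wordProd (i :: ω') = cs.wordProd ω := by
    rw [wordProd_cons, ← h]; simp
  have hlen : cs.IsReduced (i :: ω') := by
    have h1 := cs.isLeftDescent_iff.1 hi
    have h4 : cs.length (cs.wordProd ω') = ω'.length := hr'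
    unfold CoxeterSystem.IsReduced; rw [hw, ← h1, h, h4]; simp
  have hm : cs.simple i ∈ cs.leftInvSeq ω :=
    mem_of_nodup cs hw hlen.nodup_leftInvSeq (by simp [leftInvSeq])
  obtain ⟨k, hk, hk'⟩ := List.getElem_of_mem hm
  have hk2 : k < ω.length := by simpa using hk
  refine ⟨k, hk2, ?_⟩
  rw [← cs.getD_leftInvSeq_mul_wordProd ω k, List.getD_eq_getElem _ _ hk, hk']

variable (hord : ∀ i j, i ≠ j → orderOf (cs.simple i * cs.simple j) = M i j)
include hord

theorem alt_reduced {i j : B} (hij : i ≠ j) (n : ℕ) (hn : M i j = 0 ∨ n ≤ M i j) :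
    cs.IsReduced (alt i j n) := by
  apply reduced_of_nodup
  rw [lis_alt]
  apply List.Nodup.map_on _ List.nodup_range
  intro a ha b hb hab
  rw [mul_left_inj] at hab
  simp only [List.mem_range] at ha hb
  have ho := hord i j hij
  rcases hn with hn | hn
  · have : ¬ IsOfFinOrder (cs.simple i * cs.simple j) := by
      rw [← orderOf_eq_zero_iff, ho, hn]
    exact (injective_pow_iff_not_isOfFinOrder.2 this) hab
  · exact pow_injOn_Iio_orderOf (by simp [ho]; omega) (by simp [ho]; omega) hab

theorem two_desc_aux {u : W} {i j : B} (hij : i ≠ j) (hi : cs.IsLeftDescent u i)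
    (hj : cs.IsLeftDescent u j) (k : ℕ) (hk : M i j = 0 ∨ k ≤ M i j) :
    (∃ ω, cs.IsReduced (alt i j k ++ ω) ∧ u = cs.wordProd (alt i j k ++ ω)) ∧
    (∃ ω, cs.IsReduced (alt j i k ++ ω) ∧ u = cs.wordProd (alt j i k ++ ω)) := by
  induction k with
  | zero =>
    obtain ⟨ω, h⟩ := cs.exists_isReduced u
    exact ⟨⟨ω, h⟩, ⟨ω, h⟩⟩
  | succ k ih =>
    have aux : ∀ i j : B, i ≠ j → cs.IsLeftDescent u i → (M i j = 0 ∨ k + 1 ≤ M i j) →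
      (∃ ω, cs.IsReduced (alt j i k ++ ω) ∧ u = cs.wordProd (alt j i k ++ ω)) →
      (∃ ω, cs.IsReduced (alt i j (k+1) ++ ω) ∧ u = cs.wordProd (alt i j (k+1) ++ ω)) := by
      intro i j hij hi hk ⟨ω, hr, hu⟩
      have hi' := hi
      rw [hu] at hi'
      obtain ⟨n, hn, he⟩ := exchange cs hr hi'
      rw [List.length_append, alt_len] at hn
      by_cases hnk : n < k
      · exfalso
        rw [List.eraseIdx_append_of_lt_length (by rw [alt_len]; exact hnk), wordProd_append,
          wordProd_append, ← mul_assoc, mul_left_inj, ← wordProd_cons] at he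
        have h1 : cs.IsReduced (alt i j (k+1)) := alt_reduced cs hord hij _ hk
        have h2 : cs.length (cs.wordProd (alt i j (k+1))) = k + 1 := by rw [h1.eq, alt_len]
        rw [alt, he] at h2
        have h3 := cs.length_wordProd_le ((alt j i k).eraseIdx n)
        have h4 := List.length_eraseIdx_le (l := alt j i k) (i := n)
        rw [alt_len] at h4
        omega
      · rw [List.eraseIdx_append_of_length_le (by rw [alt_len]; omega), alt_len] at he
        have hw : u = cs.wordProd (alt i j (k+1) ++ ω.eraseIdx (n-k)) := by
          rw [alt, List.cons_append, wordProd_cons, ← he, hu]; simp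
        refine ⟨ω.eraseIdx (n-k), ?_, hw⟩
        unfold CoxeterSystem.IsReduced
        rw [← hw, hu, hr.eq]
        simp only [List.length_append, alt_len]
        rw [List.length_eraseIdx_of_lt (by omega)]
        omega
    have ih' := ih (by omega)
    have hs : M i j = M j i := M.symmetric i j
    exact ⟨aux i j hij hi hk ih'.2, aux j i hij.symm hj (hs ▸ hk) ih'.1⟩

theorem two_desc {u : W} {i j : B} (hij : i ≠ j) (hi : cs.IsLeftDescent u i)
    (hj : cs.IsLeftDescent u j) : M i j ≠ 0 ∧
    (∃ ω, cs.IsReduced (alt i j (M i j) ++ ω) ∧ u = cs.wordProd (alt i j (M i j) ++ ω)) := by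
  have h0 : M i j ≠ 0 := by
    intro h0
    obtain ⟨⟨ω, hr, hu⟩, -⟩ := two_desc_aux cs hord hij hi hj (cs.length u + 1) (Or.inl h0)
    have := hr.eq
    rw [← hu, List.length_append, alt_len] at this
    omega
  exact ⟨h0, (two_desc_aux cs hord hij hi hj (M i j) (Or.inr le_rfl)).1⟩

end CoxH

end

section
set_option linter.all false
namespace SG
open List

abbrev A (g : ℕ) := ZMod (4*g)

instance instNZ {g : ℕ} [hg : Fact (2 ≤ g)] : NeZero (4*g) := ⟨by have := hg.out; omega⟩
instance instNZ2 {g : ℕ} [hg : Fact (2 ≤ g)] : NeZero (2*g) := ⟨by have := hg.out; omega⟩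

def sN (n : ℕ) : ℕ := if n % 4 < 2 then n + 2 else n - 2

def sg {g : ℕ} (p : A g) : A g := ((sN p.val : ℕ) : A g)

def rp (k : ℕ) : ℕ := 4 * (k/4) + (4 - k % 4) % 4

theorem rp_rp (k : ℕ) : rp (rp k) = k := by unfold rp; omega
theorem rp_add (g k : ℕ) : rp (k + 4*g) = rp k + 4*g := by unfold rp; omega
theorem rp_succ (k : ℕ) : rp (k+1) = sN (rp k) + 1 := by unfold rp sN; split_ifs <;> omega
theorem sN_sN (k : ℕ) : sN (sN k) = k := by unfold sN; split_ifs <;> omega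

variable {g : ℕ} [hg : Fact (2 ≤ g)]

theorem sg_cast (n : ℕ) : sg (n : A g) = (sN n : ℕ) := by
  unfold sg
  rw [ZMod.val_natCast]
  have h : n = n % (4*g) + 4 * (g * (n / (4*g))) := by
    have := Nat.mod_add_div n (4*g)
    rw [mul_assoc] at this; exact this.symm
  set m := n % (4*g)
  set q := g * (n/(4*g))
  have h2 : sN n = sN m + 4 * q := by unfold sN; split_ifs <;> omega
  have h3 : ((4 * q : ℕ) : A g) = 0 := by
    rw [ZMod.natCast_eq_zero_iff]; simp only [q]; rw [← mul_assoc]; exact dvd_mul_right _ _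
  rw [h2, Nat.cast_add, h3, add_zero]

theorem exN (p : A g) : ∃ n : ℕ, p = n := ⟨p.val, by simp⟩

theorem exRp (p : A g) : ∃ k : ℕ, p = (rp k : ℕ) := by
  obtain ⟨n, rfl⟩ := exN p
  exact ⟨rp n, by rw [rp_rp]⟩

@[simp] theorem sg_sg (p : A g) : sg (sg p) = p := by
  obtain ⟨n, rfl⟩ := exN p
  rw [sg_cast, sg_cast, sN_sN]

theorem sg_inj {p q : A g} (h : sg p = sg q) : p = q := by
  rw [← sg_sg p, h, sg_sg]

theorem sg_eq (p : A g) : sg p = p + 2 ∨ sg p = p - 2 := by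
  obtain ⟨n, rfl⟩ := exN p
  rw [sg_cast]
  unfold sN
  split_ifs
  · left; push_cast; ring
  · right; rw [Nat.cast_sub (by omega)]; push_cast; ring

/-- small integers are nonzero -/
theorem small_ne {z : ℤ} (h0 : z ≠ 0) (h1 : -8 < z) (h2 : z < 8) : (z : A g) ≠ 0 := by
  intro h
  rw [ZMod.intCast_zmod_eq_zero_iff_dvd] at h
  have := hg.out
  have h3 := Int.le_of_dvd (a := ((4*g : ℕ):ℤ)) (b := |z|) (abs_pos.2 h0) ((dvd_abs _ _).2 h)
  have : |z| < 8 := abs_lt.2 ⟨h1, h2⟩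
  push_cast at h3
  omega

theorem sg_ne (p : A g) : sg p ≠ p := by
  have h2 := small_ne (g := g) (z := 2) (by norm_num) (by norm_num) (by norm_num)
  push_cast at h2
  rcases sg_eq p with h | h <;> rw [h] <;> intro h'
  · exact h2 (by linear_combination h')
  · exact h2 (by linear_combination -h')

/-- next letter; η is a sign -/
def nx (η : ℤˣ) (p : A g) : A g := sg p + ((η : ℤ) : A g)

def blk (η : ℤˣ) (p : A g) : ℕ → List (A g)
  | 0 => []
  | k+1 => p :: blk η (nx η p) k

@[simp] theorem blk_len (η : ℤˣ) (k : ℕ) : ∀ p : A g, (blk η p k).length = k := by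
  induction k with
  | zero => intro p; rfl
  | succ k ih => intro p; simp [blk, ih]

theorem blk_add (η : ℤˣ) (a b : ℕ) : ∀ p : A g, blk η p (a+b) = blk η p a ++ blk η ((nx η)^[a] p) b := by
  induction a with
  | zero => intro p; simp [blk]
  | succ a ih =>
    intro p
    rw [show a + 1 + b = (a+b)+1 by ring]
    simp [blk, ih]

theorem blk_map (η : ℤˣ) (k : ℕ) : ∀ p : A g, blk η p k = (List.range k).map (fun t => (nx η)^[t] p) := by
  induction k with
  | zero => intro p; rfl
  | succ k ih =>
    intro p; rw [blk, ih, List.range_succ_eq_map, map_cons, map_map]; rfl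

theorem nx_rp (k : ℕ) : nx 1 ((rp k : ℕ) : A g) = (rp (k+1) : ℕ) := by
  rw [nx, sg_cast, rp_succ]; push_cast; ring

theorem nx_rp_iter (t k : ℕ) : (nx 1)^[t] ((rp k : ℕ) : A g) = (rp (k+t) : ℕ) := by
  induction t with
  | zero => simp
  | succ t ih => rw [Function.iterate_succ', Function.comp, ih, nx_rp]; rfl

theorem rp_mod {a b : ℕ} (h : ((rp a : ℕ) : A g) = (rp b : ℕ)) : (a : A g) = b := by
  have key : ∀ k : ℕ, ∀ q, rp (k + (4*g)*q) = rp k + (4*g)*q := by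
    intro k q; rw [mul_assoc, rp_add, ← mul_assoc]
  have k2 : ∀ x : ℕ, (rp x : A g) = (rp (x % (4*g)) : ℕ) := by
    intro x
    conv_lhs => rw [← Nat.mod_add_div x (4*g), key]
    push_cast
    have : ((4 : A g) * g) = 0 := by have := ZMod.natCast_self (4*g); push_cast at this; exact this
    rw [this]; ring
  have hlt : ∀ x, x < 4 * g → rp x < 4 * g := by intro x hx; unfold rp; omega
  have h1 := h
  rw [k2 a, k2 b, ZMod.natCast_eq_natCast_iff] at h1
  have hp : 0 < 4 * g := Nat.pos_of_ne_zero (NeZero.ne _)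
  have e1 := Nat.mod_lt a hp
  have e2 := Nat.mod_lt b hp
  have h2 : rp (a % (4*g)) = rp (b % (4*g)) := by
    unfold Nat.ModEq at h1
    rwa [Nat.mod_eq_of_lt (hlt _ e1), Nat.mod_eq_of_lt (hlt _ e2)] at h1
  have h3 : a % (4*g) = b % (4*g) := by rw [← rp_rp (a % (4*g)), h2, rp_rp]
  rw [ZMod.natCast_eq_natCast_iff]; exact h3

theorem nx_inj (η : ℤˣ) : Function.Injective (nx (g := g) η) := by
  intro p q h; unfold nx at h; exact sg_inj (add_right_cancel h)

/-- n₋ conj n₊⁻¹ -/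
theorem nx_neg (η : ℤˣ) (p : A g) : nx (-η) (sg (nx η p)) = sg p := by
  unfold nx; rw [sg_sg]; push_cast; ring

theorem nx_neg_iter (η : ℤˣ) (t : ℕ) (p : A g) : (nx (-η))^[t] (sg ((nx η)^[t] p)) = sg p := by
  induction t with
  | zero => rfl
  | succ t ih =>
    rw [Function.iterate_succ' (f := nx η), Function.iterate_succ, Function.comp, Function.comp, nx_neg, ih]

theorem nx_period_one (p : A g) : (nx 1)^[4*g] p = p := by
  obtain ⟨k, rfl⟩ := exRp p
  rw [nx_rp_iter, rp_add]
  push_cast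
  have : ((4 : A g) * g) = 0 := by have := ZMod.natCast_self (4*g); push_cast at this; exact this
  rw [this]; ring

theorem nx_free_one (p : A g) {t : ℕ} (h : (nx 1)^[t] p = p) : 4*g ∣ t := by
  obtain ⟨k, rfl⟩ := exRp p
  rw [nx_rp_iter] at h
  have := rp_mod h
  push_cast at this
  rw [← ZMod.natCast_eq_zero_iff]
  linear_combination this

theorem units_cases (η : ℤˣ) : η = 1 ∨ η = -1 := Int.units_eq_one_or η

theorem nx_period (η : ℤˣ) (p : A g) : (nx η)^[4*g] p = p := by
  rcases units_cases η with rfl | rfl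
  · exact nx_period_one p
  · have h := nx_neg_iter 1 (4*g) (sg p)
    rwa [nx_period_one, sg_sg] at h

theorem nx_free (η : ℤˣ) (p : A g) {t : ℕ} (h : (nx η)^[t] p = p) : 4*g ∣ t := by
  rcases units_cases η with rfl | rfl
  · exact nx_free_one p h
  · apply nx_free_one (sg p) (t := t)
    have h1 := nx_neg_iter (-1) t p
    rw [h, neg_neg] at h1
    exact h1

theorem blk_inv_rev (η : ℤˣ) (k : ℕ) : ∀ p : A g,
    ((blk η p (k+1)).map sg).reverse = blk (-η) (sg ((nx η)^[k] p)) (k+1) := by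
  induction k with
  | zero => intro p; simp [blk]
  | succ k ih =>
    intro p
    rw [blk, map_cons, reverse_cons, ih, ← Function.iterate_succ_apply (nx η), blk_add (-η) (k+1) 1]
    congr 1
    simp only [blk]
    rw [nx_neg_iter]

/-- transport of the relator -/
theorem rel_transport {G : Type*} [Group G] (ρ : A g → G) (hinv : ∀ p, ρ (sg p) = (ρ p)⁻¹)
    (hrel : ((blk 1 (0 : A g) (4*g)).map ρ).prod = 1) (η : ℤˣ) (p : A g) :
    ((blk η p (4*g)).map ρ).prod = 1 := by
  have h1 : ∀ p : A g, ((blk 1 p (4*g)).map ρ).prod = 1 := by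
    intro p
    obtain ⟨k, hk⟩ := exRp p
    have h0 : ((rp 0 : ℕ) : A g) = 0 := by simp [rp]
    have h2 := nx_rp_iter (g := g) k 0
    rw [h0, zero_add, ← hk] at h2
    clear hk
    induction k generalizing p with
    | zero => simp at h2; rw [← h2]; exact hrel
    | succ k ih =>
      have ih' := ih _ rfl
      rw [Function.iterate_succ', Function.comp] at h2
      set q := (nx 1)^[k] (0 : A g)
      have h3 : blk 1 q (1 + 4*g) = q :: blk 1 p (4*g) := by rw [blk_add, ← h2]; rfl
      have h4 : blk 1 q (4*g + 1) = blk 1 q (4*g) ++ [q] := by rw [blk_add, nx_period]; rfl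
      rw [add_comm, h4] at h3
      have h5 := congrArg (fun l => (l.map ρ).prod) h3
      simp only [map_append, prod_append, ih', one_mul, map_cons, prod_cons, map_nil, prod_nil, mul_one] at h5
      exact mul_left_cancel (a := ρ q) (by rw [← h5, mul_one])
  rcases units_cases η with rfl | rfl
  · exact h1 p
  · obtain ⟨k, hk⟩ : ∃ k, 4*g = k+1 := ⟨4*g-1, by have := hg.out; omega⟩
    set q := sg ((nx (-1))^[k] p)
    have h2 := blk_inv_rev (-1) k p
    rw [← hk, neg_neg] at h2
    have h3 := h1 q
    rw [← h2] at h3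
    have h4 : ∀ l : List (A g), (((l.map sg).reverse).map ρ).prod = ((l.map ρ).prod)⁻¹ := by
      intro l
      induction l with
      | nil => simp
      | cons a l ih => rw [map_cons, reverse_cons, map_append, prod_append, ih]; simp [hinv]
    rw [h4] at h3
    exact inv_eq_one.1 h3

end SG

end

section
set_option linter.all false
namespace SG
open List CoxH
variable {g : ℕ} [hg : Fact (2 ≤ g)]

theorem one_ne' : (1 : A g) ≠ 0 := by
  have h := small_ne (g := g) (z := 1) (by norm_num) (by norm_num) (by norm_num)
  push_cast at h; exact h
theorem two_ne' : (2 : A g) ≠ 0 := by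
  have h := small_ne (g := g) (z := 2) (by norm_num) (by norm_num) (by norm_num)
  push_cast at h; exact h

open Classical in
noncomputable def cM (g : ℕ) [hg : Fact (2 ≤ g)] : CoxeterMatrix (A g) where
  M := Matrix.of fun i j => if i = j then 1 else if (j = i + 1 ∨ i = j + 1) then 2*g else 0
  isSymm := by
    ext i j
    simp only [Matrix.transpose_apply, Matrix.of_apply]
    simp only [eq_comm (a := j) (b := i), or_comm]
  diagonal i := by simp
  off_diagonal i j h := by
    simp only [Matrix.of_apply, if_neg h]
    have := hg.out
    split_ifs <;> omega

theorem cM_apply (i j : A g) : (cM g) i j = if i = j then 1 else if (j = i + 1 ∨ i = j + 1) then 2*g else 0 := by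
  unfold cM; simp only [Matrix.of_apply]

abbrev CW (g : ℕ) [hg : Fact (2 ≤ g)] := (cM g).Group
noncomputable def cS (g : ℕ) [hg : Fact (2 ≤ g)] : CoxeterSystem (cM g) (CW g) := (cM g).toCoxeterSystem

theorem cS_ord (i j : A g) (hij : i ≠ j) : orderOf ((cS g).simple i * (cS g).simple j) = cM g i j := by
  by_cases hadj : j = i + 1 ∨ i = j + 1
  · rw [cM_apply, if_neg hij, if_pos hadj]
    let c : A g →+* ZMod (2*g) := ZMod.castHom (by exact ⟨2, by ring⟩) (ZMod (2*g))
    have hl : (cM g).IsLiftable (fun i => DihedralGroup.sr (c i)) := by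
      intro i j
      rw [cM_apply]
      split_ifs with h1 h2
      · rw [h1]; simp
      · rw [DihedralGroup.sr_mul_sr, DihedralGroup.r_pow, ZMod.natCast_self, mul_zero]; rfl
      · simp
    let φ := (cS g).lift ⟨_, hl⟩
    apply Nat.dvd_antisymm
    · apply orderOf_dvd_of_pow_eq_one
      have h := (cS g).simple_mul_simple_pow i j
      rwa [cM_apply, if_neg hij, if_pos hadj] at h
    · have h := pow_orderOf_eq_one ((cS g).simple i * (cS g).simple j)
      have h2 := congrArg φ h
      rw [map_pow, map_mul, map_one, (cS g).lift_apply_simple, (cS g).lift_apply_simple,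
        DihedralGroup.sr_mul_sr] at h2
      have h3 : ∀ k : ℕ, (DihedralGroup.r (c j - c i)) ^ k = DihedralGroup.r ((c j - c i) * (k : ZMod (2*g))) := by
        intro k; simp
      rw [h3, DihedralGroup.one_def, DihedralGroup.r.injEq] at h2
      rw [← ZMod.natCast_eq_zero_iff]
      generalize orderOf ((cS g).simple i * (cS g).simple j) = o at h2 ⊢
      rcases hadj with h | h
      · rw [h, map_add, map_one] at h2; linear_combination h2
      · rw [h, map_add, map_one] at h2; linear_combination -h2
  · rw [cM_apply, if_neg hij, if_neg hadj]
    classical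
    let f : A g → DihedralGroup 0 := fun k => if k = i then .sr 0 else if k = j then .sr 1 else 1
    have hf2 : ∀ k, f k * f k = 1 := by
      intro k; simp only [f]; split_ifs <;> simp <;> rfl
    have hl : (cM g).IsLiftable f := by
      intro k l
      rw [cM_apply]
      split_ifs with h1 h2
      · rw [h1, pow_one, hf2]
      · have h3 : (f k * f l)^2 = 1 := by
          by_cases hk : f k = 1
          · rw [hk, one_mul, pow_two, hf2]
          by_cases hl : f l = 1
          · rw [hl, mul_one, pow_two, hf2]
          exfalso
          have hk' : k = i ∨ k = j := by
            by_contra hc; push Not at hc; apply hk; simp [f, hc.1, hc.2]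
          have hl' : l = i ∨ l = j := by
            by_contra hc; push Not at hc; apply hl; simp [f, hc.1, hc.2]
          rcases hk' with rfl | rfl <;> rcases hl' with rfl | rfl <;> tauto
        rw [pow_mul, h3, one_pow]
      · simp
    let φ := (cS g).lift ⟨_, hl⟩
    rw [orderOf_eq_zero_iff']
    intro n hn h
    have h2 := congrArg φ h
    rw [map_pow, map_mul, map_one, (cS g).lift_apply_simple, (cS g).lift_apply_simple] at h2
    have e1 : f i = .sr 0 := by simp [f]
    have e2 : f j = .sr 1 := by simp [f, hij.symm]
    rw [e1, e2, DihedralGroup.sr_mul_sr] at h2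
    have h3 : (DihedralGroup.r ((1 : ZMod 0) - 0)) ^ n = DihedralGroup.r (n : ZMod 0) := by simp
    rw [h3, DihedralGroup.one_def, DihedralGroup.r.injEq] at h2
    have : (n : ℤ) = 0 := h2
    omega


/-- frames -/
abbrev Fr (g : ℕ) := ℤˣ × A g

def fa (δ : Fr g) (p : A g) : A g := ((δ.1 : ℤ) : A g) * p + δ.2
def fu (δ : Fr g) (p : A g) : Fr g := (-δ.1, ((δ.1 : ℤ) : A g) * (p + sg p) + δ.2)

theorem usq (η : ℤˣ) : (((η : ℤ) : A g)) * ((η : ℤ) : A g) = 1 := by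
  rcases units_cases η with rfl | rfl <;> simp

def finv (δ : Fr g) (i : A g) : A g := ((δ.1 : ℤ) : A g) * (i - δ.2)

theorem fa_finv (δ : Fr g) (i : A g) : fa δ (finv δ i) = i := by
  unfold fa finv; linear_combination (i - δ.2) * usq (g := g) δ.1

theorem finv_fa (δ : Fr g) (p : A g) : finv δ (fa δ p) = p := by
  unfold fa finv; linear_combination p * usq (g := g) δ.1

theorem fu_fu (δ : Fr g) (p : A g) : fu (fu δ p) (sg p) = δ := by
  unfold fu; ext
  · simp
  · simp; ring

theorem fa_fu (δ : Fr g) (p : A g) : fa (fu δ p) (sg p) = fa δ p := by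
  unfold fu fa; simp; ring

theorem fa_nx (δ : Fr g) (η : ℤˣ) (p : A g) :
    fa (fu δ p) (nx η p) = fa δ p - ((η:ℤ) : A g) * ((δ.1 : ℤ) : A g) := by
  unfold fu fa nx; simp; ring

def tr (δ : Fr g) : List (A g) → List (A g)
  | [] => []
  | p :: w => fa δ p :: tr (fu δ p) w

def fw (δ : Fr g) : List (A g) → Fr g
  | [] => δ
  | p :: w => fw (fu δ p) w

@[simp] theorem tr_len (w : List (A g)) : ∀ δ : Fr g, (tr δ w).length = w.length := by
  induction w with
  | nil => intro; rfl
  | cons p w ih => intro δ; simp [tr, ih]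

theorem tr_append (w v : List (A g)) : ∀ δ : Fr g, tr δ (w ++ v) = tr δ w ++ tr (fw δ w) v := by
  induction w with
  | nil => intro; rfl
  | cons p w ih => intro δ; simp [tr, fw, ih]

theorem fw_append (w v : List (A g)) : ∀ δ : Fr g, fw δ (w ++ v) = fw (fw δ w) v := by
  induction w with
  | nil => intro; rfl
  | cons p w ih => intro δ; simp [fw, ih]

theorem tr_surj (l : List (A g)) : ∀ δ : Fr g, ∃ w, tr δ w = l := by
  induction l with
  | nil => intro δ; exact ⟨[], rfl⟩
  | cons i l ih =>
    intro δ
    obtain ⟨w, hw⟩ := ih (fu δ (finv δ i))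
    exact ⟨finv δ i :: w, by simp [tr, fa_finv, hw]⟩

theorem tr_blk (η : ℤˣ) (k : ℕ) : ∀ (δ : Fr g) (p : A g),
    tr δ (blk η p k) = alt (fa δ p) (fa δ p - ((η:ℤ) : A g) * ((δ.1 : ℤ) : A g)) k := by
  induction k with
  | zero => intros; rfl
  | succ k ih =>
    intro δ p
    rw [blk, tr, alt, ih, fa_nx]
    congr 2
    simp [fu]

/-- the frame permutation -/
def fperm (p : A g) : Equiv.Perm (Fr g) where
  toFun δ := fu δ p
  invFun δ := fu δ (sg p)
  left_inv δ := fu_fu δ p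
  right_inv δ := by have := fu_fu δ (sg p); rwa [sg_sg] at this

theorem op_prod {X : Type*} (ρ : A g → Equiv.Perm X) (l : List (A g)) (a : A g) (x : X) :
    (((a :: l).map (fun p => MulOpposite.op (ρ p))).prod).unop x =
      ((l.map (fun p => MulOpposite.op (ρ p))).prod).unop (ρ a x) := by
  simp

theorem fperm_prod (l : List (A g)) : ∀ δ : Fr g,
    ((l.map (fun p => MulOpposite.op (fperm p))).prod).unop δ = fw δ l := by
  induction l with
  | nil => intro δ; rfl
  | cons p l ih => intro δ; rw [op_prod, ih]; rfl

theorem fw_rel0 (δ : Fr g) : fw δ (blk 1 (0 : A g) (4*g)) = δ := by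
  have h4 : ∀ k : ℕ, ∀ δ : Fr g, fw δ (blk 1 ((rp (4*k) : ℕ) : A g) 4) = (δ.1, δ.2 - ((δ.1 : ℤ) : A g) * 4) := by
    intro k δ
    simp only [blk, fw, nx_rp]
    simp only [fu, sg_cast]
    have e0 : rp (4*k) = 4*k := by unfold rp; omega
    have e1 : rp (4*k+1) = 4*k+3 := by unfold rp; omega
    have e2 : rp (4*k+1+1) = 4*k+2 := by unfold rp; omega
    have e3 : rp (4*k+1+1+1) = 4*k+1 := by unfold rp; omega
    have f0 : sN (4*k) = 4*k+2 := by unfold sN; split_ifs <;> omega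
    have f1 : sN (4*k+1) = 4*k+3 := by unfold sN; split_ifs <;> omega
    have f2 : sN (4*k+2) = 4*k := by unfold sN; split_ifs <;> omega
    have f3 : sN (4*k+3) = 4*k+1 := by unfold sN; split_ifs <;> omega
    rw [e0, e1, e2, e3, f0, f1, f2, f3]
    ext
    · simp
    · simp; ring
  have h : ∀ k : ℕ, ∀ δ : Fr g, fw δ (blk 1 (0 : A g) (4*k)) = (δ.1, δ.2 - ((δ.1 : ℤ) : A g) * (4*k)) := by
    intro k
    induction k with
    | zero => intro δ; simp [blk, fw]
    | succ k ih =>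
      intro δ
      have h0 : ((rp 0 : ℕ) : A g) = 0 := by simp [rp]
      have h2 := nx_rp_iter (g := g) (4*k) 0
      rw [h0, zero_add] at h2
      rw [show 4*(k+1) = 4*k+4 by ring, blk_add, fw_append, ih, h2, h4]
      ext
      · rfl
      · push_cast; ring
  rw [h]
  have : ((4 : A g) * g) = 0 := by have := ZMod.natCast_self (4*g); push_cast at this; exact this
  rw [this]; simp

theorem fw_rel (η : ℤˣ) (p : A g) (δ : Fr g) : fw δ (blk η p (4*g)) = δ := by
  have h := rel_transport (g := g) (fun p => MulOpposite.op (fperm p)) (by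
    intro p
    rw [← MulOpposite.op_inv]
    congr 1
    apply Equiv.ext
    intro δ; rfl) (by
    apply MulOpposite.unop_injective
    apply Equiv.ext
    intro δ
    rw [fperm_prod, fw_rel0]; rfl) η p
  have h2 := fperm_prod (blk η p (4*g)) δ
  rw [h] at h2
  exact h2.symm

/-- colour action on W × frames -/
noncomputable def wperm (p : A g) : Equiv.Perm (CW g × Fr g) where
  toFun x := (x.1 * (cS g).simple (fa x.2 p), fu x.2 p)
  invFun x := (x.1 * (cS g).simple (fa x.2 (sg p)), fu x.2 (sg p))
  left_inv x := by
    ext1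
    · simp only [fa_fu]; simp
    · simp only [fu_fu]
  right_inv x := by
    have h := fa_fu x.2 (sg p)
    have h2 := fu_fu x.2 (sg p)
    rw [sg_sg] at h h2
    ext1
    · simp only [h]; simp
    · simp only [h2]

theorem wperm_prod (l : List (A g)) : ∀ x : CW g × Fr g,
    ((l.map (fun p => MulOpposite.op (wperm p))).prod).unop x = (x.1 * (cS g).wordProd (tr x.2 l), fw x.2 l) := by
  induction l with
  | nil => intro x; simp [tr, fw]
  | cons p l ih =>
    intro x; rw [op_prod, ih]
    simp [wperm, tr, fw, CoxeterSystem.wordProd_cons, mul_assoc]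

theorem alt_prod (m : ℕ) (i j : A g) : (cS g).wordProd (alt i j (2*m)) = ((cS g).simple i * (cS g).simple j)^m := by
  induction m with
  | zero => simp [alt]
  | succ m ih =>
    rw [pow_succ', ← ih]
    have h1 : alt i j (2*(m+1)) = i :: j :: alt i j (2*m) := rfl
    rw [h1]; simp [CoxeterSystem.wordProd_cons, mul_assoc]

theorem sub_unit_adj (i : A g) (η : ℤˣ) : cM g i (i - ((η:ℤ) : A g)) = 2*g := by
  rw [cM_apply]
  have h1 : i ≠ i - ((η:ℤ) : A g) := by
    intro h
    have : ((η:ℤ) : A g) = 0 := by linear_combination h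
    have h2 := usq (g := g) η
    rw [this, zero_mul] at h2
    exact one_ne' h2.symm
  rw [if_neg h1, if_pos]
  rcases units_cases η with rfl | rfl
  · right; simp
  · left; simp

theorem wperm_rel (η : ℤˣ) (p : A g) :
    ((blk η p (4*g)).map (fun p => MulOpposite.op (wperm p))).prod = 1 := by
  apply MulOpposite.unop_injective
  apply Equiv.ext
  rintro ⟨w, δ⟩
  rw [wperm_prod, fw_rel, tr_blk]
  have h := (cS g).simple_mul_simple_pow (fa δ p) (fa δ p - ((η:ℤ) : A g) * ((δ.1 : ℤ) : A g))
  have h2 := sub_unit_adj (fa δ p) (η * δ.1)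
  push_cast at h2
  rw [h2] at h
  have e : ∀ i j : A g, alt i j (4*g) = alt i j (2*(2*g)) := by intro i j; congr 1; ring
  rw [e, alt_prod]
  simp only [h]
  simp

end SG

end

section
set_option linter.all false
namespace SG
open List CoxH CS
variable {g : ℕ} [hg : Fact (2 ≤ g)]

def letOf (p : A g) : Letter g :=
  (⟨2 * (p.val/4) + p.val % 2, by have := ZMod.val_lt p; omega⟩, decide (p.val % 4 = 0 ∨ p.val % 4 = 3))

theorem letOf_natCast (n : ℕ) (h : n < 4*g) : letOf ((n : ℕ) : A g) =
   (⟨2 * (n/4) + n % 2, by omega⟩, decide (n % 4 = 0 ∨ n % 4 = 3)) := by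
  unfold letOf
  have : ((n : ℕ) : A g).val = n := ZMod.val_natCast_of_lt h
  simp only [this]

theorem posLv_lt (s : Letter g) : posLv s < 4*g := by
  obtain ⟨⟨l, hl⟩, b⟩ := s
  unfold posLv posOut posIn
  dsimp only
  split_ifs <;> omega

def pos (s : Letter g) : A g := (posLv s : ℕ)

theorem letOf_pos (s : Letter g) : letOf (pos s) = s := by
  unfold pos
  rw [letOf_natCast _ (posLv_lt s)]
  obtain ⟨⟨l, hl⟩, b⟩ := s
  unfold posLv posOut posIn
  dsimp only
  ext
  · dsimp only; split_ifs <;> omega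
  · dsimp only
    cases b <;> simp <;> split_ifs <;> omega

theorem pos_letOf (p : A g) : pos (letOf p) = p := by
  obtain ⟨n, hn, rfl⟩ : ∃ n : ℕ, n < 4*g ∧ p = n := ⟨p.val, ZMod.val_lt p, by simp⟩
  rw [letOf_natCast _ hn]
  unfold pos posLv posOut posIn
  dsimp only
  congr 1
  have : n % 4 = 0 ∨ n % 4 = 1 ∨ n % 4 = 2 ∨ n % 4 = 3 := by omega
  rcases this with h | h | h | h <;> simp [h] <;> split_ifs <;> omega

theorem sN_lt {n : ℕ} (h : n < 4*g) : sN n < 4*g := by unfold sN; split_ifs <;> omega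

theorem letOf_sg (p : A g) : letOf (sg p) = ((letOf p).1, !(letOf p).2) := by
  obtain ⟨n, hn, rfl⟩ : ∃ n : ℕ, n < 4*g ∧ p = n := ⟨p.val, ZMod.val_lt p, by simp⟩
  rw [sg_cast, letOf_natCast _ hn, letOf_natCast _ (sN_lt hn)]
  have : n % 4 = 0 ∨ n % 4 = 1 ∨ n % 4 = 2 ∨ n % 4 = 3 := by omega
  unfold sN
  ext
  · dsimp only; split_ifs <;> omega
  · dsimp only
    rcases this with h | h | h | h <;> simp [h] <;> omega

theorem posArr_eq (s : Letter g) : ((posArr s : ℕ) : A g) = sg (pos s) := by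
  have h : posArr s = posLv (s.1, !s.2) := by
    obtain ⟨l, b⟩ := s
    cases b <;> simp [posArr, posLv]
  have h2 := letOf_sg (pos s)
  rw [letOf_pos] at h2
  have h3 := congrArg pos h2
  rw [pos_letOf] at h3
  rw [h3, h]; rfl

theorem posArr_lt (s : Letter g) : posArr s < 4*g := by
  have h : posArr s = posLv (s.1, !s.2) := by
    obtain ⟨l, b⟩ := s
    cases b <;> simp [posArr, posLv]
  rw [h]; exact posLv_lt _

theorem gap_cast (s t : Letter g) : ((gapN s t : ℕ) : A g) = pos t - sg (pos s) - 1 := by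
  unfold gapN
  rw [ZMod.natCast_mod, Nat.cast_sub (by have := posArr_lt s; omega), ← posArr_eq]
  unfold pos
  push_cast
  have : ((4 : A g) * g) = 0 := by have := ZMod.natCast_self (4*g); push_cast at this; exact this
  rw [this]; ring

theorem gap_lt (s t : Letter g) : gapN s t < 4*g := Nat.mod_lt _ (Nat.pos_of_ne_zero (NeZero.ne _))

theorem gap_eq_iff (s t : Letter g) (k : ℕ) (hk : k < 4*g) : gapN s t = k ↔ pos t = sg (pos s) + 1 + k := by
  constructor
  · intro h
    have := gap_cast s t
    rw [h] at this
    linear_combination -this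
  · intro h
    have h1 := gap_cast s t
    have h2 : ((gapN s t : ℕ) : A g) = (k : ℕ) := by rw [h1, h]; ring
    rw [ZMod.natCast_eq_natCast_iff] at h2
    unfold Nat.ModEq at h2
    rwa [Nat.mod_eq_of_lt (gap_lt s t), Nat.mod_eq_of_lt hk] at h2

theorem relWord_eq : relatorWord g = (blk 1 (0 : A g) (4*g)).map letOf := by
  unfold relatorWord
  rw [blk_map, map_map, ← List.map_coe_finRange_eq_range, map_map]
  apply List.map_congr_left
  intro k _
  have h0 : ((rp 0 : ℕ) : A g) = 0 := by simp [rp]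
  simp only [Function.comp]
  rw [← h0, nx_rp_iter, zero_add, letOf_natCast _ (by unfold rp; have := k.2; omega)]
  unfold relLabel relSign rp
  ext
  · dsimp only; omega
  · dsimp only
    have : (k:ℕ) % 4 = 0 ∨ (k:ℕ) % 4 = 1 ∨ (k:ℕ) % 4 = 2 ∨ (k:ℕ) % 4 = 3 := by omega
    rcases this with h | h | h | h <;> simp [h]
    

noncomputable def lam (p : A g) : Gamma g := letterG (letOf p)
noncomputable def lw (w : List (A g)) : Gamma g := (w.map lam).prod

@[simp] theorem lw_nil : lw ([] : List (A g)) = 1 := rfl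
@[simp] theorem lw_cons (p : A g) (w) : lw (p :: w) = lam p * lw w := by simp [lw]
@[simp] theorem lw_append (v w : List (A g)) : lw (v ++ w) = lw v * lw w := by simp [lw]

theorem wordG_map (w : List (A g)) : wordG (w.map letOf) = lw w := by
  unfold wordG lw; rw [map_map]; rfl

@[simp] theorem lam_sg (p : A g) : lam (sg p) = (lam p)⁻¹ := by
  unfold lam; rw [letOf_sg]; unfold letterG
  cases h : (letOf p).2 <;> simp

/-- universal property -/
theorem univ_prop {G : Type*} [Group G] (ρ : A g → G) (hinv : ∀ p, ρ (sg p) = (ρ p)⁻¹)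
    (hrel : ((blk 1 (0 : A g) (4*g)).map ρ).prod = 1) :
    ∃ Ψ : Gamma g →* G, ∀ p, Ψ (lam p) = ρ p := by
  let f : Fin (2*g) → G := fun l => ρ (pos (l, true))
  have hl : ∀ s : Letter g, (if s.2 then f s.1 else (f s.1)⁻¹) = ρ (pos s) := by
    rintro ⟨l, b⟩
    cases b
    · simp only [f]
      have := letOf_sg (pos ((l, true) : Letter g))
      rw [letOf_pos] at this
      have h3 := congrArg pos this
      rw [pos_letOf] at h3
      simp only [Bool.not_true] at h3
      rw [← h3, hinv]; simp
    · simp [f]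
  have hrels : ∀ r ∈ ({relatorF g} : Set (FreeGroup (Fin (2*g)))), FreeGroup.lift f r = 1 := by
    intro r hr
    rw [Set.mem_singleton_iff] at hr
    subst hr
    rw [← hrel]
    unfold relatorF
    rw [map_list_prod, relWord_eq, map_map, map_map]
    congr 1
    apply List.map_congr_left
    intro p _
    simp only [Function.comp]
    rw [← pos_letOf p, ← hl, letOf_pos]
    split_ifs <;> simp
  refine ⟨PresentedGroup.toGroup hrels, ?_⟩
  intro p
  conv_rhs => rw [← pos_letOf p, ← hl]
  unfold lam letterG
  split_ifs
  · simp [PresentedGroup.toGroup.of]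
  · simp [PresentedGroup.toGroup.of]

theorem lam_rel0 : ((blk 1 (0 : A g) (4*g)).map lam).prod = 1 := by
  have h := wordG_map (blk 1 (0 : A g) (4*g))
  rw [← relWord_eq] at h
  change lw _ = 1
  rw [← h]
  have h1 : PresentedGroup.mk ({relatorF g} : Set (FreeGroup (Fin (2 * g)))) (relatorF g) = 1 :=
    PresentedGroup.one_of_mem (Set.mem_singleton _)
  rw [← h1]
  unfold relatorF wordG
  rw [map_list_prod, map_map]
  congr 1
  apply List.map_congr_left
  intro s _
  simp only [Function.comp, letterG]
  split_ifs
  · rfl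
  · rw [map_inv]; rfl

theorem lw_rel (η : ℤˣ) (p : A g) : lw (blk η p (4*g)) = 1 :=
  rel_transport lam lam_sg lam_rel0 η p

theorem lw_surj (x : Gamma g) : ∃ w, lw w = x := by
  induction x using PresentedGroup.induction_on with
  | _ z =>
  induction z using FreeGroup.induction_on with
  | C1 => exact ⟨[], by simp⟩
  | of l => exact ⟨[pos (l, true)], by simp [lam, letOf_pos, letterG]; rfl⟩
  | inv_of l => exact ⟨[pos (l, false)], by simp [lam, letOf_pos, letterG]; rfl⟩
  | mul a b ha hb =>
    obtain ⟨v, hv⟩ := ha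
    obtain ⟨w, hw⟩ := hb
    exact ⟨v ++ w, by simp [hv, hw]⟩

theorem lw_to_W {w w' : List (A g)} (h : lw w = lw w') (δ : Fr g) :
    (cS g).wordProd (tr δ w) = (cS g).wordProd (tr δ w') := by
  obtain ⟨Ψ, hΨ⟩ := univ_prop (g := g) (fun p => MulOpposite.op (wperm p)) (by
    intro p
    rw [← MulOpposite.op_inv]
    congr 1
    apply Equiv.ext
    intro δ; rfl) (wperm_rel 1 0)
  have h1 : ∀ w : List (A g), Ψ (lw w) = (w.map (fun p => MulOpposite.op (wperm p))).prod := by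
    intro w
    induction w with
    | nil => simp
    | cons p w ih => simp [hΨ, ih]
  have h2 := h1 w
  rw [h, h1 w'] at h2
  have h3 := congrArg (fun z => (z.unop ((1 : CW g), δ)).1) h2
  simp only [wperm_prod, one_mul] at h3
  exact h3.symm

noncomputable def gperm (i : A g) : Equiv.Perm (Gamma g × Fr g) :=
  have h : Function.Involutive (fun x : Gamma g × Fr g => (x.1 * lam (finv x.2 i), fu x.2 (finv x.2 i))) := by
    rintro ⟨x, δ⟩
    have h1 : finv (fu δ (finv δ i)) i = sg (finv δ i) := by
      have := fa_fu δ (finv δ i)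
      rw [fa_finv] at this
      conv_lhs => arg 2; rw [← this]
      rw [finv_fa]
    simp [h1, fu_fu]
  h.toPerm

theorem gperm_apply (i : A g) (x : Gamma g × Fr g) :
   gperm i x = (x.1 * lam (finv x.2 i), fu x.2 (finv x.2 i)) := rfl

theorem gperm_sq (i : A g) : gperm i * gperm i = 1 := by
  apply Equiv.ext
  intro x
  exact Equiv.symm_apply_apply (gperm i) x

theorem gperm_prod (w : List (A g)) : ∀ x : Gamma g × Fr g,
    (((tr x.2 w).map (fun p => MulOpposite.op (gperm p))).prod).unop x = (x.1 * lw w, fw x.2 w) := by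
  induction w with
  | nil => intro x; simp [tr, fw]
  | cons p w ih =>
    intro x; rw [tr, op_prod, gperm_apply, finv_fa]
    have := ih (x.1 * lam p, fu x.2 p)
    simp only at this
    rw [this]
    simp [fw, mul_assoc]

theorem adj_unit {i j : A g} (h : j = i + 1 ∨ i = j + 1) (ε : ℤˣ) :
    ∃ η : ℤˣ, j = i - ((η:ℤ) : A g) * ((ε : ℤ) : A g) := by
  rcases h with h | h
  · refine ⟨-ε, ?_⟩
    push_cast; linear_combination h - usq (g := g) ε
  · refine ⟨ε, ?_⟩
    linear_combination -h + usq (g := g) ε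

theorem gperm_liftable : (cM g).IsLiftable (fun i : A g => MulOpposite.op (gperm i)) := by
  intro i j
  rw [cM_apply]
  split_ifs with h1 h2
  · rw [h1, pow_one, ← MulOpposite.op_mul, gperm_sq]; rfl
  · have h3 : ∀ m : ℕ, (MulOpposite.op (gperm i) * MulOpposite.op (gperm j))^m =
      ((alt i j (2*m)).map (fun p => MulOpposite.op (gperm p))).prod := by
      intro m
      induction m with
      | zero => simp [alt]
      | succ m ih =>
        rw [pow_succ, ih, show 2*(m+1) = 2*m+2 by ring, alt_add2]
        simp only [map_append, prod_append, map_cons, prod_cons, map_nil, prod_nil, mul_one]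
    rw [h3]
    apply MulOpposite.unop_injective
    apply Equiv.ext
    rintro ⟨x, δ⟩
    obtain ⟨η, hη⟩ := adj_unit h2 δ.1
    have e : alt i j (2*(2*g)) = tr δ (blk η (finv δ i) (4*g)) := by
      rw [tr_blk, fa_finv, ← hη]; congr 1; ring
    have := gperm_prod (blk η (finv δ i) (4*g)) (x, δ)
    simp only at this
    rw [e, this, fw_rel, lw_rel]; simp
  · simp

theorem W_to_lw {w w' : List (A g)} (δ : Fr g) 
    (h : (cS g).wordProd (tr δ w) = (cS g).wordProd (tr δ w')) : lw w = lw w' := by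
  let φ := (cS g).lift ⟨_, gperm_liftable (g := g)⟩
  have h1 : ∀ l : List (A g), φ ((cS g).wordProd l) = (l.map (fun p => MulOpposite.op (gperm p))).prod := by
    intro l
    induction l with
    | nil => simp
    | cons i l ih =>
      rw [CoxeterSystem.wordProd_cons, map_mul, ih, (cS g).lift_apply_simple]; simp
  have h2 := h1 (tr δ w)
  rw [h, h1] at h2
  have h3 := congrArg (fun z => (z.unop ((1 : Gamma g), δ)).1) h2
  have e1 := gperm_prod w (1, δ)
  have e2 := gperm_prod w' (1, δ)
  simp only at e1 e2 h3
  rw [e1, e2] at h3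
  simpa using h3.symm

noncomputable def len (x : Gamma g) : ℕ := (cS g).length ((cS g).wordProd (tr (1, 0) (lw_surj x).choose))

theorem len_lw (δ : Fr g) (w : List (A g)) : len (lw w) = (cS g).length ((cS g).wordProd (tr δ w)) := by
  -- both are the minimum length of words
  have key : ∀ (δ : Fr g) (w : List (A g)), (∃ v, lw v = lw w ∧ v.length = (cS g).length ((cS g).wordProd (tr δ w))) ∧
     (∀ v, lw v = lw w → (cS g).length ((cS g).wordProd (tr δ w)) ≤ v.length) := by
    intro δ w
    constructor
    · obtain ⟨ω, hr, hω⟩ := (cS g).exists_isReduced ((cS g).wordProd (tr δ w))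
      obtain ⟨v, rfl⟩ := tr_surj ω δ
      refine ⟨v, W_to_lw δ hω.symm, ?_⟩
      rw [hω, hr.eq, tr_len]
    · intro v hv
      rw [← lw_to_W hv δ, ← tr_len v δ]
      exact (cS g).length_wordProd_le _
  have hu := (lw_surj (lw w)).choose_spec
  unfold len
  set u := (lw_surj (lw w)).choose
  obtain ⟨⟨v, hv, hv'⟩, h2⟩ := key (1, 0) u
  obtain ⟨⟨v2, hv2, hv2'⟩, h3⟩ := key δ w
  rw [hu] at hv h2
  have a1 := h2 v2 hv2
  have a2 := h3 v hv
  omega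

theorem len_le (w : List (A g)) : len (lw w) ≤ w.length := by
  rw [len_lw (1,0), ← tr_len w (1,0)]; exact (cS g).length_wordProd_le _

theorem exists_geo (x : Gamma g) : ∃ w, lw w = x ∧ w.length = len x := by
  obtain ⟨w, rfl⟩ := lw_surj x
  rw [len_lw (1,0)]
  obtain ⟨ω, hr, hω⟩ := (cS g).exists_isReduced ((cS g).wordProd (tr (1,0) w))
  obtain ⟨v, rfl⟩ := tr_surj ω (1,0)
  refine ⟨v, W_to_lw (1,0) hω.symm, ?_⟩
  rw [hω, hr.eq, tr_len]

theorem len_lam_mul (p : A g) (x : Gamma g) : len (lam p * x) = len x + 1 ∨ len (lam p * x) + 1 = len x := by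
  obtain ⟨w, rfl⟩ := lw_surj x
  rw [← lw_cons, len_lw (1,0), len_lw (fu (1,0) p), tr, CoxeterSystem.wordProd_cons]
  exact (cS g).length_simple_mul _ _

@[simp] theorem len_one : len (1 : Gamma g) = 0 := by
  have := len_le ([] : List (A g)); simpa using this

theorem len_eq_zero {x : Gamma g} (h : len x = 0) : x = 1 := by
  obtain ⟨w, rfl, hw⟩ := exists_geo x
  rw [h, List.length_eq_zero_iff] at hw; rw [hw]; rfl

theorem len_mul (x y : Gamma g) : len (x * y) ≤ len x + len y := by
  obtain ⟨v, rfl, hv⟩ := exists_geo x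
  obtain ⟨w, rfl, hw⟩ := exists_geo y
  rw [← lw_append]
  have := len_le (v ++ w)
  rw [length_append] at this
  omega

def invw (w : List (A g)) : List (A g) := (w.map sg).reverse

@[simp] theorem lw_invw (w : List (A g)) : lw (invw w) = (lw w)⁻¹ := by
  unfold invw
  induction w with
  | nil => simp
  | cons p w ih => simp only [map_cons, reverse_cons, lw_append, ih, lw_cons, lw_nil, lam_sg, mul_one, mul_inv_rev]

@[simp] theorem len_inv (x : Gamma g) : len x⁻¹ = len x := by
  have key : ∀ x : Gamma g, len x⁻¹ ≤ len x := by
    intro x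
    obtain ⟨v, rfl, hv⟩ := exists_geo x
    rw [← lw_invw, ← hv]
    have := len_le (invw v)
    simpa [invw] using this
  have h1 := key x
  have h2 := key x⁻¹
  rw [inv_inv] at h2
  omega

/-- Fact A -/
theorem factA {u : Gamma g} {p q : A g} (hpq : p ≠ q) (hp : len ((lam p)⁻¹ * u) < len u)
    (hq : len ((lam q)⁻¹ * u) < len u) :
    ∃ η : ℤˣ, q = p - ((η:ℤ) : A g) ∧ ∃ v, u = lw (blk η p (2*g) ++ v) ∧ len u = 2*g + v.length := by
  obtain ⟨w, rfl⟩ := lw_surj u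
  set δ : Fr g := (1, 0)
  have hfa : ∀ p : A g, fa δ p = p := by intro p; simp [fa, δ]
  have hd : ∀ p : A g, len ((lam p)⁻¹ * lw w) < len (lw w) →
      (cS g).IsLeftDescent ((cS g).wordProd (tr δ w)) p := by
    intro p h
    unfold CoxeterSystem.IsLeftDescent
    rw [← len_lw]
    convert h using 1
    rw [← lam_sg, ← lw_cons, len_lw (fu δ p), tr, CoxeterSystem.wordProd_cons, fa_fu, fu_fu, hfa]
  obtain ⟨h0, ω, hr, hω⟩ := two_desc (cS g) cS_ord hpq (hd p hp) (hd q hq)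
  have hadj : q = p + 1 ∨ p = q + 1 := by
    by_contra hc
    rw [cM_apply, if_neg hpq, if_neg hc] at h0
    exact h0 rfl
  obtain ⟨η, hη⟩ := adj_unit hadj 1
  rw [Units.val_one, Int.cast_one, mul_one] at hη
  refine ⟨η, hη, ?_⟩
  have hm : cM g p q = 2*g := by rw [hη, sub_unit_adj]
  rw [hm] at hω hr
  have e : alt p q (2*g) = tr δ (blk η p (2*g)) := by
    rw [tr_blk, hfa]; simp [δ, hη]
  obtain ⟨v, hv⟩ := tr_surj ω (fw δ (blk η p (2*g)))
  rw [e, ← hv, ← tr_append] at hω hr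
  refine ⟨v, W_to_lw δ hω, ?_⟩
  rw [len_lw δ, hω, hr.eq]
  simp
end SG

end

section
set_option linter.all false
namespace SG
open List CoxH CS
variable {g : ℕ} [hg : Fact (2 ≤ g)]

def Geo (w : List (A g)) : Prop := len (lw w) = w.length

theorem Geo.left {v w : List (A g)} (h : Geo (v ++ w)) : Geo v := by
  unfold Geo at *
  rw [lw_append, length_append] at h
  have h1 := len_mul (lw v) (lw w)
  have h2 := len_le v
  have h3 := len_le w
  omega

theorem Geo.right {v w : List (A g)} (h : Geo (v ++ w)) : Geo w := by
  unfold Geo at *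
  rw [lw_append, length_append] at h
  have h1 := len_mul (lw v) (lw w)
  have h2 := len_le v
  have h3 := len_le w
  omega

theorem Geo.tail {p : A g} {w : List (A g)} (h : Geo (p :: w)) : Geo w :=
  Geo.right (v := [p]) h

theorem Geo.of_eq {v w : List (A g)} (h : Geo v) (e : lw v = lw w) (hl : w.length ≤ v.length) : Geo w := by
  unfold Geo at *
  have h2 := len_le w
  rw [e] at h
  omega

theorem Geo.len_eq {v w : List (A g)} (h : Geo v) (h' : Geo w) (e : lw v = lw w) : v.length = w.length := by
  unfold Geo at *; rw [e] at h; omega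

theorem Geo.replace {a b v w : List (A g)} (h : Geo (a ++ v ++ b)) (e : lw v = lw w) (hl : w.length ≤ v.length) :
    Geo (a ++ w ++ b) := by
  apply h.of_eq
  · simp [e]
  · simp; omega

theorem Geo.no_back {a b : List (A g)} {p : A g} (h : Geo (a ++ p :: sg p :: b)) : False := by
  have h1 : Geo (p :: sg p :: b) := h.right
  unfold Geo at h1
  rw [lw_cons, lw_cons, lam_sg, mul_inv_cancel_left] at h1
  have := len_le b
  simp at h1; omega

/-- descent -/
def Dsc (u : Gamma g) (p : A g) : Prop := len ((lam p)⁻¹ * u) < len u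

theorem Geo.dsc {p : A g} {w : List (A g)} (h : Geo (p :: w)) : Dsc (lw (p :: w)) p := by
  unfold Dsc
  have h1 := h.tail
  unfold Geo at *
  rw [h, lw_cons, inv_mul_cancel_left, h1]; simp

theorem Geo.dsc' {p : A g} {w : List (A g)} {u : Gamma g} (h : Geo (p :: w)) (e : u = lw (p :: w)) : Dsc u p := e ▸ h.dsc

theorem geo_cons_of_not_dsc {p : A g} {w : List (A g)} (h : Geo w) (hd : ¬ Dsc (lw w) (sg p)) : Geo (p :: w) := by
  unfold Dsc at hd
  rw [lam_sg, inv_inv] at hd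
  unfold Geo at *
  rw [lw_cons]
  have := len_lam_mul p (lw w)
  simp; omega

theorem not_dsc_of_geo {p : A g} {w : List (A g)} (h : Geo (p :: w)) : ¬ Dsc (lw w) (sg p) := by
  unfold Dsc
  rw [lam_sg, inv_inv]
  have h1 := h.tail
  unfold Geo at *
  rw [lw_cons] at h
  simp at h; omega

theorem factA' {u : Gamma g} {p q : A g} (hpq : p ≠ q) (hp : Dsc u p) (hq : Dsc u q) :
    ∃ η : ℤˣ, q = p - ((η:ℤ) : A g) ∧ ∃ v, u = lw (blk η p (2*g) ++ v) ∧ Geo (blk η p (2*g) ++ v) := by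
  obtain ⟨η, h1, v, h2, h3⟩ := factA hpq hp hq
  refine ⟨η, h1, v, h2, ?_⟩
  unfold Geo; rw [← h2, h3]; simp

theorem neg_of_ne {η η' : ℤˣ} (h : η' ≠ η) : η' = -η := by
  rcases units_cases η with rfl | rfl <;> rcases units_cases η' with rfl | rfl <;> simp_all

theorem diff2 {u : Gamma g} {a : A g} (η : ℤˣ) (h1 : Dsc u (a + ((η:ℤ) : A g))) (h2 : Dsc u (a - ((η:ℤ) : A g))) : False := by
  have hne : a + ((η:ℤ) : A g) ≠ a - ((η:ℤ) : A g) := by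
    intro h
    have h3 : ((2 : ℤ) : A g) = 0 := by
      push_cast
      have h4 := usq (g := g) η
      linear_combination ((η:ℤ) : A g) * h - 2 * h4
    exact small_ne (g := g) (z := 2) (by norm_num) (by norm_num) (by norm_num) h3
  obtain ⟨η', h3, -⟩ := factA' hne h1 h2
  have h4 : ((2 * (η : ℤ) - (η' : ℤ) : ℤ) : A g) = 0 := by
    push_cast; linear_combination -h3
  rcases units_cases η with rfl | rfl <;> rcases units_cases η' with rfl | rfl <;>
    refine small_ne (g := g) ?_ ?_ ?_ h4 <;> simp

theorem g2 : 2 ≤ g := hg.out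

theorem blk_geo (η : ℤˣ) (p : A g) : Geo (blk η p (2*g)) := by
  unfold Geo
  rw [len_lw (1,0), tr_blk]
  have h := sub_unit_adj (fa ((1,0) : Fr g) p) η
  have hne : fa ((1,0) : Fr g) p ≠ fa ((1,0) : Fr g) p - ((η:ℤ) : A g) := by
    intro h1
    rw [← h1, cM_apply, if_pos rfl] at h
    have := g2 (g := g); omega
  have h2 := alt_reduced (cS g) cS_ord hne (2*g) (Or.inr h.ge)
  have : ((η:ℤ) : A g) * ((((1,0) : Fr g).1 : ℤ) : A g) = ((η:ℤ) : A g) := by simp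
  rw [this, h2.eq, alt_len, blk_len]

theorem lam_len (p : A g) : Geo [p] := by
  have h := blk_geo 1 p
  have := g2 (g := g)
  rw [show 2*g = 1 + (2*g-1) by omega, blk_add] at h
  exact h.left

theorem lam_inj {p q : A g} (h : lam p = lam q) : p = q := by
  by_contra hne
  have h1 := (lam_len p).dsc
  have h2 := (lam_len q).dsc
  have e : lw [q] = lw [p] := by simp [h]
  rw [e] at h2
  obtain ⟨η, -, v, h3, h4⟩ := factA' hne h1 h2
  have := h4.len_eq (lam_len p) h3.symm
  have := g2 (g := g)
  simp at *
  omega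

theorem swap_last (η : ℤˣ) (p : A g) : sg ((nx η)^[4*g-1] p) = p - ((η:ℤ) : A g) := by
  have h := nx_period η p
  rw [show 4*g = (4*g-1)+1 by have := g2 (g := g); omega, Function.iterate_succ', Function.comp, nx] at h
  have e : 4*g - 1 + 1 - 1 = 4*g - 1 := by omega
  linear_combination h

/-- complementary arcs of a face -/
theorem swap (η : ℤˣ) (p : A g) (k : ℕ) (hk : k < 4*g) :
    lw (blk η p k) = lw (blk (-η) (p - ((η:ℤ) : A g)) (4*g-k)) := by
  have h1 : lw (blk η p (k + (4*g-k))) = 1 := by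
    rw [show blk η p (k + (4*g-k)) = blk η p (4*g) by congr 1; omega]; exact lw_rel η p
  rw [blk_add, lw_append] at h1
  obtain ⟨m, hm⟩ : ∃ m, 4*g - k = m+1 := ⟨4*g-k-1, by omega⟩
  rw [hm] at h1 ⊢
  have h2 := blk_inv_rev η m ((nx η)^[k] p)
  rw [← Function.iterate_add_apply] at h2
  have e : (nx η)^[m+k] p = (nx η)^[4*g-1] p := by congr 1; omega
  rw [e, swap_last] at h2
  rw [← h2]
  change lw _ = lw (invw _)
  rw [lw_invw]
  exact eq_inv_of_mul_eq_one_left h1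

theorem swap_half (η : ℤˣ) (p : A g) :
    lw (blk η p (2*g)) = lw (blk (-η) (p - ((η:ℤ) : A g)) (2*g)) := by
  rw [swap η p (2*g) (by have := g2 (g := g); omega)]
  congr 2; omega

theorem long_not_geo (η : ℤˣ) (p : A g) : ¬ Geo (blk η p (2*g+1)) := by
  intro h
  unfold Geo at h
  have := g2 (g := g)
  rw [swap η p (2*g+1) (by omega)] at h
  have := len_le (blk (-η) (p - ((η:ℤ) : A g)) (4*g-(2*g+1)))
  rw [h] at this
  simp at this
  omega

theorem lemD {η : ℤˣ} {p : A g} {v w : List (A g)} (h1 : Geo (blk η p (2*g) ++ w)) (h2 : Geo (p :: v))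
    (e : lw (p :: v) = lw (blk η p (2*g) ++ w)) : ∃ r, p :: v = blk η p (2*g-1) ++ r := by
  have hg2 := g2 (g := g)
  have hlen := h2.len_eq h1 e
  have key : ∀ n, 1 + n ≤ 2*g-1 → ∃ r, p :: v = blk η p (1+n) ++ r := by
    intro n
    induction n with
    | zero => intro _; exact ⟨v, rfl⟩
    | succ n ih =>
      intro hn
      obtain ⟨r, hr⟩ := ih (by omega)
      cases r with
      | nil =>
        exfalso
        rw [hr] at hlen
        simp at hlen; omega
      | cons a r =>
        set B := (nx η)^[1+n] p with hB
        have hB' : B = nx η ((nx η)^[n] p) := by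
          rw [hB, add_comm, Function.iterate_succ', Function.comp]
        have hs : blk η p (2*g) = blk η p (1+n) ++ blk η B (2*g-(1+n)) := by
          rw [← blk_add]; congr 1; omega
        rw [hr, hs, append_assoc, lw_append, lw_append, mul_right_inj] at e
        rw [hs, append_assoc] at h1
        have g1 := h1.right
        have g2' : Geo (a :: r) := by rw [hr] at h2; exact h2.right
        suffices a = B by
          refine ⟨r, ?_⟩
          rw [hr, show 1 + (n+1) = (1+n)+1 from rfl, blk_add η (1+n) 1, ← hB, this]; simp [blk]
        by_contra hne
        obtain ⟨m, hm⟩ : ∃ m, 2*g - (1+n) = m+1+1 := ⟨2*g-(1+n)-2, by omega⟩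
        rw [hm] at e g1
        have d1 : Dsc (lw (a :: r)) B := Geo.dsc' (w := blk η (nx η B) (m+1) ++ w) (by exact g1) e
        have d2 := g2'.dsc
        obtain ⟨η', q1, y, q2, q3⟩ := factA' (Ne.symm hne) d1 d2
        by_cases hηη : η' = η
        · -- backtrack
          subst hηη
          have : a = sg ((nx η')^[n] p) := by rw [q1, hB', nx]; ring
          have hs' : blk η' p (1+n) = blk η' p n ++ [(nx η')^[n] p] := by
            rw [add_comm, blk_add]; rfl
          rw [hr, hs', append_assoc, this] at h2
          exact h2.no_back
        · have hn' := neg_of_ne hηη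
          subst hn'
          obtain ⟨m', hm'⟩ : ∃ m', 2*g = m'+1+1 := ⟨2*g-2, by omega⟩
          rw [hm'] at q2 q3
          have e2 : lw (blk η (nx η B) (m+1) ++ w) = lw (blk (-η) (nx (-η) B) (m'+1) ++ y) := by
            have := e.symm.trans q2
            rw [blk, cons_append, lw_cons] at this
            conv_rhs at this => rw [blk, cons_append, lw_cons]
            exact mul_left_cancel this
          have d3 : Dsc (lw (blk η (nx η B) (m+1) ++ w)) (nx η B) := Geo.dsc (w := blk η (nx η (nx η B)) m ++ w) g1.tail
          have d4 : Dsc (lw (blk η (nx η B) (m+1) ++ w)) (nx (-η) B) := by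
            refine Geo.dsc' (w := blk (-η) (nx (-η) (nx (-η) B)) m' ++ y) q3.tail e2
          unfold nx at d3 d4
          rw [Units.val_neg, Int.cast_neg, ← sub_eq_add_neg] at d4
          exact diff2 η d3 d4
  obtain ⟨r, hr⟩ := key (2*g-2) (by omega)
  exact ⟨r, by rw [hr]; congr 2; omega⟩

end SG

end

section
set_option linter.all false
namespace SG
open List CoxH CS
variable {g : ℕ} [hg : Fact (2 ≤ g)]

def opp (η : ℤˣ) (s : A g) : A g := sg ((nx η)^[2*g] s)

def BotW (η : ℤˣ) : ℕ → A g → List (A g)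
  | 0, _ => []
  | (i+1), s => blk (-η) (s - ((η:ℤ) : A g)) (2*g-1) ++ BotW η i (opp η s)

def TopW (η : ℤˣ) : ℕ → A g → List (A g)
  | 0, _ => []
  | (i+1), s => blk η (nx η s) (2*g-1) ++ TopW η i (opp η s)

@[simp] theorem BotW_len (η : ℤˣ) (i : ℕ) : ∀ s : A g, (BotW η i s).length = i * (2*g-1) := by
  induction i with
  | zero => intro s; simp [BotW]
  | succ i ih => intro s; simp [BotW, ih]; ring

@[simp] theorem TopW_len (η : ℤˣ) (i : ℕ) : ∀ s : A g, (TopW η i s).length = i * (2*g-1) := by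
  induction i with
  | zero => intro s; simp [TopW]
  | succ i ih => intro s; simp [TopW, ih]; ring

theorem BotW_add (η : ℤˣ) (i j : ℕ) : ∀ s : A g, BotW η (i+j) s = BotW η i s ++ BotW η j ((opp η)^[i] s) := by
  induction i with
  | zero => intro s; simp [BotW]
  | succ i ih => intro s; rw [show i+1+j = i+j+1 by ring]; simp [BotW, ih]

theorem TopW_add (η : ℤˣ) (i j : ℕ) : ∀ s : A g, TopW η (i+j) s = TopW η i s ++ TopW η j ((opp η)^[i] s) := by
  induction i with
  | zero => intro s; simp [TopW]
  | succ i ih => intro s; rw [show i+1+j = i+j+1 by ring]; simp [TopW, ih]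

theorem nxn_sg (η : ℤˣ) (s : A g) : (nx (-η))^[2*g] (sg s) = opp η s := by
  have h := nx_neg_iter η (2*g) ((nx η)^[2*g] s)
  rw [← Function.iterate_add_apply, show 2*g+2*g = 4*g by ring, nx_period] at h
  exact h

theorem opp_neg_sg (η : ℤˣ) (s : A g) : opp (-η) (sg s) = sg (opp η s) := by
  rw [opp, nxn_sg]

theorem opp_opp (η : ℤˣ) (s : A g) : opp (-η) (opp η s) = s := by
  conv_lhs => rw [opp.eq_1 η, opp_neg_sg, opp, sg_sg]
  rw [← Function.iterate_add_apply, show 2*g+2*g = 4*g by ring, nx_period]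

theorem opp_inj (η : ℤˣ) : Function.Injective (opp (g := g) η) :=
  Function.LeftInverse.injective (opp_opp η)

theorem nxn_sg1 (η : ℤˣ) (s : A g) : nx (-η) (sg s) = s - ((η:ℤ) : A g) := by
  simp [nx, sub_eq_add_neg]

theorem opp_eq (η : ℤˣ) (s : A g) : (nx (-η))^[2*g-1] (s - ((η:ℤ) : A g)) = opp η s := by
  rw [← nxn_sg1, ← Function.iterate_succ_apply]
  have := g2 (g := g)
  rw [show (2*g-1).succ = 2*g by omega, nxn_sg]

theorem nx_opp (η : ℤˣ) (s : A g) : nx (-η) (opp η s) = sg ((nx η)^[2*g-1] s) := by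
  have := g2 (g := g)
  rw [opp, show 2*g = (2*g-1)+1 by omega, Function.iterate_succ', Function.comp, nx_neg]
  simp

theorem TopW_eq (η : ℤˣ) (i : ℕ) : ∀ s : A g, TopW η i s = BotW (-η) i (sg s) := by
  induction i with
  | zero => intro s; rfl
  | succ i ih => intro s; simp [TopW, BotW, ih, opp_neg_sg, nx]

theorem blk_half (η : ℤˣ) (s : A g) : blk η s (2*g) = s :: blk η (nx η s) (2*g-1) := by
  have := g2 (g := g)
  conv_lhs => rw [show 2*g = (2*g-1)+1 by omega]
  rfl

theorem blk_half' (η : ℤˣ) (s : A g) : blk (-η) (s - ((η:ℤ) : A g)) (2*g) =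
    blk (-η) (s - ((η:ℤ) : A g)) (2*g-1) ++ [opp η s] := by
  have := g2 (g := g)
  conv_lhs => rw [show 2*g = (2*g-1)+1 by omega, blk_add, opp_eq]
  rfl

theorem sq1 (η : ℤˣ) (s : A g) : lam s * lw (blk η (nx η s) (2*g-1)) =
   lw (blk (-η) (s - ((η:ℤ) : A g)) (2*g-1)) * lam (opp η s) := by
  have h := swap_half η s
  rw [blk_half, blk_half'] at h
  simpa using h

theorem sqn (η : ℤˣ) (i : ℕ) : ∀ s : A g, lam s * lw (TopW η i s) = lw (BotW η i s) * lam ((opp η)^[i] s) := by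
  induction i with
  | zero => intro s; simp [TopW, BotW]
  | succ i ih =>
    intro s
    simp only [TopW, BotW, lw_append, Function.iterate_succ_apply]
    rw [← mul_assoc, sq1, mul_assoc, ih, mul_assoc]

theorem Bot_inv1 (η : ℤˣ) (s : A g) : lw (blk η (opp η s + ((η:ℤ) : A g)) (2*g-1)) =
   (lw (blk (-η) (s - ((η:ℤ) : A g)) (2*g-1)))⁻¹ := by
  have := g2 (g := g)
  obtain ⟨m, hm⟩ : ∃ m, 2*g-1 = m+1 := ⟨2*g-2, by omega⟩
  have h1 := opp_eq η s
  rw [hm] at *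
  rw [← lw_invw, invw, blk_inv_rev, neg_neg]
  rw [← h1, Function.iterate_succ', Function.comp, nx]
  simp

theorem Bot_inv (η : ℤˣ) (j : ℕ) : ∀ s : A g, lw (BotW (-η) j ((opp η)^[j] s)) = (lw (BotW η j s))⁻¹ := by
  induction j with
  | zero => intro s; simp [BotW]
  | succ j ih =>
    intro s
    rw [BotW_add η j 1, lw_append, mul_inv_rev, ← ih, Function.iterate_succ', Function.comp]
    simp only [BotW, lw_append, append_nil]
    rw [opp_opp, ← Bot_inv1]
    simp

theorem strip (M : ℕ) : ∀ (u v : List (A g)) (s s' : A g), v.length = M → u.length = M →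
    lam s * lw v = lw u * lam s' → Geo (s :: v) → Geo (v ++ [sg s']) →
    ∃ η i, v = TopW η i s ∧ u = BotW η i s ∧ s' = (opp η)^[i] s := by
  induction M using Nat.strong_induction_on with
  | _ M IH =>
  intro u v s s' hv hu e g1 g2'
  have hg2 := g2 (g := g)
  cases v with
  | nil =>
    have : u = [] := by simp at hv; rw [← hv] at hu; exact List.length_eq_zero_iff.mp hu
    subst this
    simp at e
    exact ⟨1, 0, rfl, rfl, (lam_inj e).symm⟩
  | cons c v' =>
  cases u with
  | nil => simp at hu hv; omega
  | cons b u' =>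
  have e1 : lw ((c::v') ++ [sg s']) = lw (sg s :: b :: u') := by
    rw [lw_append, lw_cons (sg s), lam_sg, eq_inv_mul_iff_mul_eq, ← mul_assoc, e]
    simp [mul_assoc]
  have g3 : Geo (sg s :: b :: u') := g2'.of_eq e1 (by simp at *; omega)
  have hcs : c ≠ sg s := by
    rintro rfl
    exact Geo.no_back (a := []) g1
  have d1 : Dsc (lw ((c::v') ++ [sg s'])) c := Geo.dsc (w := v' ++ [sg s']) g2'
  have d2 : Dsc (lw ((c::v') ++ [sg s'])) (sg s) := g3.dsc' e1
  obtain ⟨η, hc, y, y1, y2⟩ := factA' hcs d1 d2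
  have hc' : c = nx η s := by rw [nx, hc]; ring
  obtain ⟨r, hr⟩ := lemD (v := v' ++ [sg s']) y2 g2' y1
  have hl1 := g2'.len_eq y2 y1
  have e2 : lw (s :: c :: v') = lw (b :: (u' ++ [s'])) := by
    rw [lw_cons s, e, ← cons_append, lw_append]; simp
  have g4 : Geo (b :: (u' ++ [s'])) := g1.of_eq e2 (by simp at *; omega)
  have hsb : s ≠ b := by
    rintro rfl
    exact Geo.no_back (a := []) (p := sg s) (b := u') (by simpa using g3)
  obtain ⟨η2, hb, z, z1, z2⟩ := factA' hsb g1.dsc (g4.dsc' e2)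
  have hη : η2 = η := by
    by_contra hne
    have := neg_of_ne hne
    subst this
    rw [blk_half, cons_append] at z1 z2
    rw [lw_cons, lw_cons s, mul_right_inj] at z1
    obtain ⟨m, hm⟩ : ∃ m, 2*g-1 = m+1 := ⟨2*g-2, by omega⟩
    rw [hm, blk, cons_append] at z1 z2
    have d3 : Dsc (lw (c :: v')) (nx (-η) s) := z2.tail.dsc' z1
    have d4 := g1.tail.dsc
    conv at d4 => arg 2; rw [hc']
    unfold nx at d3 d4
    rw [Units.val_neg, Int.cast_neg, ← sub_eq_add_neg] at d3
    exact diff2 η d4 d3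
  subst hη
  have z1' : lw (b :: (u' ++ [s'])) = lw (blk (-η2) b (2*g) ++ z) := by
    rw [← e2, z1, lw_append, lw_append, swap_half, hb]
  have z2' : Geo (blk (-η2) b (2*g) ++ z) := g4.of_eq z1' (by
    have := g1.len_eq z2 z1
    simp at *; omega)
  obtain ⟨r', hr'⟩ := lemD z2' g4 z1'
  -- split v and u
  have splt : ∀ (x B : List (A g)) (t : A g) (r : List (A g)), x ++ [t] = B ++ r → B.length ≤ x.length → ∃ x', x = B ++ x' := by
    intro x B t r h hl
    have h1 : x = (x ++ [t]).take x.length := by simp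
    rw [h, take_append, take_of_length_le hl] at h1
    exact ⟨_, h1⟩
  obtain ⟨v'', hv''⟩ := splt (c::v') _ _ r hr (by simp at *; omega)
  obtain ⟨u'', hu''⟩ := splt (b::u') _ _ r' hr' (by simp at *; omega)
  conv_rhs at hv'' => rw [hc']
  conv_rhs at hu'' => rw [hb]
  have lv : v''.length + (2*g-1) = M := by rw [← hv, hv'']; simp [add_comm]
  have lu : u''.length + (2*g-1) = M := by rw [← hu, hu'']; simp [add_comm]
  have e3 : lam (opp η2 s) * lw v'' = lw u'' * lam s' := by
    rw [hv'', hu'', lw_append, lw_append, ← mul_assoc, sq1, mul_assoc, mul_assoc, mul_right_inj] at e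
    exact e
  have g5 : Geo (opp η2 s :: v'') := by
    rw [hv''] at g1
    have : Geo (blk (-η2) (s - ((η2:ℤ) : A g)) (2*g-1) ++ opp η2 s :: v'') := by
      refine g1.of_eq ?_ (by simp; omega)
      rw [lw_cons, lw_append, ← mul_assoc, sq1]; simp [mul_assoc]
    exact this.right
  have g6 : Geo (v'' ++ [sg s']) := by
    rw [hv'', append_assoc] at g2'
    exact g2'.right
  obtain ⟨η', i, f1, f2, f3⟩ := IH v''.length (by omega) u'' v'' (opp η2 s) s' rfl (by omega) e3 g5 g6
  cases i with
  | zero =>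
    refine ⟨η2, 1, ?_, ?_, f3⟩
    · rw [hv'', f1]; rfl
    · rw [hu'', f2]; rfl
  | succ i =>
    have hη : η' = η2 := by
      by_contra hne
      have := neg_of_ne hne
      subst this
      exfalso
      have hh := g1.tail
      obtain ⟨m, hm⟩ : ∃ m, 2*g-1 = m+1 := ⟨2*g-2, by omega⟩
      have ho := nx_opp η2 s
      rw [hv'', f1, TopW, hm, blk_add η2 m 1] at hh
      rw [hm] at ho
      simp only [blk, append_assoc, cons_append, nil_append] at hh
      rw [ho, Function.iterate_succ_apply] at hh
      exact hh.no_back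
    subst hη
    refine ⟨η', i+1+1, ?_, ?_, ?_⟩
    · rw [hv'', f1, ← TopW]
    · rw [hu'', f2, ← BotW]
    · rw [f3]; rfl

theorem chain (η : ℤˣ) (j : ℕ) : ∀ s : A g, Geo (sg s :: BotW η j s) := by
  have hg2 := g2 (g := g)
  induction j with
  | zero => intro s; exact lam_len _
  | succ j IH =>
    intro s
    set K := BotW η j (opp η s) with hK
    have gK := IH (opp η s)
    rw [← hK] at gK
    have e0 : sg s :: BotW η (j+1) s = blk (-η) (sg s) (2*g) ++ K := by
      rw [BotW, blk_half, nxn_sg1]; rfl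
    rw [e0]
    have key : ∀ r, r ≤ 2*g → Geo (blk (-η) ((nx (-η))^[2*g-r] (sg s)) r ++ K) := by
      intro r
      induction r with
      | zero => intro _; simpa [blk] using gK.tail
      | succ r ih =>
        intro hr
        have gw := ih (by omega)
        set a := (nx (-η))^[2*g-(r+1)] (sg s) with ha
        have ha' : (nx (-η))^[2*g-r] (sg s) = nx (-η) a := by
          rw [show 2*g-r = (2*g-(r+1))+1 by omega, Function.iterate_succ', Function.comp]
        rw [ha'] at gw
        rw [blk, cons_append]
        apply geo_cons_of_not_dsc gw
        intro hd
        rcases Nat.eq_zero_or_pos r with rfl | hrp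
        · simp only [blk, nil_append] at hd
          have hs1 : opp η s = sg a - ((η:ℤ) : A g) := by
            rw [← nxn_sg, show 2*g = (2*g-(0+1))+1 by omega, Function.iterate_succ', Function.comp, ← ha]
            simp [nx, sub_eq_add_neg]
          cases j with
          | zero =>
            simp only [hK, BotW, lw_nil, Dsc, len_one] at hd
            omega
          | succ j =>
            obtain ⟨m, hm⟩ : ∃ m, 2*g-1 = m+1 := ⟨2*g-2, by omega⟩
            have gK2 := gK.tail
            rw [BotW, hm, blk, cons_append] at hK
            rw [hK] at gK2 hd
            have d2 := gK2.dsc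
            have : sg a = opp η s + ((η:ℤ) : A g) := by rw [hs1]; ring
            rw [this] at hd
            exact diff2 η hd d2
        · obtain ⟨r', rfl⟩ : ∃ r', r = r'+1 := ⟨r-1, by omega⟩
          have d2 : Dsc (lw (blk (-η) (nx (-η) a) (r'+1) ++ K)) (nx (-η) a) := by
            have h := gw
            rw [blk, cons_append] at h
            exact h.dsc' rfl
          have hnx : nx (-η) a = sg a - ((η:ℤ) : A g) := by simp [nx, sub_eq_add_neg]
          have hne : nx (-η) a ≠ sg a := by
            intro h
            rw [hnx] at h
            have h0 : ((η:ℤ) : A g) = 0 := by linear_combination -h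
            refine small_ne (g := g) (z := (η:ℤ)) (by simp) ?_ ?_ h0 <;> rcases units_cases η with rfl | rfl <;> simp
          obtain ⟨η', h1, y, y1, y2⟩ := factA' hne d2 hd
          have hη : η' = -η := by
            by_contra hne'
            have := neg_of_ne hne'
            rw [neg_neg] at this; subst this
            rw [hnx] at h1
            have h0 : ((2 * (η':ℤ) : ℤ) : A g) = 0 := by push_cast; linear_combination h1
            refine small_ne (g := g) (z := 2 * (η':ℤ)) (by simp) ?_ ?_ h0 <;> rcases units_cases η' with rfl | rfl <;> simp
          subst hη
          rw [show blk (-η) (nx (-η) a) (2*g) = blk (-η) (nx (-η) a) (r'+1 + (2*g-(r'+1))) by congr 1; omega, blk_add _ (r'+1) (2*g-(r'+1)), append_assoc] at y1 y2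
          rw [lw_append, lw_append, mul_right_inj] at y1
          have hlast : (nx (-η))^[r'+1] (nx (-η) a) = opp η s := by
            rw [← ha', ← Function.iterate_add_apply, show r'+1 + (2*g-(r'+1)) = 2*g by omega, nxn_sg]
          obtain ⟨m, hm⟩ : ∃ m, 2*g-(r'+1) = m+1 := ⟨2*g-(r'+1)-1, by omega⟩
          rw [hlast, hm, show blk (-η) (opp η s) (m+1) = opp η s :: blk (-η) (nx (-η) (opp η s)) m from rfl, cons_append] at y1 y2
          have d3 := y2.right.dsc' y1
          have := not_dsc_of_geo gK
          rw [sg_sg] at this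
          exact this d3
    have := key (2*g) le_rfl
    simpa using this

theorem topGeo (η : ℤˣ) (j : ℕ) (s : A g) : Geo (s :: TopW η j s) := by
  have := chain (-η) j (sg s)
  rwa [← TopW_eq, sg_sg] at this

theorem botGeo (η : ℤˣ) (j : ℕ) (s : A g) : Geo (BotW η j s) := (chain η j s).tail

end SG

end

section
set_option linter.all false
namespace SG
open List CoxH CS
variable {g : ℕ} [hg : Fact (2 ≤ g)]

def WalkIn (E : Gamma g → A g → Prop) : Gamma g → List (A g) → Prop
  | _, [] => True
  | x, p :: w => E x p ∧ WalkIn E (x * lam p) w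

theorem WalkIn_append {E : Gamma g → A g → Prop} {v w : List (A g)} : ∀ {x : Gamma g},
    WalkIn E x (v ++ w) ↔ WalkIn E x v ∧ WalkIn E (x * lw v) w := by
  induction v with
  | nil => intro x; simp [WalkIn]
  | cons p v ih => intro x; simp [WalkIn, ih, mul_assoc, and_assoc]

theorem WalkIn_inv {E : Gamma g → A g → Prop} (hs : ∀ x p, E x p → E (x * lam p) (sg p)) {v : List (A g)} :
    ∀ {x : Gamma g}, WalkIn E x v → WalkIn E (x * lw v) (invw v) := by
  induction v with
  | nil => intro x _; simp [WalkIn, invw]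
  | cons p v ih =>
    intro x h
    have e : invw (p :: v) = invw v ++ [sg p] := by simp [invw]
    rw [e, WalkIn_append]
    have := ih h.2
    refine ⟨by simpa [mul_assoc] using this, ?_⟩
    refine ⟨?_, trivial⟩
    have h2 := hs _ _ h.1
    simpa [mul_assoc] using h2

theorem conv {E : Gamma g → A g → Prop}
    (hH : ∀ (η : ℤˣ) x p, WalkIn E x (blk η p (2*g)) → WalkIn E x (blk (-η) (p - ((η:ℤ) : A g)) (2*g)))
    (n : ℕ) : ∀ (w : List (A g)) (x : Gamma g) (v : List (A g)), w.length = n → WalkIn E x w → Geo v → lw v = lw w →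
      WalkIn E x v := by
  induction n using Nat.strong_induction_on with
  | _ n IH =>
  intro w x v hn hw hv e
  cases w with
  | nil =>
    have : v.length = 0 := by unfold Geo at hv; rw [← hv, e]; simp
    rw [List.length_eq_zero_iff.mp this]; trivial
  | cons s w' =>
    have IH' := IH w'.length (by simp at hn; omega) w' (x * lam s)
    rw [lw_cons] at e
    rcases len_lam_mul s (lw w') with h | h
    · cases v with
      | nil => unfold Geo at hv; rw [e, h] at hv; simp at hv
      | cons c v' =>
        by_cases hc : c = s
        · subst hc
          refine ⟨hw.1, IH' v' rfl hw.2 hv.tail ?_⟩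
          rw [lw_cons] at e; exact mul_left_cancel e
        · have d1 : Dsc (lw (c :: v')) s := by
            unfold Dsc; rw [e, inv_mul_cancel_left]; omega
          obtain ⟨η, h1, y, y1, y2⟩ := factA' (Ne.symm hc) d1 hv.dsc
          have y1' := y1
          have y2' := y2
          rw [blk_half, cons_append] at y1 y2
          have w1 : WalkIn E x (blk η s (2*g) ++ y) := by
            rw [blk_half, cons_append]
            refine ⟨hw.1, IH' _ rfl hw.2 y2.tail ?_⟩
            rw [e, lw_cons] at y1; exact mul_left_cancel y1.symm
          rw [WalkIn_append] at w1
          have w2 : WalkIn E x (blk (-η) c (2*g) ++ y) := by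
            rw [WalkIn_append]
            refine ⟨by rw [h1]; exact hH η x s w1.1, ?_⟩
            rw [h1, ← swap_half]; exact w1.2
          have y3 : lw (c :: v') = lw (blk (-η) c (2*g) ++ y) := by
            rw [y1', lw_append, lw_append, swap_half, h1]
          have hlen := hv.len_eq y2' y1'
          rw [blk_half, cons_append] at w2 y3
          refine ⟨w2.1, IH _ ?_ _ _ v' rfl w2.2 hv.tail ?_⟩
          · unfold Geo at hv
            rw [e, h] at hv
            have := len_le w'
            have := g2 (g := g)
            simp at hlen hn hv ⊢; omega
          · rw [lw_cons, lw_cons c] at y3; exact mul_left_cancel y3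
    · have g1 : Geo (sg s :: v) := by
        unfold Geo at *
        rw [lw_cons, lam_sg, e, inv_mul_cancel_left, length_cons, ← hv, e, h]
      have := (IH' (sg s :: v) rfl hw.2 g1 (by rw [lw_cons, lam_sg, e, inv_mul_cancel_left])).2
      simpa using this

/-! periodic lines -/

def seg (a : ℤ → A g) (j : ℤ) (n : ℕ) : List (A g) := (List.range n).map (fun k : ℕ => a (j + (k:ℤ)))

@[simp] theorem seg_len (a : ℤ → A g) (j : ℤ) (n : ℕ) : (seg a j n).length = n := by simp [seg]

theorem seg_add (a : ℤ → A g) (j : ℤ) (m n : ℕ) : seg a j (m+n) = seg a j m ++ seg a (j+m) n := by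
  unfold seg
  rw [List.range_add, map_append, map_map]
  congr 1
  apply map_congr_left
  intro k _
  simp [add_assoc]

theorem seg_one (a : ℤ → A g) (j : ℤ) : seg a j 1 = [a j] := by simp [seg]

theorem seg_cons (a : ℤ → A g) (j : ℤ) (n : ℕ) : seg a j (n+1) = a j :: seg a (j+1) n := by
  rw [add_comm, seg_add, seg_one]; rfl

theorem seg_snoc (a : ℤ → A g) (j : ℤ) (n : ℕ) : seg a j (n+1) = seg a j n ++ [a (j+n)] := by
  rw [seg_add, seg_one]

theorem seg_lw (a : ℤ → A g) (y : ℤ → Gamma g) (hy : ∀ j, y (j+1) = y j * lam (a j)) (n : ℕ) : ∀ j, y (j+n) = y j * lw (seg a j n) := by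
  induction n with
  | zero => intro j; simp [seg]
  | succ n ih => intro j; rw [seg_snoc, lw_append, ← mul_assoc, ← ih]; push_cast; rw [← add_assoc, hy]; simp

theorem seg_eq_blk {a : ℤ → A g} {η : ℤˣ} {j : ℤ} {n : ℕ} (h : ∀ k : ℕ, k + 1 < n → a (j + (k+1)) = nx η (a (j+k))) :
   seg a j n = blk η (a j) n := by
  induction n generalizing j with
  | zero => rfl
  | succ n ih =>
    rw [seg_cons, blk]
    cases n with
    | zero => rfl
    | succ n =>
      have h0 := h 0 (by omega)
      simp at h0
      rw [ih, h0]
      intro k hk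
      have := h (k+1) (by omega)
      push_cast at this
      rw [show j + 1 + (k+1) = j + (k+1+1 : ℤ) by ring, this]; congr 2; ring

theorem blk_get {a : ℤ → A g} {η : ℤˣ} {j : ℤ} {n : ℕ} {p : A g} (h : seg a j n = blk η p n) (k : ℕ) (hk : k < n) : a (j+k) = (nx η)^[k] p := by
  rw [blk_map, seg] at h
  have := List.map_inj_left.mp h k (by simpa using hk)
  exact this

theorem geoL {a : ℤ → A g} {y : ℤ → Gamma g} {t : ℕ} {γ : Gamma g} (hy : ∀ j, y (j+1) = y j * lam (a j))
    (hat : ∀ j, a (j+t) = a j) (hyt : ∀ j, y (j+t) = γ * y j) (ht : 1 ≤ t)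
    (hmin : ∀ x, t ≤ len (x⁻¹ * γ * x)) : ∀ n j, Geo (seg a j n) := by
  classical
  have hg2 := g2 (g := g)
  by_contra hcon
  push Not at hcon
  set N := Nat.find hcon with hN
  obtain ⟨j, hj⟩ := Nat.find_spec hcon
  have hlt : ∀ m j', m < N → Geo (seg a j' m) := by
    intro m j' hm
    have := Nat.find_min hcon hm
    push Not at this
    exact this j'
  rw [← hN] at hj
  clear_value N
  have gt : ∀ j', Geo (seg a j' t) := by
    intro j'
    unfold Geo
    apply le_antisymm (len_le _)
    have h1 := hmin (y j')
    have h2 := seg_lw a y hy t j'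
    rw [hyt] at h2
    rw [mul_assoc, h2, inv_mul_cancel_left] at h1
    simpa using h1
  have hNt : t < N := by
    by_contra h
    apply hj
    have := gt j
    rw [show t = N + (t-N) by omega, seg_add] at this
    exact this.left
  obtain ⟨M, rfl⟩ : ∃ M, N = M+1+1 := ⟨N-2, by omega⟩
  set s := a j with hs
  set v := seg a (j+1) M with hv
  set s' := sg (a (j + 1 + M)) with hs'
  have e1 : seg a j (M+1+1) = s :: (v ++ [sg s']) := by
    rw [seg_cons, seg_snoc, hs', sg_sg]
  have e2 : seg a j (M+1) = s :: v := seg_cons _ _ _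
  have e3 : seg a (j+1) (M+1) = v ++ [sg s'] := by rw [seg_snoc, hs', sg_sg]
  have g1 : Geo (s :: v) := e2 ▸ hlt _ _ (by omega)
  have g2' : Geo (v ++ [sg s']) := e3 ▸ hlt _ _ (by omega)
  rw [e1] at hj
  obtain ⟨u, hu, hul⟩ := exists_geo (lw (s :: (v ++ [sg s'])))
  have hul' : u.length = M := by
    rw [hul]
    have h1 := len_lam_mul s (lw (v ++ [sg s']))
    unfold Geo at g2' hj
    rw [← lw_cons] at h1
    simp only [length_cons, length_append, length_nil] at g2' hj
    have : v.length = M := by simp [hv]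
    omega
  have e4 : lam s * lw v = lw u * lam s' := by
    rw [hu]; simp [mul_assoc]
  obtain ⟨η, i, f1, f2, f3⟩ := strip M u v s s' (by simp [hv]) hul' e4 g1 g2'
  have hM : M = i * (2*g-1) := by rw [← hul', f2]; simp
  have hat0 : a (j+t) = s := hat j
  -- blocks
  have hblk : ∀ b, b < i → seg a (j+1+(b*(2*g-1) : ℕ)) (2*g-1) = blk η (nx η ((opp η)^[b] s)) (2*g-1) := by
    intro b hb
    obtain ⟨c, rfl⟩ : ∃ c, i = b + (c+1) := ⟨i-b-1, by omega⟩
    have h1 : M = b*(2*g-1) + ((2*g-1) + c*(2*g-1)) := by rw [hM]; ring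
    rw [hv, h1, seg_add, seg_add, TopW_add, TopW] at f1
    have f1' := (List.append_inj f1 (by simp)).2
    exact (List.append_inj f1' (by simp)).1
  have hget : ∀ b r : ℕ, b < i → r < 2*g-1 → a (j + ((1 + b*(2*g-1) + r : ℕ) : ℤ)) = (nx η)^[r+1] ((opp η)^[b] s) := by
    intro b r hb hr
    have := blk_get (hblk b hb) r hr
    rw [Function.iterate_succ_apply, ← this]
    congr 1; push_cast; ring
  have hlast : a (j + ((1 + i*(2*g-1) : ℕ) : ℤ)) = sg ((opp η)^[i] s) := by
    rw [← f3, hs', sg_sg, hM]; congr 1; push_cast; ring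
  have hfirst : ∀ k : ℕ, 0 < i → k ≤ 2*g-1 → a (j+k) = (nx η)^[k] s := by
    intro k hi hk
    cases k with
    | zero => simp [hs]
    | succ k =>
      have := hget 0 k hi (by omega)
      rw [show 1 + 0*(2*g-1) + k = k+1 by ring] at this; exact this
  have hlast' : 0 < i → a (j + ((1 + i*(2*g-1) : ℕ) : ℤ)) = nx η (a (j + ((i*(2*g-1) : ℕ) : ℤ))) := by
    intro hi
    obtain ⟨i', rfl⟩ : ∃ i', i = i'+1 := ⟨i-1, by omega⟩
    rw [hlast, Function.iterate_succ', Function.comp]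
    have := hget i' (2*g-2) (by omega) (by omega)
    rw [show (i'+1)*(2*g-1) = 1 + i'*(2*g-1) + (2*g-2) by rw [add_mul]; omega, this, opp, sg_sg]
    rw [← Function.iterate_succ_apply' (nx η)]; congr 2; omega
  rcases Nat.eq_zero_or_pos i with rfl | hi
  · -- i = 0
    have ht1 : t = 1 := by simp at hM; omega
    subst ht1
    simp at hlast hat0
    rw [hat0] at hlast
    exact sg_ne _ hlast.symm
  -- location of t
  obtain ⟨b, r, htb, hr1⟩ : ∃ b r, t = 1 + b*(2*g-1) + r ∧ r < 2*g-1 := by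
    refine ⟨(t-1) / (2*g-1), (t-1) % (2*g-1), ?_, Nat.mod_lt _ (by omega)⟩
    have := Nat.div_add_mod (t-1) (2*g-1)
    rw [mul_comm] at this; omega
  have hbi : b ≤ i := by
    have h1 : b * (2*g-1) ≤ i * (2*g-1) := by omega
    exact Nat.le_of_mul_le_mul_right h1 (by omega)
  by_cases hcase : 1 ≤ b ∧ b < i ∧ r = 0
  · obtain ⟨c1, c2, c3⟩ := hcase
    have h1 := hget b 0 c2 (by omega)
    rw [c3, add_zero] at htb
    rw [add_zero, ← htb, hat0] at h1
    simp only [Function.iterate_one, zero_add] at h1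
    have h2 := seg_lw a y hy t j
    have h3 : seg a j t = s :: TopW η b s := by
      rw [htb, add_comm, seg_cons]
      congr 1
      obtain ⟨c, rfl⟩ : ∃ c, i = b + c := ⟨i-b, by omega⟩
      have h1 : M = b*(2*g-1) + c*(2*g-1) := by rw [hM]; ring
      rw [hv, h1, seg_add, TopW_add] at f1
      exact (List.append_inj f1 (by simp)).1
    rw [hyt, h3, lw_cons, sqn] at h2
    have h4 : lam ((opp η)^[b] s) * lam (s - ((η:ℤ) : A g)) = 1 := by
      have : s - ((η:ℤ) : A g) = sg ((opp η)^[b] s) := by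
        conv_lhs => rw [h1]
        simp [nx]
      rw [this]; simp
    have h5 := hmin (y j * lam (s - ((η:ℤ) : A g)))
    obtain ⟨b', rfl⟩ : ∃ b', b = b'+1 := ⟨b-1, by omega⟩
    obtain ⟨m, hm⟩ : ∃ m, 2*g-1 = m+1 := ⟨2*g-2, by omega⟩
    obtain ⟨R, hR⟩ : ∃ R, BotW η (b'+1) s = (s - ((η:ℤ) : A g)) :: R := by
      rw [BotW, hm, blk]; exact ⟨_, rfl⟩
    have h6 : (y j * lam (s - ((η:ℤ) : A g)))⁻¹ * γ * (y j * lam (s - ((η:ℤ) : A g))) = lw R := by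
      have : γ * (y j * lam (s - ((η:ℤ) : A g))) = y j * lw (BotW η (b'+1) s) := by
        rw [← mul_assoc, h2, mul_assoc, mul_assoc, h4, mul_one]
      rw [mul_assoc, this, hR, lw_cons]; group
    rw [h6] at h5
    have h7 := len_le R
    have h8 := congrArg List.length hR
    simp at h8
    omega
  · have hnx : a (j+t) = nx η (a (j + (t-1 : ℕ))) := by
      rcases lt_or_eq_of_le hbi with hbl | hbe
      · rcases Nat.eq_zero_or_pos r with hr0 | hrp
        · have hb0 : b = 0 := by by_contra h; exact hcase ⟨by omega, hbl, hr0⟩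
          rw [hb0, hr0] at htb
          simp at htb
          rw [htb]
          have := hfirst 1 hi (by omega)
          simpa [hs] using this
        · have h1 := hget b r hbl hr1
          have h2 := hget b (r-1) hbl (by omega)
          rw [← htb] at h1
          rw [show 1 + b*(2*g-1) + (r-1) = t-1 by omega, show r - 1 + 1 = r by omega] at h2
          rw [h1, h2, Function.iterate_succ_apply']
      · have hr0 : r = 0 := by rw [hbe] at htb; omega
        have := hlast' hi
        rw [hr0, hbe, add_zero] at htb
        rw [← htb, show i*(2*g-1) = t-1 by omega] at this
        exact this
    have hprev : ((j + (t-1 : ℕ)) + 1 : ℤ) = j + t := by push_cast [ht]; ring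
    by_cases hi1 : i = 1
    · subst hi1
      have : a (j+t) = (nx η)^[t] s := by
        rcases Nat.lt_or_ge t (2*g) with h | h
        · exact hfirst t hi (by omega)
        · have ht2 : t = 2*g-1+1 := by simp at hM; omega
          rw [hnx, hfirst (t-1) hi (by omega), ← Function.iterate_succ_apply' (nx η)]
          congr 2; omega
      rw [hat0] at this
      have h4 := Nat.le_of_dvd ht (nx_free η s this.symm)
      simp at hM; omega
    · have : seg a (j + (t-1:ℕ)) (2*g+1) = blk η (a (j + (t-1 : ℕ))) (2*g+1) := by
        apply seg_eq_blk
        intro k hk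
        cases k with
        | zero =>
          push_cast [ht]
          have e : j + (t - 1 : ℤ) + 1 = j + t := by ring
          rw [e, hnx]; push_cast [ht]; rw [add_zero]
        | succ k =>
          have e : (j + (t-1 : ℕ) : ℤ) + ((k+1:ℕ)+1) = (j + (k+1:ℕ)) + t := by push_cast [ht]; ring
          have e' : (j + (t-1 : ℕ) : ℤ) + (k+1:ℕ) = (j + k) + t := by push_cast [ht]; ring
          rw [e, e', hat, hat, hfirst _ hi (by omega), hfirst _ hi (by omega), Function.iterate_succ_apply']
      apply long_not_geo η (a (j + (t-1 : ℕ)))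
      rw [← this]
      apply hlt
      have : 2 * (2*g-1) ≤ i * (2*g-1) := Nat.mul_le_mul_right _ (by omega)
      omega

end SG

end

section
set_option linter.all false
namespace SG
open List CoxH CS
variable {g : ℕ} [hg : Fact (2 ≤ g)]

noncomputable def tau (η : ℤˣ) (e : Gamma g × A g) : Gamma g × A g := (e.1 * lw (BotW η 1 e.2), opp η e.2)

theorem tau_iter (η : ℤˣ) (i : ℕ) (e : Gamma g × A g) :
    (tau η)^[i] e = (e.1 * lw (BotW η i e.2), (opp η)^[i] e.2) := by
  induction i with
  | zero => simp [BotW]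
  | succ i ih =>
    rw [Function.iterate_succ_apply', ih, tau, BotW_add η i 1, lw_append, mul_assoc, Function.iterate_succ_apply']

theorem tau_tau (η : ℤˣ) (e : Gamma g × A g) : tau (-η) (tau η e) = e := by
  unfold tau
  have := Bot_inv η 1 e.2
  simp only [Function.iterate_one] at this
  simp [this, opp_opp]

noncomputable def TT : Equiv.Perm (Gamma g × A g) where
  toFun := tau 1
  invFun := tau (-1)
  left_inv := tau_tau 1
  right_inv := by
    intro e
    have := tau_tau (-1) e
    rwa [neg_neg] at this

theorem TT_pow (n : ℕ) (e : Gamma g × A g) : (TT ^ n) e = (tau 1)^[n] e := by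
  rw [← Equiv.Perm.iterate_eq_pow]; rfl

theorem TT_inv_pow (n : ℕ) (e : Gamma g × A g) : ((TT⁻¹) ^ n) e = (tau (-1))^[n] e := by
  rw [← Equiv.Perm.iterate_eq_pow]; rfl

theorem TT_zpow (n : ℤ) (e : Gamma g × A g) : ∃ η : ℤˣ, (η = 1 ↔ 0 ≤ n) ∧ (TT ^ n) e = (tau η)^[n.natAbs] e := by
  rcases Int.natAbs_eq n with h | h
  · refine ⟨1, by simp; omega, ?_⟩
    conv_lhs => rw [h, zpow_natCast, TT_pow]
  · by_cases h0 : n = 0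
    · subst h0; exact ⟨1, by simp, by simp⟩
    refine ⟨-1, by simp; omega, ?_⟩
    conv_lhs => rw [h, zpow_neg, zpow_natCast, ← inv_pow, TT_inv_pow]

theorem tau_zpow (η : ℤˣ) (i : ℕ) (e : Gamma g × A g) : ∃ n : ℤ, (tau η)^[i] e = (TT ^ n) e := by
  rcases units_cases η with rfl | rfl
  · exact ⟨i, by rw [zpow_natCast, TT_pow]⟩
  · exact ⟨-i, by rw [zpow_neg, zpow_natCast, ← inv_pow, TT_inv_pow]⟩

/-- left translation of edges -/
def tl (γ : Gamma g) (e : Gamma g × A g) : Gamma g × A g := (γ * e.1, e.2)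

theorem TT_tl (γ : Gamma g) (n : ℤ) (e : Gamma g × A g) : (TT ^ n) (tl γ e) = tl γ ((TT ^ n) e) := by
  obtain ⟨η, h1, h2⟩ := TT_zpow n e
  obtain ⟨η', h1', h2'⟩ := TT_zpow n (tl γ e)
  have : η = η' := by
    rcases units_cases η with rfl | rfl <;> rcases units_cases η' with rfl | rfl <;> simp_all <;> omega
  subst this
  rw [h2, h2', tau_iter, tau_iter]
  simp [tl, mul_assoc]

/-- half space -/
def HS (e : Gamma g × A g) (y : Gamma g) : Prop := len ((e.1 * lam e.2)⁻¹ * y) < len (e.1⁻¹ * y)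

theorem HS_not {e : Gamma g × A g} {y : Gamma g} (h : ¬ HS e y) : len ((e.1 * lam e.2)⁻¹ * y) = len (e.1⁻¹ * y) + 1 := by
  unfold HS at h
  have := len_lam_mul (sg e.2) (e.1⁻¹ * y)
  rw [lam_sg, ← mul_assoc, ← mul_inv_rev] at this
  omega

theorem HS_yes {e : Gamma g × A g} {y : Gamma g} (h : HS e y) : len (e.1⁻¹ * y) = len ((e.1 * lam e.2)⁻¹ * y) + 1 := by
  unfold HS at h
  have := len_lam_mul (sg e.2) (e.1⁻¹ * y)
  rw [lam_sg, ← mul_assoc, ← mul_inv_rev] at this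
  omega

theorem len_mul_lam (x : Gamma g) (q : A g) : len (x * lam q) ≤ len x + 1 := by
  have := len_mul x (lam q)
  have h2 := lam_len q
  unfold Geo at h2
  simp at h2
  omega

theorem len_mul_lam' (x : Gamma g) (q : A g) : len x ≤ len (x * lam q) + 1 := by
  have := len_mul_lam (x * lam q) (sg q)
  simpa using this

theorem crossing {e : Gamma g × A g} {y : Gamma g} {q : A g} (h1 : ¬ HS e y) (h2 : HS e (y * lam q)) :
    ∃ n : ℤ, (y, q) = (TT ^ n) e := by
  obtain ⟨z, p⟩ := e
  have h1' := HS_not h1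
  have h2' := HS_yes h2
  simp only at h1' h2'
  have a1 := len_mul_lam' ((z * lam p)⁻¹ * y) q
  have a2 := len_mul_lam (z⁻¹ * y) q
  rw [mul_assoc] at a1 a2
  obtain ⟨v, hv, hvl⟩ := exists_geo ((z * lam p)⁻¹ * (y * lam q))
  obtain ⟨u, hu, hul⟩ := exists_geo (z⁻¹ * y)
  have ev : lw (p :: v) = z⁻¹ * (y * lam q) := by rw [lw_cons, hv]; group
  have ew : lw (v ++ [sg q]) = (z * lam p)⁻¹ * y := by rw [lw_append, hv]; simp [mul_assoc]
  obtain ⟨η, i, f1, f2, f3⟩ := strip u.length u v p q (by omega) rfl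
    (by rw [← lw_cons, ev, hu, mul_assoc])
    (by unfold Geo; rw [ev, length_cons]; omega)
    (by unfold Geo; rw [ew, length_append]; simp only [length_cons, length_nil]; omega)
  obtain ⟨n, hn⟩ := tau_zpow η i (z, p)
  refine ⟨n, ?_⟩
  rw [← hn, tau_iter, ← f2, hu, ← f3]
  simp

section line
variable {a : ℤ → A g} {y : ℤ → Gamma g}

theorem line_len (hy : ∀ j, y (j+1) = y j * lam (a j)) (hgeo : ∀ n j, Geo (seg a j n)) (i : ℤ) (n : ℕ) :
    len ((y i)⁻¹ * y (i+n)) = n := by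
  rw [seg_lw a y hy, inv_mul_cancel_left]
  have := hgeo n i
  unfold Geo at this; simpa using this

theorem line_HS (hy : ∀ j, y (j+1) = y j * lam (a j)) (hgeo : ∀ n j, Geo (seg a j n)) {e : Gamma g × A g}
    (h0 : HS e (y 0)) : (∀ n : ℕ, HS e (y n)) ∨ (∀ n : ℕ, HS e (y (-n))) := by
  classical
  by_contra hcon
  push Not at hcon
  obtain ⟨hp, hm⟩ := hcon
  -- first exits
  obtain ⟨k, hk1, hk2⟩ : ∃ k : ℕ, HS e (y k) ∧ ¬ HS e (y (k+1)) := by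
    by_contra h
    push Not at h
    obtain ⟨n, hn⟩ := hp
    apply hn
    clear hn
    induction n with
    | zero => simpa using h0
    | succ n ih => push_cast; exact h n ih
  obtain ⟨i, hi1, hi2⟩ : ∃ i : ℕ, HS e (y (-i)) ∧ ¬ HS e (y (-i-1)) := by
    by_contra h
    push Not at h
    obtain ⟨n, hn⟩ := hm
    apply hn
    clear hn
    induction n with
    | zero => simpa using h0
    | succ n ih => push_cast; rw [neg_add, ← sub_eq_add_neg]; exact h n ih
  set i' : ℤ := -i-1 with hi'
  have hyi : y (-i) = y i' * lam (a i') := by rw [← hy]; congr 1; omega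
  rw [hyi] at hi1
  obtain ⟨n, hn⟩ := crossing hi2 hi1
  have hyk : y k = y (k+1) * lam (sg (a k)) := by rw [hy]; simp
  have hk1' := hk1
  rw [hyk] at hk1
  obtain ⟨n', hn'⟩ := crossing hk2 hk1
  have hTT : (y (k+1), sg (a k)) = (TT ^ (n'-n)) (y i', a i') := by
    rw [hn, ← Equiv.Perm.mul_apply, ← zpow_add, hn']; congr 2; ring
  obtain ⟨η, -, hη⟩ := TT_zpow (n'-n) (y i', a i')
  rw [hη, tau_iter] at hTT
  set m := (n'-n).natAbs
  obtain ⟨q1, q2⟩ := Prod.mk.inj hTT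
  simp only at q1 q2
  -- distances
  have l1 : len ((y i')⁻¹ * y (k+1)) = k + i + 2 := by
    have := line_len hy hgeo i' (k+i+2)
    rw [show i' + ((k+i+2 : ℕ) : ℤ) = k+1 by push_cast; omega] at this
    exact this
  have l2 : len ((y (-i))⁻¹ * y k) = k + i := by
    have := line_len hy hgeo (-i) (k+i)
    rw [show (-i : ℤ) + ((k+i : ℕ) : ℤ) = k by push_cast; omega] at this
    exact this
  rw [q1, inv_mul_cancel_left] at l1
  have e2 : (y (-i))⁻¹ * y k = lw (TopW η m (a i')) := by
    rw [hyk, hyi, q2, q1, mul_assoc, ← sqn]; group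
  rw [e2] at l2
  have g1 := (topGeo η m (a i')).tail
  unfold Geo at g1
  rw [l2] at g1
  have := len_le (BotW η m (a i'))
  rw [l1] at this
  simp at this g1
  omega

theorem y_zpow {γ : Gamma g} {t : ℕ} (hyt : ∀ j, y (j+t) = γ * y j) (m : ℤ) (j : ℤ) : y (j + m*t) = γ^m * y j := by
  induction m using Int.induction_on with
  | zero => simp
  | succ n ih =>
    rw [show j + ((n:ℤ)+1)*t = j + n*t + t by ring, hyt, ih, add_comm (n:ℤ), zpow_one_add, mul_assoc]
  | pred n ih =>
    have h := hyt (j + (-(n:ℤ)-1)*t)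
    rw [show j + (-(n:ℤ)-1)*t + t = j + -n*t by ring, ih] at h
    rw [← inv_mul_eq_iff_eq_mul] at h
    rw [← h, sub_eq_add_neg, add_comm, zpow_add, zpow_neg_one, mul_assoc]
end line

def Rch (E : Gamma g → A g → Prop) (z0 z : Gamma g) : Prop := ∃ w, WalkIn E z0 w ∧ z = z0 * lw w

theorem WalkIn_tl {E : Gamma g → A g → Prop} {γ : Gamma g} (h : ∀ x p, E x p → E (γ * x) p) {w : List (A g)} :
    ∀ {x}, WalkIn E x w → WalkIn E (γ * x) w := by
  induction w with
  | nil => intro x _; trivial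
  | cons p w ih => intro x hx; exact ⟨h _ _ hx.1, by have := ih hx.2; rwa [← mul_assoc] at this⟩

theorem Rch_zpow {E : Gamma g → A g → Prop} {γ z0 : Gamma g} (hs : ∀ x p, E x p → E (x * lam p) (sg p))
    (h1 : ∀ x p, E x p → E (γ * x) p) (h2 : ∀ x p, E x p → E (γ⁻¹ * x) p) {wc : List (A g)}
    (hwc : WalkIn E z0 wc) (hγ : γ * z0 = z0 * lw wc) (m : ℤ) : ∀ z, Rch E z0 z → Rch E z0 (γ^m * z) := by
  have s1 : ∀ z, Rch E z0 z → Rch E z0 (γ * z) := by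
    rintro z ⟨w, hw, rfl⟩
    refine ⟨wc ++ w, ?_, ?_⟩
    · rw [WalkIn_append]; exact ⟨hwc, hγ ▸ WalkIn_tl h1 hw⟩
    · rw [← mul_assoc, hγ]; simp [mul_assoc]
  have s2 : ∀ z, Rch E z0 z → Rch E z0 (γ⁻¹ * z) := by
    rintro z ⟨w, hw, rfl⟩
    have e : z0 = γ⁻¹ * z0 * lw wc := by rw [mul_assoc, ← hγ]; simp
    refine ⟨invw wc ++ w, ?_, ?_⟩
    · rw [WalkIn_append]
      constructor
      · have := WalkIn_inv hs (WalkIn_tl h2 hwc)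
        rwa [← e] at this
      · have := WalkIn_tl h2 hw
        have e' : γ⁻¹ * z0 = z0 * lw (invw wc) := by
          rw [lw_invw]; exact eq_mul_inv_of_mul_eq e.symm
        rwa [← e']
    · have e' : γ⁻¹ * z0 = z0 * lw (invw wc) := by
        rw [lw_invw]; exact eq_mul_inv_of_mul_eq e.symm
      rw [← mul_assoc, e']; simp [mul_assoc]
  induction m using Int.induction_on with
  | zero => intro z hz; simpa using hz
  | succ n ih => intro z hz; rw [add_comm, zpow_one_add, mul_assoc]; exact s1 _ (ih _ hz)
  | pred n ih => intro z hz; rw [sub_eq_add_neg, add_comm, zpow_add, zpow_neg_one, mul_assoc]; exact s2 _ (ih _ hz)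

theorem Rch_conv {E : Gamma g → A g → Prop} (hs : ∀ x p, E x p → E (x * lam p) (sg p))
    (hH : ∀ (η : ℤˣ) x p, WalkIn E x (blk η p (2*g)) → WalkIn E x (blk (-η) (p - ((η:ℤ) : A g)) (2*g)))
    {z0 z : Gamma g} {v : List (A g)} (h1 : Rch E z0 z) (h2 : Rch E z0 (z * lw v)) (hv : Geo v) : WalkIn E z v := by
  obtain ⟨w1, a1, b1⟩ := h1
  obtain ⟨w2, a2, b2⟩ := h2
  refine conv hH _ (invw w1 ++ w2) z v rfl ?_ hv ?_
  · rw [WalkIn_append]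
    constructor
    · rw [b1]; exact WalkIn_inv hs a1
    · rw [lw_invw, b1]; simpa using a2
  · rw [lw_append, lw_invw]
    rw [b1, mul_assoc, mul_right_inj] at b2
    rw [← b2]; simp

theorem mainAbs {E : Gamma g → A g → Prop} (hs : ∀ x p, E x p → E (x * lam p) (sg p))
    (hH : ∀ (η : ℤˣ) x p, WalkIn E x (blk η p (2*g)) → WalkIn E x (blk (-η) (p - ((η:ℤ) : A g)) (2*g)))
    {a : ℤ → A g} {y : ℤ → Gamma g} {t : ℕ} {γ : Gamma g} (hy : ∀ j, y (j+1) = y j * lam (a j))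
    (hat : ∀ j, a (j+t) = a j) (hyt : ∀ j, y (j+t) = γ * y j) (ht : 1 ≤ t)
    (hmin : ∀ x, t ≤ len (x⁻¹ * γ * x))
    (hE1 : ∀ x p, E x p → E (γ * x) p) (hE2 : ∀ x p, E x p → E (γ⁻¹ * x) p)
    {z0 : Gamma g} {wc : List (A g)} (hwc : WalkIn E z0 wc) (hγ : γ * z0 = z0 * lw wc)
    (hNC : ∀ (z : Gamma g) (p : A g) (j : ℕ) (k : ℤ), 0 < j → γ^k * z = z * lw (BotW (-1) j p) →
      (opp (-1))^[j] p = p → WalkIn E z (BotW (-1) j p) →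
      (∀ b, b < j → ¬ E (z * lw (BotW (-1) b p)) ((opp (-1))^[b] p)) → False) :
    ∀ j, E (y j) (a j) := by
  classical
  have hg2 := g2 (g := g)
  have hgeo := geoL hy hat hyt ht hmin
  have hZ := fun m => Rch_zpow hs hE1 hE2 hwc hγ m
  by_cases hex : ∃ j, Rch E z0 (y j)
  · obtain ⟨j, hj⟩ := hex
    intro i
    set m := (i - j) / t with hm
    set r := ((i - j) % t).toNat with hr
    have hr0 : 0 ≤ (i-j) % t := Int.emod_nonneg _ (by omega)
    have hrt : (i-j) % t < t := Int.emod_lt_of_pos _ (by omega)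
    have hi : i = (j + m * t) + r := by
      have := Int.mul_ediv_add_emod (i-j) t
      rw [hr, Int.toNat_of_nonneg hr0, hm, mul_comm]; omega
    have z1 : Rch E z0 (y (j + m*t)) := by rw [y_zpow hyt]; exact hZ m _ hj
    have z2 : Rch E z0 (y (j + m*t) * lw (seg a (j+m*t) t)) := by
      rw [← seg_lw a y hy, hyt]
      have := hZ 1 _ z1
      rwa [zpow_one] at this
    have w := Rch_conv hs hH z1 z2 (hgeo _ _)
    have hsg : seg a (j+m*t) t = seg a (j+m*t) (r + ((t - r - 1) + 1)) := by congr 1; omega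
    rw [hsg, seg_add, WalkIn_append, seg_cons] at w
    have := w.2.1
    rw [← seg_lw a y hy, ← hi] at this
    exact this
  exfalso
  push Not at hex
  -- closest point
  have hne : ∃ n, ∃ z, Rch E z0 z ∧ len (z⁻¹ * y 0) = n := ⟨_, z0, ⟨[], trivial, by simp⟩, rfl⟩
  obtain ⟨z, hz, hzl⟩ := Nat.find_spec hne
  have hzmin : ∀ z', Rch E z0 z' → len (z⁻¹ * y 0) ≤ len (z'⁻¹ * y 0) := by
    intro z' hz'
    rw [hzl]; exact Nat.find_min' hne ⟨z', hz', rfl⟩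
  obtain ⟨w, hw, hwl⟩ := exists_geo (z⁻¹ * y 0)
  have hwg : Geo w := by unfold Geo; rw [hw, hwl]
  cases w with
  | nil =>
    apply hex 0
    have : y 0 = z := by simp at hw; exact (inv_mul_eq_one.mp hw.symm).symm
    rw [this]; exact hz
  | cons p v =>
  have hyz : y 0 = z * lw (p :: v) := by rw [hw]; simp
  have hEzp : ¬ E z p := by
    intro hE
    have h1 : Rch E z0 (z * lam p) := by
      obtain ⟨w1, a1, b1⟩ := hz
      refine ⟨w1 ++ [p], ?_, by rw [b1]; simp [mul_assoc]⟩
      rw [WalkIn_append, ← b1]; exact ⟨a1, hE, trivial⟩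
    have h2 := hzmin _ h1
    rw [← hw, hyz, lw_cons, mul_inv_rev, mul_assoc, inv_mul_cancel_left, inv_mul_cancel_left, ← lw_cons] at h2
    have h3 := hwg.tail
    unfold Geo at hwg h3
    rw [hwg, h3] at h2
    simp at h2
  set e : Gamma g × A g := (z, p) with he
  have hH0 : HS e (y 0) := by
    unfold HS
    simp only [he]
    rw [hyz, inv_mul_cancel_left, lw_cons, mul_inv_rev, mul_assoc, inv_mul_cancel_left, inv_mul_cancel_left, ← lw_cons]
    have h3 := hwg.tail
    unfold Geo at hwg h3
    rw [hwg, h3]; simp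
  have hZH : ∀ x, Rch E z0 x → ¬ HS e x := by
    intro x hx hxH
    have h1 := HS_yes hxH
    simp only [he] at h1
    obtain ⟨v', hv', hvl'⟩ := exists_geo ((z * lam p)⁻¹ * x)
    have e1 : lw (p :: v') = z⁻¹ * x := by rw [lw_cons, hv']; group
    have g1 : Geo (p :: v') := by unfold Geo; rw [e1, length_cons]; omega
    have := Rch_conv hs hH hz (v := p :: v') (by rw [e1]; simpa using hx) g1
    exact hEzp this.1
  -- translates
  obtain ⟨σ, hσ0, hσ⟩ : ∃ σ : ℤ, σ ≠ 0 ∧ ∀ n : ℕ, HS e (γ^(σ*n) * y 0) := by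
    rcases line_HS hy hgeo hH0 with h | h
    · refine ⟨1, one_ne_zero, fun n => ?_⟩
      have := h (n*t)
      rw [show ((n*t : ℕ) : ℤ) = 0 + n*t by push_cast; ring, y_zpow hyt] at this
      simpa using this
    · refine ⟨-1, by norm_num, fun n => ?_⟩
      have := h (n*t)
      rw [show -((n*t : ℕ) : ℤ) = 0 + (-1*n)*t by push_cast; ring, y_zpow hyt] at this
      exact this
  -- crossing for every n
  have hcr : ∀ n : ℕ, ∃ i : Fin (p::v).length, ∃ m : ℤ,
      tl (γ^(σ*n)) (z * lw ((p::v).take i), (p::v)[i]) = (TT ^ m) e := by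
    intro n
    have h0 : ¬ HS e (γ^(σ*n) * (z * lw ((p::v).take 0))) := by
      simp only [take_zero, lw_nil, mul_one]
      exact hZH _ (hZ _ _ hz)
    have h1 : HS e (γ^(σ*n) * (z * lw ((p::v).take (p::v).length))) := by
      rw [take_length, ← hyz]; exact hσ n
    obtain ⟨i, hi, hi1, hi2⟩ : ∃ i, i < (p::v).length ∧ ¬ HS e (γ^(σ*n) * (z * lw ((p::v).take i))) ∧
       HS e (γ^(σ*n) * (z * lw ((p::v).take (i+1)))) := by
      by_contra hc
      push Not at hc
      have : ∀ i, i ≤ (p::v).length → ¬ HS e (γ^(σ*n) * (z * lw ((p::v).take i))) := by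
        intro i
        induction i with
        | zero => intro _; exact h0
        | succ i ih => intro hi; exact hc i (by omega) (ih (by omega))
      exact this _ le_rfl h1
    have hstep : γ^(σ*n) * (z * lw ((p::v).take (i+1))) = γ^(σ*n) * (z * lw ((p::v).take i)) * lam ((p::v)[i]) := by
      rw [take_succ_eq_append_getElem hi, lw_append]; simp [mul_assoc]
    rw [hstep] at hi2
    obtain ⟨m, hm⟩ := crossing hi1 hi2
    exact ⟨⟨i, hi⟩, m, hm⟩
  choose f m hfm using hcr
  obtain ⟨n, n', hnn, hf⟩ := Finite.exists_ne_map_eq_of_infinite f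
  have h1 := hfm n
  have h2 := hfm n'
  rw [hf] at h1
  have h3 : tl (γ^(σ*n' - σ*n)) e = (TT ^ (m n' - m n)) e := by
    have h4 : tl (γ^(σ*n' - σ*n)) ((TT ^ (m n)) e) = (TT ^ (m n')) e := by
      rw [← h1, ← h2]
      simp only [tl]
      rw [← mul_assoc, ← zpow_add]; simp
    rw [← TT_tl] at h4
    have h5 : tl (γ^(σ*n' - σ*n)) e = (TT ^ (m n))⁻¹ ((TT ^ (m n')) e) := by
      rw [← h4]; simp
    rw [h5, ← Equiv.Perm.mul_apply, ← zpow_neg, ← zpow_add]; congr 2; ring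
  set K := σ*n' - σ*n with hK
  have hK0 : K ≠ 0 := by
    rw [hK, ← mul_sub]
    apply mul_ne_zero hσ0
    intro h; apply hnn; omega
  have hinf : ∀ k : ℤ, k ≠ 0 → γ^k ≠ 1 := by
    have hN : ∀ k : ℕ, k ≠ 0 → γ^(k:ℤ) ≠ 1 := by
      intro k hk h
      have h6 := y_zpow hyt (k:ℤ) 0
      rw [h, one_mul] at h6
      have h7 := line_len hy hgeo 0 (k*t)
      push_cast at h7
      rw [h6] at h7
      simp at h7; omega
    intro k hk h
    rcases Int.natAbs_eq k with h' | h'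
    · exact hN k.natAbs (by omega) (by rw [← h']; exact h)
    · apply hN k.natAbs (by omega)
      rw [h', zpow_neg, inv_eq_one] at h; exact h
  have hJ : ∃ (k : ℤ) (j : ℤ), j < 0 ∧ tl (γ^k) e = (TT ^ j) e := by
    rcases lt_trichotomy (m n' - m n) 0 with h | h | h
    · exact ⟨K, _, h, h3⟩
    · exfalso
      rw [h, zpow_zero] at h3
      have := congrArg Prod.fst h3
      simp [tl, he] at this
      exact hinf K hK0 this
    · refine ⟨-K, -(m n' - m n), by omega, ?_⟩
      have h5 := congrArg (fun x => tl (γ^(-K)) ((TT ^ (-(m n' - m n))) x)) h3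
      beta_reduce at h5
      rw [TT_tl] at h5
      have e1 : tl (γ^(-K)) (tl (γ^K) ((TT ^ (-(m n' - m n))) e)) = (TT ^ (-(m n' - m n))) e := by
        simp [tl]
      rw [e1] at h5
      rw [h5, ← Equiv.Perm.mul_apply, ← zpow_add, neg_add_cancel]; rfl
  obtain ⟨k, j, hj, hkj⟩ := hJ
  obtain ⟨η, hη, hτ⟩ := TT_zpow j e
  have hη' : η = -1 := by
    rcases units_cases η with rfl | rfl
    · simp at hη; omega
    · rfl
  subst hη'
  rw [hτ, tau_iter] at hkj
  set J := j.natAbs with hJ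
  obtain ⟨k1, k2⟩ := Prod.mk.inj hkj
  change γ^k * z = z * lw (BotW (-1) J p) at k1
  change p = _ at k2
  have hW : WalkIn E z (BotW (-1) J p) := by
    refine Rch_conv hs hH hz ?_ (botGeo _ _ _)
    rw [← k1]; exact hZ _ _ hz
  refine hNC z p J k (by omega) k1 k2.symm hW ?_
  intro b
  induction b with
  | zero => intro _; simpa [BotW] using hEzp
  | succ b ih =>
    intro hb hE
    apply ih (by omega)
    set zb := z * lw (BotW (-1) b p) with hzb
    set pb := (opp (-1))^[b] p with hpb
    have hsp : BotW (-1) J p = BotW (-1) b p ++ (BotW (-1) 1 pb ++ BotW (-1) (J-b-1) (opp (-1) pb)) := by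
      rw [hpb, ← Function.iterate_succ_apply' (opp (-1)), ← append_assoc, ← BotW_add, ← BotW_add]
      congr 1; omega
    rw [hsp, WalkIn_append, WalkIn_append] at hW
    have hb1 := hW.2.1
    have hsw := hH 1 zb (pb - (((-1:ℤˣ):ℤ) : A g)) (by
      have := blk_half' (-1 : ℤˣ) pb
      rw [neg_neg] at this
      rw [this, WalkIn_append]
      simp only [BotW, append_nil, neg_neg] at hb1
      refine ⟨hb1, ?_, trivial⟩
      rw [BotW_add (-1) b 1, lw_append, Function.iterate_succ_apply', ← mul_assoc] at hE
      simp only [BotW, append_nil, neg_neg] at hE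
      exact hE)
    rw [blk_half] at hsw
    have := hsw.1
    simpa using this

end SG

end

section
set_option linter.all false
namespace SG
open List CoxH CS
variable {g : ℕ} [hg : Fact (2 ≤ g)] {J : Subgroup (Gamma g)}

theorem mkCos_eq {x y : Gamma g} : mkCos g J x = mkCos g J y ↔ y * x⁻¹ ∈ J := by
  unfold mkCos
  rw [Quotient.eq]
  exact QuotientGroup.rightRel_apply

theorem mkCos_mul {x y : Gamma g} (h : mkCos g J x = mkCos g J y) (w : Gamma g) :
    mkCos g J (x * w) = mkCos g J (y * w) := by
  rw [mkCos_eq] at *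
  simpa [mul_assoc] using h

theorem rmul_mk (x w : Gamma g) : rmul g J w (mkCos g J x) = mkCos g J (x * w) := rfl

theorem mkCos_surj (v : Cos g J) : ∃ x, v = mkCos g J x := by
  induction v using Quotient.inductionOn with
  | h x => exact ⟨x, rfl⟩

noncomputable def dt (J : Subgroup (Gamma g)) (x : Gamma g) (p : A g) : (cover g J).D :=
  ((mkCos g J (if (letOf p).2 then x else x * lam p), (letOf p).1), (letOf p).2)

theorem dt_let (x : Gamma g) (p : A g) : (cover g J).dLet (dt J x p) = letOf p := rfl

theorem lam_true {p : A g} (h : (letOf p).2 = true) : lam p = PresentedGroup.of (letOf p).1 := by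
  unfold lam letterG; rw [h]; rfl

theorem lam_false {p : A g} (h : (letOf p).2 = false) : lam p = (PresentedGroup.of (letOf p).1)⁻¹ := by
  unfold lam letterG; rw [h]; rfl

theorem dt_tail (x : Gamma g) (p : A g) : (cover g J).dTail (dt J x p) = mkCos g J x := by
  unfold Complex.dTail dt
  rcases h : (letOf p).2
  · simp only [cover, Bool.false_eq_true, if_false, rmul_mk, lam_false h]; simp
  · simp only [cover, if_true]

theorem dt_head (x : Gamma g) (p : A g) : (cover g J).dHead (dt J x p) = mkCos g J (x * lam p) := by
  unfold Complex.dHead dt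
  rcases h : (letOf p).2
  · simp only [cover, Bool.false_eq_true, if_false]
  · simp only [cover, if_true, rmul_mk, lam_true h]

theorem dt_rev (x : Gamma g) (p : A g) : (cover g J).dRev (dt J x p) = dt J (x * lam p) (sg p) := by
  unfold Complex.dRev dt
  rw [letOf_sg]
  rcases h : (letOf p).2 <;> simp

theorem dt_congr {x x' : Gamma g} (h : mkCos g J x = mkCos g J x') (p : A g) : dt J x p = dt J x' p := by
  unfold dt
  rcases (letOf p).2
  · simp [mkCos_mul h]
  · simp [h]

theorem dt_inj {x x' : Gamma g} {p q : A g} (h : dt J x p = dt J x' q) : p = q ∧ mkCos g J x = mkCos g J x' := by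
  constructor
  · have := congrArg (cover g J).dLet h
    rw [dt_let, dt_let] at this
    rw [← pos_letOf p, this, pos_letOf]
  · rw [← dt_tail x p, h, dt_tail]

theorem dt_surj {x : Gamma g} {d : (cover g J).D} (h : (cover g J).dTail d = mkCos g J x) :
    d = dt J x (pos ((cover g J).dLet d)) := by
  obtain ⟨⟨v, l⟩, b⟩ := d
  have e : letOf (pos ((cover g J).dLet ((v, l), b))) = (l, b) := letOf_pos _
  unfold dt
  cases b
  · simp only [lam, e, letterG]
    obtain ⟨y, rfl⟩ := mkCos_surj v
    simp only [Complex.dTail, cover, Bool.false_eq_true, if_false, rmul_mk] at h ⊢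
    rw [← mkCos_mul h]; simp
  · simp only [e]
    simp only [Complex.dTail, cover, if_true] at h ⊢
    rw [h]

noncomputable def pth (J : Subgroup (Gamma g)) : Gamma g → List (A g) → List (cover g J).D
  | _, [] => []
  | x, p :: w => dt J x p :: pth J (x * lam p) w

theorem pth_append (v w : List (A g)) : ∀ x, pth J x (v ++ w) = pth J x v ++ pth J (x * lw v) w := by
  induction v with
  | nil => intro x; simp [pth]
  | cons p v ih => intro x; simp [pth, ih, mul_assoc]

@[simp] theorem pth_len (w : List (A g)) : ∀ x, (pth J x w).length = w.length := by
  induction w with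
  | nil => intro x; rfl
  | cons p v ih => intro x; simp [pth, ih]

theorem pth_congr (w : List (A g)) : ∀ {x x' : Gamma g}, mkCos g J x = mkCos g J x' → pth J x w = pth J x' w := by
  induction w with
  | nil => intro x x' h; rfl
  | cons p v ih => intro x x' h; simp [pth, ih (mkCos_mul h (lam p)), dt_congr h]

theorem pth_walk (w : List (A g)) : ∀ x, (cover g J).WalkFrom (mkCos g J x) (mkCos g J (x * lw w)) (pth J x w) := by
  induction w with
  | nil => intro x; simp [pth]; exact .nil _
  | cons p v ih =>
    intro x
    have := Complex.WalkFrom.cons (dt J x p) (by rw [dt_head]; exact ih (x * lam p))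
    rw [dt_tail, mul_assoc, ← lw_cons] at this
    exact this

theorem pth_word (w : List (A g)) : ∀ x, (cover g J).wordOf (pth J x w) = w.map letOf := by
  induction w with
  | nil => intro x; rfl
  | cons p v ih => intro x; simp only [pth, Complex.wordOf, map_cons, dt_let]; congr 1; exact ih _

theorem walk_pth {u v : (cover g J).V} {l : List (cover g J).D} (h : (cover g J).WalkFrom u v l) :
    ∀ x, u = mkCos g J x → ∃ w, l = pth J x w ∧ v = mkCos g J (x * lw w) := by
  induction h with
  | nil v => intro x hx; exact ⟨[], rfl, by simpa using hx⟩
  | cons d h ih =>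
    intro x hx
    have e := dt_surj hx
    obtain ⟨w, h1, h2⟩ := ih (x * lam (pos ((cover g J).dLet d))) (by
      conv_lhs => rw [e]
      rw [dt_head])
    refine ⟨pos ((cover g J).dLet d) :: w, ?_, ?_⟩
    · rw [pth, ← e, h1]
    · rw [h2, lw_cons, mul_assoc]

theorem relWalk_pth (w : List (A g)) : ∀ x, relWalk g J (mkCos g J x) (w.map letOf) = pth J x w := by
  induction w with
  | nil => intro x; rfl
  | cons p v ih =>
    intro x
    rw [map_cons, pth, dt, ← ih]
    rcases h : letOf p with ⟨l, b⟩
    cases b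
    · have := lam_false (p := p) (by rw [h])
      rw [h] at this
      simp only [relWalk, rmul_mk, this]; rfl
    · have := lam_true (p := p) (by rw [h])
      rw [h] at this
      simp only [relWalk, rmul_mk, this]; rfl

theorem bdry_pth (x : Gamma g) : (cover g J).bdry (mkCos g J x) = pth J x (blk 1 (0 : A g) (4*g)) := by
  show relWalk g J (mkCos g J x) (relatorWord g) = _
  rw [relWord_eq, relWalk_pth]

theorem pth_rev (w : List (A g)) : ∀ x, (cover g J).revW (pth J x w) = pth J (x * lw w) (invw w) := by
  induction w with
  | nil => intro x; rfl
  | cons p v ih =>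
    intro x
    have e : invw (p :: v) = invw v ++ [sg p] := by simp [invw]
    rw [e, pth_append, lw_cons, ← mul_assoc, ← ih, lw_invw, mul_inv_cancel_right]
    simp [pth, Complex.revW, dt_rev]

theorem pth_split (w : List (A g)) : ∀ (x : Gamma g) (l1 l2 : List (cover g J).D), pth J x w = l1 ++ l2 →
    ∃ w1 w2, w = w1 ++ w2 ∧ l1 = pth J x w1 ∧ l2 = pth J (x * lw w1) w2 := by
  induction w with
  | nil =>
    intro x l1 l2 h
    obtain ⟨rfl, rfl⟩ := append_eq_nil_iff.1 h.symm
    exact ⟨[], [], rfl, rfl, rfl⟩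
  | cons p v ih =>
    intro x l1 l2 h
    cases l1 with
    | nil => exact ⟨[], p :: v, rfl, rfl, by simpa using h.symm⟩
    | cons d l1 =>
      simp only [pth, cons_append, cons.injEq] at h
      obtain ⟨w1, w2, a, b, c⟩ := ih _ _ _ h.2
      exact ⟨p :: w1, w2, by rw [a]; rfl, by rw [pth, h.1, b], by rw [c, lw_cons, mul_assoc]⟩

def EE (J : Subgroup (Gamma g)) (sE : Set (cover g J).E) (x : Gamma g) (p : A g) : Prop := (dt J x p).1 ∈ sE

theorem pth_inset {sE : Set (cover g J).E} (w : List (A g)) : ∀ x,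
    (cover g J).InSet sE (pth J x w) ↔ WalkIn (EE J sE) x w := by
  induction w with
  | nil => intro x; simp [pth, Complex.InSet, WalkIn]
  | cons p v ih =>
    intro x
    rw [WalkIn, ← ih]
    simp [pth, Complex.InSet, EE]

theorem EE_congr {sE : Set (cover g J).E} {x x' : Gamma g} (h : mkCos g J x = mkCos g J x') {p : A g}
    (hE : EE J sE x p) : EE J sE x' p := by
  unfold EE at *; rwa [← dt_congr h]

theorem WalkIn_congr {sE : Set (cover g J).E} {x x' : Gamma g} (h : mkCos g J x = mkCos g J x') {w : List (A g)}
    (hE : WalkIn (EE J sE) x w) : WalkIn (EE J sE) x' w := by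
  rw [← pth_inset] at *; rwa [← pth_congr w h]

theorem EE_sg {sE : Set (cover g J).E} (x : Gamma g) (p : A g) (h : EE J sE x p) : EE J sE (x * lam p) (sg p) := by
  unfold EE at *; rwa [← dt_rev]

/-! homotopy -/

theorem wordG_append (u v : List (Letter g)) : wordG (u ++ v) = wordG u * wordG v := by simp [wordG]

theorem word_rev (l : List (cover g J).D) :
    wordG ((cover g J).wordOf ((cover g J).revW l)) = (wordG ((cover g J).wordOf l))⁻¹ := by
  induction l with
  | nil => simp [wordG, Complex.wordOf, Complex.revW]
  | cons d l ih =>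
    have : (cover g J).revW (d :: l) = (cover g J).revW l ++ [(cover g J).dRev d] := by simp [Complex.revW]
    rw [this]
    simp only [Complex.wordOf, map_append, wordG_append, map_cons] at ih ⊢
    rw [ih]
    simp only [wordG, map_cons, prod_cons, mul_inv_rev, map_nil, prod_nil, mul_one]
    congr 1
    obtain ⟨e, b⟩ := d
    cases b <;> simp [Complex.dLet, Complex.dRev, letterG]

theorem elem_word {sE : Set (cover g J).E} {sF : Set (cover g J).F} {l l' : List (cover g J).D}
    (h : (cover g J).elemMove sE sF l l') : wordG ((cover g J).wordOf l) = wordG ((cover g J).wordOf l') := by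
  rcases h with ⟨l1, l2, d, -, rfl, rfl⟩ | ⟨l1, l2, b, ⟨f, -, n, hb⟩, rfl, rfl⟩
  · have : letterG ((cover g J).dLet d) * letterG ((cover g J).dLet ((cover g J).dRev d)) = 1 := by
      obtain ⟨e, b⟩ := d
      cases b <;> simp [Complex.dLet, Complex.dRev, letterG]
    simp only [Complex.wordOf, map_append, wordG_append, map_cons]
    congr 1
    simp only [wordG, map_cons, prod_cons]
    rw [← mul_assoc, this, one_mul]
  · have hf : wordG ((cover g J).wordOf (((cover g J).bdry f).rotate n)) = 1 := by
      obtain ⟨x, rfl⟩ := mkCos_surj f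
      rw [bdry_pth]
      have h1 := pth_word (J := J) (blk 1 (0 : A g) (4*g)) x
      unfold Complex.wordOf at *
      rw [map_rotate, h1]
      unfold wordG
      rw [map_rotate]
      apply prod_rotate_eq_one_of_prod_eq_one
      have := wordG_map (blk 1 (0 : A g) (4*g))
      rw [lw_rel] at this
      exact this
    have : wordG ((cover g J).wordOf b) = 1 := by
      rcases hb with rfl | rfl
      · exact hf
      · rw [word_rev, hf, inv_one]
    simp only [Complex.wordOf, map_append, wordG_append] at this ⊢
    rw [this, mul_one]

theorem hom_word {sE : Set (cover g J).E} {sF : Set (cover g J).F} {u v} {l l' : List (cover g J).D}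
    (h : (cover g J).Homotopic sE sF u v l l') : wordG ((cover g J).wordOf l) = wordG ((cover g J).wordOf l') := by
  unfold Complex.Homotopic at h
  induction h with
  | rel a b h =>
    rcases h.2.2.2.2 with h | h
    · exact elem_word h
    · exact (elem_word h).symm
  | refl => rfl
  | symm a b _ ih => exact ih.symm
  | trans a b c _ _ i1 i2 => exact i1.trans i2

def hset (J : Subgroup (Gamma g)) : Setoid (List (A g)) where
  r w w' := lw w = lw w' ∧ ∀ x, (cover g J).Homotopic Set.univ Set.univ (mkCos g J x) (mkCos g J (x * lw w))
    (pth J x w) (pth J x w')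
  iseqv := by
    refine ⟨fun w => ⟨rfl, fun x => Relation.EqvGen.refl _⟩, fun {w w'} h => ⟨h.1.symm, fun x => ?_⟩,
      fun {a b c} h h' => ⟨h.1.trans h'.1, fun x => ?_⟩⟩
    · rw [← h.1]; exact Relation.EqvGen.symm _ _ (h.2 x)
    · have := h'.2 x
      rw [← h.1] at this
      exact Relation.EqvGen.trans _ _ _ (h.2 x) this

theorem inset_univ (l : List (cover g J).D) : (cover g J).InSet Set.univ l := fun _ _ => trivial

theorem elem_cons {l l' : List (cover g J).D} (d : (cover g J).D)
    (h : (cover g J).elemMove Set.univ Set.univ l l') :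
    (cover g J).elemMove Set.univ Set.univ (d :: l) (d :: l') := by
  rcases h with ⟨l1, l2, d', h1, rfl, rfl⟩ | ⟨l1, l2, b, h1, rfl, rfl⟩
  · exact Or.inl ⟨d :: l1, l2, d', h1, rfl, rfl⟩
  · exact Or.inr ⟨d :: l1, l2, b, h1, rfl, rfl⟩

theorem hom_cons {u v} {l l' : List (cover g J).D} (d : (cover g J).D)
    (h : (cover g J).Homotopic Set.univ Set.univ u v l l') (hd : (cover g J).dHead d = u) :
    (cover g J).Homotopic Set.univ Set.univ ((cover g J).dTail d) v (d :: l) (d :: l') := by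
  unfold Complex.Homotopic at h ⊢
  induction h with
  | rel a b h =>
    subst hd
    exact .rel _ _ ⟨.cons _ h.1, .cons _ h.2.1, inset_univ _, inset_univ _, h.2.2.2.2.imp (elem_cons d) (elem_cons d)⟩
  | refl => exact .refl _
  | symm a b _ ih => exact ih.symm
  | trans a b c _ _ i1 i2 => exact i1.trans _ _ _ i2

theorem hset_cons {w w' : List (A g)} (h : (hset J).r w w') (p : A g) : (hset J).r (p :: w) (p :: w') := by
  refine ⟨by rw [lw_cons, lw_cons, h.1], fun x => ?_⟩
  have := hom_cons (dt J x p) (h.2 (x * lam p)) (dt_head _ _)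
  rw [dt_tail, mul_assoc, ← lw_cons] at this
  exact this

theorem hset_ins (u w : List (A g)) (hu : lw u = 1) (hm : ∀ x l, (cover g J).elemMove Set.univ Set.univ l (pth J x u ++ l)) :
    (hset J).r (u ++ w) w := by
  have e : lw (u ++ w) = lw w := by rw [lw_append, hu, one_mul]
  refine ⟨e, fun x => .rel _ _ ⟨pth_walk _ _, by rw [e]; exact pth_walk _ _, inset_univ _, inset_univ _, Or.inr ?_⟩⟩
  rw [pth_append, hu, mul_one]
  exact hm _ _

theorem hset_back (p : A g) (w : List (A g)) : (hset J).r (sg p :: p :: w) w := by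
  apply hset_ins [sg p, p] w (by simp)
  intro x l
  refine Or.inl ⟨[], l, dt J x (sg p), trivial, rfl, ?_⟩
  rw [dt_rev, sg_sg]; rfl

theorem hset_back' (p : A g) (w : List (A g)) : (hset J).r (p :: sg p :: w) w := by
  have := hset_back (J := J) (sg p) w
  rwa [sg_sg] at this

theorem hset_rel (w : List (A g)) : (hset J).r (blk 1 0 (4*g) ++ w) w := by
  apply hset_ins _ w (lw_rel _ _)
  intro x l
  refine Or.inr ⟨[], l, _, ⟨mkCos g J x, trivial, 0, Or.inl rfl⟩, rfl, ?_⟩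
  rw [rotate_zero, bdry_pth]; rfl

def hperm (J : Subgroup (Gamma g)) (p : A g) : Equiv.Perm (Quotient (hset J)) where
  toFun := Quotient.map (fun w => p :: w) (fun _ _ h => hset_cons h p)
  invFun := Quotient.map (fun w => sg p :: w) (fun _ _ h => hset_cons h _)
  left_inv := by
    intro q
    induction q using Quotient.inductionOn with
    | h w => exact Quotient.sound (hset_back p w)
  right_inv := by
    intro q
    induction q using Quotient.inductionOn with
    | h w => exact Quotient.sound (hset_back' p w)

theorem hperm_prod (u w : List (A g)) : ((u.map (hperm J)).prod) (Quotient.mk (hset J) w) = Quotient.mk (hset J) (u ++ w) := by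
  induction u with
  | nil => rfl
  | cons p u ih => rw [map_cons, prod_cons, Equiv.Perm.mul_apply, ih]; rfl

theorem lift_hom {w w' : List (A g)} (h : lw w = lw w') (x : Gamma g) :
    (cover g J).Homotopic Set.univ Set.univ (mkCos g J x) (mkCos g J (x * lw w)) (pth J x w) (pth J x w') := by
  have key : (w.map (hperm J)).prod = (w'.map (hperm J)).prod := by
    obtain ⟨Ψ, hΨ⟩ := univ_prop (hperm J) (by
      intro p
      rw [eq_inv_iff_mul_eq_one]
      ext q
      induction q using Quotient.inductionOn with
      | h w => exact Quotient.sound (hset_back p w)) (by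
      ext q
      induction q using Quotient.inductionOn with
      | h w => rw [hperm_prod]; exact Quotient.sound (hset_rel w))
    have hk : ∀ w : List (A g), (w.map (hperm J)).prod = Ψ (lw w) := by
      intro w
      rw [lw, map_list_prod, map_map]
      congr 1
      apply map_congr_left
      intro p _
      exact (hΨ p).symm
    rw [hk, hk, h]
  have h2 := congrArg (fun π => π (Quotient.mk (hset J) [])) key
  beta_reduce at h2
  rw [hperm_prod, hperm_prod, append_nil, append_nil] at h2
  exact (Quotient.exact h2).2 x
end SG

end

section
set_option linter.all false
namespace SG
open List CoxH CS
variable {g : ℕ} [hg : Fact (2 ≤ g)] {J : Subgroup (Gamma g)}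

theorem blk_split {η : ℤˣ} {p : A g} {n : ℕ} {u v : List (A g)} (h : blk η p n = u ++ v) :
    u = blk η p u.length ∧ v = blk η ((nx η)^[u.length] p) v.length := by
  have hl : n = u.length + v.length := by
    have := congrArg length h; simpa using this
  rw [hl, blk_add] at h
  obtain ⟨a, b⟩ := append_inj h (by simp)
  exact ⟨a.symm, b.symm⟩

theorem chain_pth (R : (cover g J).D → (cover g J).D → Prop) (w : List (A g)) : ∀ (x : Gamma g)
    (h : ∀ u p q v, w = u ++ p :: q :: v → R (dt J (x * lw u) p) (dt J (x * lw u * lam p) q)),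
    List.Chain' R (pth J x w) := by
  induction w with
  | nil => intro x h; exact List.isChain_nil
  | cons p w ih =>
    intro x h
    have h1 := ih (x * lam p) (by
      intro u p' q v e
      have := h (p :: u) p' q v (by rw [e]; rfl)
      rwa [lw_cons, ← mul_assoc] at this)
    cases w with
    | nil => exact List.isChain_singleton _
    | cons q w =>
      have h2 := h [] p q w rfl
      simp only [lw_nil, mul_one] at h2
      exact List.isChain_cons_cons.2 ⟨h2, h1⟩

theorem chain_blk (R : (cover g J).D → (cover g J).D → Prop) (x : Gamma g) (p : A g) (n : ℕ)
    (h : ∀ i, i + 1 < n → R (dt J (x * lw (blk 1 p i)) ((nx 1)^[i] p))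
      (dt J (x * lw (blk 1 p i) * lam ((nx 1)^[i] p)) (nx 1 ((nx 1)^[i] p)))) :
    List.Chain' R (pth J x (blk 1 p n)) := by
  apply chain_pth
  intro u a b v e
  obtain ⟨h1, h2⟩ := blk_split e
  have hl := congrArg length e
  simp at hl
  simp only [length_cons, blk, cons.injEq] at h2
  have := h u.length (by omega)
  rw [← h1] at this
  rw [h2.1] at *
  rw [h2.2.1]
  exact this

theorem dt_adj (x : Gamma g) (p q : A g) : (cover g J).adj (dt J x p) (dt J (x * lam p) q) := by
  unfold Complex.adj; rw [dt_head, dt_tail]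

theorem gap_zero (x x' : Gamma g) (p q : A g) : gapN ((cover g J).dLet (dt J x p)) ((cover g J).dLet (dt J x' q)) = 0 ↔ q = nx 1 p := by
  rw [gap_eq_iff _ _ 0 (by have := g2 (g := g); omega), dt_let, dt_let, pos_letOf, pos_letOf]
  simp [nx]

theorem gap_one (x x' : Gamma g) (p q : A g) : gapN ((cover g J).dLet (dt J x p)) ((cover g J).dLet (dt J x' q)) = 1 ↔ q = nx 1 p + 1 := by
  rw [gap_eq_iff _ _ 1 (by have := g2 (g := g); omega), dt_let, dt_let, pos_letOf, pos_letOf]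
  simp [nx]

theorem face_step {sF : Set (cover g J).F} {x x' : Gamma g} {p q : A g}
    (h : (cover g J).faceStep sF (dt J x p) (dt J x' q)) :
    ∃ f k, mkCos g J f ∈ sF ∧ mkCos g J x = mkCos g J (f * lw (blk 1 (0 : A g) k)) ∧ p = (nx 1)^[k] 0 ∧ q = nx 1 p := by
  obtain ⟨f', hf, s, t, e⟩ := h
  obtain ⟨f, rfl⟩ := mkCos_surj f'
  have e2 : pth J f (blk 1 (0 : A g) (4*g + 4*g)) = s ++ ([dt J x p, dt J x' q] ++ t) := by
    rw [blk_add, pth_append, lw_rel, mul_one, nx_period, ← bdry_pth, ← e, append_assoc]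
  obtain ⟨w1, w2, h1, h2, h3⟩ := pth_split _ _ _ _ e2
  obtain ⟨h4, h5⟩ := blk_split h1
  match w2, h3, h5 with
  | [], h3, _ => simp [pth] at h3
  | [_], h3, _ => simp [pth] at h3
  | a :: b :: w, h3, h5 =>
    simp only [pth, cons_append, nil_append, cons.injEq] at h3
    simp only [length_cons, blk, cons.injEq] at h5
    obtain ⟨a1, a2⟩ := dt_inj h3.1
    obtain ⟨b1, b2⟩ := dt_inj h3.2.1
    refine ⟨f, w1.length, hf, ?_, ?_, ?_⟩
    · rw [← h4]; exact a2
    · rw [a1]; exact h5.1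
    · rw [b1, a1, h5.2.1, ← h5.1]

theorem face_all {S : SubC (cover g J)} (hS : S.IsSub) {f : Gamma g} (hf : mkCos g J f ∈ S.sF) (N : ℕ) :
    WalkIn (EE J S.sE) f (blk 1 (0 : A g) (4*g*N)) := by
  have h1 : WalkIn (EE J S.sE) f (blk 1 (0 : A g) (4*g)) := by
    rw [← pth_inset, ← bdry_pth]
    exact hS.2 _ hf
  induction N with
  | zero => trivial
  | succ N ih => 
    rw [show 4*g*(N+1) = 4*g + 4*g*N by ring, blk_add, WalkIn_append, lw_rel, mul_one, nx_period]
    exact ⟨h1, ih⟩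

theorem face_walk {S : SubC (cover g J)} (hS : S.IsSub) {x x' : Gamma g} {p q : A g}
    (h : (cover g J).faceStep S.sF (dt J x p) (dt J x' q)) (n : ℕ) : WalkIn (EE J S.sE) x (blk 1 p n) := by
  obtain ⟨f, k, hf, hx, hp, -⟩ := face_step h
  have hg2 := g2 (g := g)
  have h1 := face_all hS hf (k+n)
  have e : 4*g*(k+n) = k + (n + (4*g*(k+n) - (k+n))) := by
    have : k + n ≤ 4*g*(k+n) := Nat.le_mul_of_pos_left _ (by omega)
    omega
  rw [e, blk_add, WalkIn_append, ← hp, blk_add, WalkIn_append] at h1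
  exact WalkIn_congr hx.symm h1.2.1

/-- a face at a corner of a block: the whole polygon is present -/
theorem face_blk {S : SubC (cover g J)} (hS : S.IsSub) {x x' : Gamma g} {p q : A g} {i : ℕ} (hi : i < 4*g)
    (h : (cover g J).faceStep S.sF (dt J (x * lw (blk 1 p i)) ((nx 1)^[i] p)) (dt J x' q)) :
    WalkIn (EE J S.sE) x (blk 1 p (4*g)) := by
  have h1 := face_walk hS h ((4*g-i) + 4*g)
  rw [blk_add, WalkIn_append] at h1
  have h2 := h1.2
  rw [mul_assoc, ← lw_append, ← blk_add, ← Function.iterate_add_apply, show 4*g - i + i = 4*g by omega,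
    show i + (4*g - i) = 4*g by omega, lw_rel, nx_period, mul_one] at h2
  exact h2

theorem face_compl {S : SubC (cover g J)} {x : Gamma g} {p : A g}
    (h : WalkIn (EE J S.sE) x (blk 1 p (4*g))) : WalkIn (EE J S.sE) x (blk (-1) (p - 1) (2*g)) := by
  have hg2 := g2 (g := g)
  have hl := lw_rel 1 p
  rw [show 4*g = 2*g+2*g by ring, blk_add, WalkIn_append] at h
  rw [show 4*g = 2*g+2*g by ring, blk_add, lw_append] at hl
  have h3 := WalkIn_inv EE_sg h.2
  rw [mul_assoc, hl, mul_one, show 2*g = (2*g-1)+1 by omega, invw, blk_inv_rev, ← Function.iterate_add_apply,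
    show 2*g - 1 + (2*g-1+1) = 4*g-1 by omega, swap_last] at h3
  rw [show 2*g = (2*g-1)+1 by omega]
  simpa using h3

theorem nextD_zero {sE : Set (cover g J).E} {x : Gamma g} {p : A g} (h : EE J sE (x * lam p) (nx 1 p)) :
    (cover g J).nextD sE (dt J x p) (dt J (x * lam p) (nx 1 p)) := by
  refine ⟨h, dt_adj _ _ _, fun d _ _ => ?_⟩
  rw [(gap_zero _ _ _ _).2 rfl]; omega

theorem walk_at {E : Gamma g → A g → Prop} {x : Gamma g} {p : A g} {n i : ℕ} (h : WalkIn E x (blk 1 p n)) (hi : i < n) :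
    E (x * lw (blk 1 p i)) ((nx 1)^[i] p) := by
  rw [show n = i + ((n-i-1)+1) by omega, blk_add, WalkIn_append] at h
  exact h.2.1

theorem walk_at' {E : Gamma g → A g → Prop} {x : Gamma g} {p : A g} {n i : ℕ} (h : WalkIn E x (blk 1 p n)) (hi : i + 1 < n) :
    E (x * lw (blk 1 p i) * lam ((nx 1)^[i] p)) (nx 1 ((nx 1)^[i] p)) := by
  have := walk_at h hi
  rw [blk_add, lw_append, Function.iterate_succ_apply'] at this
  simpa [blk, mul_assoc] using this

theorem isBlock_blk (x : Gamma g) (p : A g) (n : ℕ) (h0 : 0 < n) (hn : n ≤ 4*g) : (cover g J).IsBlock (pth J x (blk 1 p n)) := by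
  refine ⟨?_, by simpa using hn, ?_⟩
  · intro h
    have := congrArg length h
    simp at this; omega
  · apply chain_blk
    intro i hi
    exact ⟨dt_adj _ _ _, (gap_zero _ _ _ _).2 rfl⟩

theorem half1 {S : SubC (cover g J)} (hS : S.IsSub) (hb : (cover g J).StronglyBoundaryReduced S.sE S.sF)
    (x : Gamma g) (p : A g) (h : WalkIn (EE J S.sE) x (blk 1 p (2*g))) :
    WalkIn (EE J S.sE) x (blk (-1) (p - 1) (2*g)) := by
  have hg2 := g2 (g := g)
  by_cases hf : ∃ i, i + 1 < 2*g ∧ (cover g J).faceStep S.sF (dt J (x * lw (blk 1 p i)) ((nx 1)^[i] p))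
      (dt J (x * lw (blk 1 p i) * lam ((nx 1)^[i] p)) (nx 1 ((nx 1)^[i] p)))
  · obtain ⟨i, hi, hf⟩ := hf
    exact face_compl (face_blk hS (by omega) hf)
  · exfalso
    push Not at hf
    refine hb.1 (pth J x (blk 1 p (2*g))) ⟨?_, ?_, ?_⟩ ⟨isBlock_blk _ _ _ (by omega) (by omega), by simp⟩
    · exact (isBlock_blk _ _ _ (by omega) (by omega)).1
    · rwa [pth_inset]
    · apply chain_blk
      intro i hi
      exact ⟨walk_at h (by omega), nextD_zero (walk_at' h hi), hf i hi⟩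

theorem half {S : SubC (cover g J)} (hS : S.IsSub) (hb : (cover g J).StronglyBoundaryReduced S.sE S.sF)
    (η : ℤˣ) (x : Gamma g) (p : A g) (h : WalkIn (EE J S.sE) x (blk η p (2*g))) :
    WalkIn (EE J S.sE) x (blk (-η) (p - ((η:ℤ) : A g)) (2*g)) := by
  have hg2 := g2 (g := g)
  rcases units_cases η with rfl | rfl
  · have := half1 hS hb x p h
    simpa using this
  · have h1 := WalkIn_inv EE_sg h
    have e : 2*g = (2*g-1)+1 := by omega
    have e1 : invw (blk (-1) p (2*g)) = blk 1 (sg ((nx (-1))^[2*g-1] p)) (2*g) := by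
      rw [e, invw, blk_inv_rev, neg_neg, ← e]
    rw [e1] at h1
    have h2 := half1 hS hb _ _ h1
    have h3 := WalkIn_inv EE_sg h2
    have e2 : sg ((nx (-1))^[2*g-1] p) - 1 = (nx (-1))^[2*g] p := by
      conv_rhs => rw [e, Function.iterate_succ_apply', nx]
      simp [sub_eq_add_neg]
    have e4 : lw (blk (-1) p (2*g)) * lw (blk (-1) ((nx (-1))^[2*g] p) (2*g)) = 1 := by
      rw [← lw_append, ← blk_add, show 2*g+2*g = 4*g by ring, lw_rel]
    rw [e2, mul_assoc, e4, mul_one] at h3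
    have e3 : invw (blk (-1) ((nx (-1))^[2*g] p) (2*g)) = blk 1 (p+1) (2*g) := by
      conv_lhs => rw [e, invw]
      rw [blk_inv_rev, neg_neg, ← e, ← Function.iterate_add_apply, show 2*g-1+2*g = 4*g-1 by omega, swap_last]
      simp
    rw [e3] at h3
    simpa using h3
end SG

end

section
set_option linter.all false
namespace SG
open List CoxH CS
variable {g : ℕ} [hg : Fact (2 ≤ g)] {J : Subgroup (Gamma g)}

theorem no_half_chain {S : SubC (cover g J)} (hS : S.IsSub) (hb : (cover g J).StronglyBoundaryReduced S.sE S.sF)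
    (z : Gamma g) (p : A g) (j : ℕ) (hj : 0 < j) (hz : mkCos g J (z * lw (BotW (-1) j p)) = mkCos g J z)
    (hp : (opp (-1))^[j] p = p) (hW : WalkIn (EE J S.sE) z (BotW (-1) j p))
    (hn : ∀ b, b < j → ¬ EE J S.sE (z * lw (BotW (-1) b p)) ((opp (-1))^[b] p)) : False := by
  have hg2 := g2 (g := g)
  set zz : ℕ → Gamma g := fun b => z * lw (BotW (-1) b p) with hzz
  set pp : ℕ → A g := fun b => (opp (-1))^[b] p with hpp
  have hzs : ∀ b, zz (b+1) = zz b * lw (blk 1 (pp b + 1) (2*g-1)) := by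
    intro b
    simp only [hzz, hpp]
    rw [BotW_add (-1) b 1, lw_append, ← mul_assoc]
    simp [BotW]
  have hps : ∀ b, pp (b+1) = (nx 1)^[2*g-1] (pp b + 1) := by
    intro b
    simp only [hpp]
    rw [Function.iterate_succ_apply', ← opp_eq]; simp
  have hN : ∀ b, b ≤ j → ¬ EE J S.sE (zz b) (pp b) := by
    intro b hbj
    rcases hbj.lt_or_eq with h | rfl
    · exact hn b h
    · intro h
      have := hn 0 hj
      simp only [hpp, hzz, hp] at h
      apply this
      simpa [BotW] using EE_congr hz h
  have hWb : ∀ b, b < j → WalkIn (EE J S.sE) (zz b) (blk 1 (pp b + 1) (2*g-1)) := by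
    intro b hbj
    have hW' := hW
    rw [show j = b + (1 + (j-b-1)) by omega, BotW_add, BotW_add, WalkIn_append, WalkIn_append] at hW'
    have := hW'.2.1
    simpa [BotW] using this
  set Bk : ℕ → List (cover g J).D := fun b => pth J (zz b) (blk 1 (pp b + 1) (2*g-1)) with hBk
  set ft : ℕ → (cover g J).D := fun b => dt J (zz b) (pp b + 1) with hft
  set zl : ℕ → Gamma g := fun b => zz b * lw (blk 1 (pp b + 1) (2*g-2)) with hzl
  set pl : ℕ → A g := fun b => (nx 1)^[2*g-2] (pp b + 1) with hpl
  have hzls : ∀ b, zz (b+1) = zl b * lam (pl b) := by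
    intro b
    rw [hzs, show 2*g-1 = (2*g-2) + 1 by omega, blk_add, lw_append, ← mul_assoc]
    simp [blk, hzl, hpl]
  have hpls : ∀ b, pp (b+1) = nx 1 (pl b) := by
    intro b
    rw [hps, show 2*g-1 = (2*g-2) + 1 by omega, Function.iterate_succ_apply']
  have hlast : ∀ b, (Bk b).getLast? = some (dt J (zl b) (pl b)) := by
    intro b
    simp only [hBk]
    rw [show 2*g-1 = (2*g-2) + 1 by omega, blk_add, pth_append]
    simp [blk, pth, hzl, hpl]
  have hhead : ∀ b, (Bk b).head? = some (ft b) := by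
    intro b
    simp only [hBk]
    rw [show 2*g-1 = (2*g-2) + 1 by omega]
    rfl
  have hBj : Bk j = Bk 0 := by
    simp only [hBk, hpp, hp]
    exact pth_congr _ (by simpa [hzz, BotW] using hz)
  have hftj : ft j = ft 0 := by
    simp only [hft, hpp, hp]
    exact dt_congr (by simpa [hzz, BotW] using hz) _
  have hne : ∀ b, Bk b ≠ [] := by
    intro b h
    have := hhead b
    rw [h] at this; simp at this
  have hadj : ∀ b, (cover g J).adj (dt J (zl b) (pl b)) (ft (b+1)) := by
    intro b
    simp only [hft, hzls]
    exact dt_adj _ _ _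
  have hgap : ∀ b, gapN ((cover g J).dLet (dt J (zl b) (pl b))) ((cover g J).dLet (ft (b+1))) = 1 := by
    intro b
    simp only [hft, hpls]
    exact (gap_one _ _ _ _).2 rfl
  have hcs : ∀ b, (cover g J).chainStep (Bk b) (Bk (b+1)) := by
    intro b
    exact ⟨_, _, hlast b, hhead (b+1), hadj b, hgap b⟩
  have hEf : ∀ b, b < j → EE J S.sE (zz b) (pp b + 1) := by
    intro b hbj
    have := walk_at (hWb b hbj) (i := 0) (by omega)
    simpa [blk] using this
  have hEf' : ∀ b, b ≤ j → (ft b).1 ∈ S.sE := by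
    intro b hbj
    rcases hbj.lt_or_eq with h | rfl
    · exact hEf b h
    · rw [hftj]; exact hEf 0 hj
  have hEl : ∀ b, b < j → EE J S.sE (zl b) (pl b) := by
    intro b hbj
    exact walk_at (hWb b hbj) (i := 2*g-2) (by omega)
  have hstep : ∀ b, b < j → (cover g J).bStep S.sE S.sF (dt J (zl b) (pl b)) (ft (b+1)) := by
    intro b hbj
    refine ⟨hEl b hbj, ⟨hEf' _ (by omega), hadj b, ?_⟩, ?_⟩
    · intro d hd had
      rw [hgap b]
      by_contra hlt
      have h0 : gapN ((cover g J).dLet (dt J (zl b) (pl b))) ((cover g J).dLet d) = 0 := by omega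
      have hdt : (cover g J).dTail d = mkCos g J (zz (b+1)) := by
        unfold Complex.adj at had
        rw [← had, dt_head, hzls]
      have e := dt_surj hdt
      rw [e, gap_zero, ← hpls] at h0
      rw [h0] at e
      apply hN (b+1) (by omega)
      unfold EE
      rw [← e]; exact hd
    · intro hf
      obtain ⟨f, k, -, -, -, hq⟩ := face_step hf
      have := (gap_zero (J := J) (zl b) (zz (b+1)) (pl b) (pp (b+1) + 1)).2 hq
      have h1 := hgap b
      simp only [hft] at h1
      omega
  have hin : ∀ b, b < j → List.Chain' ((cover g J).bStep S.sE S.sF) (Bk b) := by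
    intro b hbj
    apply chain_blk
    intro i hi
    refine ⟨walk_at (hWb b hbj) (by omega), nextD_zero (walk_at' (hWb b hbj) hi), ?_⟩
    intro hf
    have h1 := face_compl (face_blk hS (by omega) hf)
    rw [show 2*g = (2*g-1)+1 by omega] at h1
    have := h1.1
    simp at this
    exact hN b hbj.le this
  set bs := (List.range j).map Bk with hbs
  have hmem : ∀ l ∈ bs, ∃ b, b < j ∧ l = Bk b := by
    intro l hl
    simp only [hbs, mem_map, mem_range] at hl
    obtain ⟨b, h1, h2⟩ := hl
    exact ⟨b, h1, h2.symm⟩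
  have hbl : bs.getLast? = some (Bk (j-1)) := by
    rw [hbs, show j = (j-1)+1 by omega, List.range_succ, map_append]
    simp
  have hbh : bs.head? = some (Bk 0) := by
    rw [hbs, show j = (j-1)+1 by omega, List.range_succ_eq_map]
    simp
  have hbne : bs ≠ [] := by
    intro h; rw [h] at hbh; simp at hbh
  have hnil : [] ∉ bs := by
    intro h
    obtain ⟨b, _, h2⟩ := hmem _ h
    exact hne b h2.symm
  apply hb.2 bs
  · refine ⟨⟨⟨hbne, ?_, ?_⟩, Bk (j-1), Bk 0, hbl, hbh, ?_⟩, ?_⟩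
    · intro l hl
      obtain ⟨b, _, rfl⟩ := hmem l hl
      exact isBlock_blk _ _ _ (by omega) (by omega)
    · show List.IsChain _ bs
      rw [hbs, List.isChain_map, List.isChain_range]
      intro b _
      exact hcs b
    · have := hcs (j-1)
      rwa [show j-1+1 = j by omega, hBj] at this
    · intro l hl
      obtain ⟨b, _, rfl⟩ := hmem l hl
      simp [hBk]
  · have hj1 : j - 1 + 1 = j := by omega
    have hfl : bs.flatten.getLast? = some (dt J (zl (j-1)) (pl (j-1))) := by
      rw [hbs, ← hj1, List.range_succ, map_append, flatten_append]
      simp only [map_cons, map_nil, flatten_cons, flatten_nil, append_nil, hj1]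
      rw [getLast?_append, hlast]; rfl
    have hfh : bs.flatten.head? = some (ft 0) := by
      rw [hbs, ← hj1, List.range_succ_eq_map, map_cons, flatten_cons, head?_append, hhead]; rfl
    refine ⟨⟨?_, ?_, ?_⟩, _, _, hfl, hfh, ?_⟩
    · intro h; rw [h] at hfh; simp at hfh
    · intro d hd
      rw [mem_flatten] at hd
      obtain ⟨l, hl, hdl⟩ := hd
      obtain ⟨b, hbj, rfl⟩ := hmem l hl
      exact (pth_inset _ _).2 (hWb b hbj) d hdl
    · show List.IsChain _ bs.flatten
      rw [List.isChain_flatten hnil]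
      constructor
      · intro l hl
        obtain ⟨b, hbj, rfl⟩ := hmem l hl
        exact hin b hbj
      · rw [hbs, List.isChain_map, List.isChain_range]
        intro b hbj d hd d' hd'
        rw [hlast] at hd
        rw [hhead] at hd'
        simp only [Option.mem_def, Option.some.injEq] at hd hd'
        subst hd; subst hd'
        exact hstep b (by omega)
    · have := hstep (j-1) (by omega)
      rwa [hj1, hftj] at this

theorem WalkIn_of_get {E : Gamma g → A g → Prop} (w : List (A g)) : ∀ (x : Gamma g)
    (h : ∀ i (hi : i < w.length), E (x * lw (w.take i)) w[i]), WalkIn E x w := by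
  induction w with
  | nil => intro x h; trivial
  | cons p w ih =>
    intro x h
    refine ⟨by have := h 0 (by simp); simp only [take_zero, lw_nil, mul_one] at this; exact this, ih _ ?_⟩
    intro i hi
    have := h (i+1) (by simpa using hi)
    simpa [mul_assoc] using this

theorem main (S : SubC (cover g J)) (hS : S.IsSub)
    (hsbr : (cover g J).StronglyBoundaryReduced S.sE S.sF)
    (c : List ((cover g J).D)) (hcS : (cover g J).InSet S.sE c)
    (c' : List ((cover g J).D)) (hcc : (cover g J).FreelyHomotopic Set.univ Set.univ c c')
    (hsh : (cover g J).ShortestRep Set.univ Set.univ c') : (cover g J).InSet S.sE c' := by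
  obtain ⟨u, v, q, h1, h2, h3, -, -, -, h4⟩ := hcc
  obtain ⟨x, rfl⟩ := mkCos_surj u
  obtain ⟨wc, rfl, hc1⟩ := walk_pth h1 x rfl
  obtain ⟨wq, rfl, rfl⟩ := walk_pth h3 x rfl
  set y0 := x * lw wq with hy0
  obtain ⟨w, rfl, hw1⟩ := walk_pth h2 y0 rfl
  have hword := hom_word h4
  rw [pth_rev, ← hy0] at hword
  simp only [Complex.wordOf, map_append] at hword
  rw [← Complex.wordOf, ← Complex.wordOf, ← Complex.wordOf, ← Complex.wordOf, pth_word, pth_word, pth_word, pth_word,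
    ← map_append, ← map_append, wordG_map, wordG_map, lw_append, lw_append, lw_invw] at hword
  set γ := x * lw wc * x⁻¹ with hγ
  have hγ' : γ = y0 * lw w * y0⁻¹ := by rw [hγ, hword, hy0]; group
  have hγJ : γ ∈ J := by
    exact mkCos_eq.1 hc1
  have hJz : ∀ (k : ℤ) z, mkCos g J (γ^k * z) = mkCos g J z := by
    intro k z
    rw [eq_comm, mkCos_eq, mul_inv_cancel_right]; exact J.zpow_mem hγJ k
  rcases Nat.eq_zero_or_pos w.length with ht0 | ht
  · rw [length_eq_zero_iff] at ht0
    subst ht0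
    intro d hd; simp [pth] at hd
  rw [pth_inset]
  set t := w.length with htd
  have hm0 : ∀ j : ℤ, 0 ≤ j % t := fun j => Int.emod_nonneg _ (by omega)
  have hml : ∀ j : ℤ, (j % t).toNat < t := fun j => by
    have := Int.emod_lt_of_pos j (b := t) (by omega)
    have := hm0 j
    omega
  set a : ℤ → A g := fun j => w[(j % t).toNat]'(hml j) with ha
  set y : ℤ → Gamma g := fun j => γ^(j / t) * (y0 * lw (w.take (j % t).toNat)) with hy
  have hE := mainAbs (E := EE J S.sE) (a := a) (y := y) (t := t) (γ := γ) EE_sg (half hS hsbr) ?_ ?_ ?_ ht ?_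
    (fun z p h => EE_congr (by have := hJz 1 z; rw [zpow_one] at this; exact this.symm) h)
    (fun z p h => EE_congr (by have := hJz (-1) z; rw [zpow_neg_one] at this; exact this.symm) h)
    (z0 := x) (wc := wc) ((pth_inset _ _).1 hcS) (by rw [hγ]; group) ?_
  · apply WalkIn_of_get
    intro i hi
    have := hE i
    have e1 : (i : ℤ) % t = i := Int.emod_eq_of_lt (by omega) (by omega)
    have e2 : (i : ℤ) / t = 0 := Int.ediv_eq_zero_of_lt (by omega) (by omega)
    simp only [ha, hy, e1, e2, zpow_zero, one_mul, Int.toNat_natCast] at this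
    exact this
  · intro j
    simp only [ha, hy]
    have hd := Int.mul_ediv_add_emod j t
    have h0 := hm0 j
    have hl := hml j
    by_cases hlt : j % t + 1 < t
    · have e1 : (j+1) / t = j / t := by
        rw [Int.ediv_eq_iff_of_pos (by omega)]
        constructor <;> nlinarith
      have e2 : (j+1) % t = j % t + 1 := by
        have := Int.mul_ediv_add_emod (j+1) t
        rw [e1] at this; omega
      rw [e1, e2, show (j % t + 1).toNat = (j%t).toNat + 1 by omega, take_succ_eq_append_getElem hl, lw_append]
      simp [mul_assoc]
    · have e0 : j % t = t - 1 := by omega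
      have e1 : (j+1) / t = j / t + 1 := by
        rw [Int.ediv_eq_iff_of_pos (by omega)]
        constructor <;> nlinarith
      have e2 : (j+1) % t = 0 := by
        have := Int.mul_ediv_add_emod (j+1) t
        rw [e1, mul_add] at this; omega
      have e3 : γ * y0 = y0 * lw w := by rw [hγ']; group
      rw [e1, e2, zpow_add_one]
      simp only [Int.toNat_zero, take_zero, lw_nil, mul_one]
      have this : w = w.take (j % t).toNat ++ [w[(j % t).toNat]'hl] := by
        rw [← take_succ_eq_append_getElem hl, take_of_length_le]; omega
      have hlw : lw w = lw (w.take (j%t).toNat) * lam (w[(j%t).toNat]'hl) := by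
        have h5 := congrArg lw this
        rw [h5, lw_append]
        simp
      rw [mul_assoc, e3]
      generalize lam (w[(j%t).toNat]'hl) = L at hlw ⊢
      rw [hlw]; simp only [mul_assoc]
  · intro j
    simp only [ha, Int.add_emod_right]
  · intro j
    simp only [hy, Int.add_emod_right]
    rw [Int.add_ediv_of_dvd_right (dvd_refl _), Int.ediv_self (by omega), add_comm, zpow_one_add, mul_assoc]
  · intro z
    obtain ⟨w2, hw2, hl2⟩ := exists_geo (z⁻¹ * γ * z)
    obtain ⟨wr, hwr⟩ := lw_surj (y0⁻¹ * z)
    have ez : z * lw w2 = γ * z := by rw [hw2]; group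
    have ezJ : mkCos g J (γ * z) = mkCos g J z := by have := hJz 1 z; rwa [zpow_one] at this
    have er : y0 * lw wr = z := by rw [hwr]; group
    have hfh : (cover g J).FreelyHomotopic Set.univ Set.univ (pth J y0 w) (pth J z w2) := by
      refine ⟨mkCos g J y0, mkCos g J z, pth J y0 wr, h2, ?_, ?_, inset_univ _, inset_univ _, inset_univ _, ?_⟩
      · have := pth_walk (J := J) w2 z
        rwa [ez, ezJ] at this
      · have := pth_walk (J := J) wr y0
        rwa [er] at this
      · have := lift_hom (J := J) (w := w) (w' := wr ++ w2 ++ invw wr) (by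
          rw [lw_append, lw_append, lw_invw, hwr, hw2, hγ']; group) y0
        rw [← hw1, pth_append, pth_append, lw_append, ← mul_assoc, er, ez, pth_congr _ ezJ] at this
        rw [pth_rev, er]
        exact this
    have := hsh _ hfh
    simp only [pth_len] at this
    omega
  · intro z p j k hj hk hp hW hn
    exact no_half_chain hS hsbr z p j hj (by rw [← hk]; exact hJz k z) hp hW hn
end SG

end

namespace CS

/-- Let `Y` (= `S`) be a strongly boundary reduced tiled
surface embedded in `Υ = J\~Σ_g` and let `C ⊆ Y^(1)` be a non-nullhomotopic
cycle.  Then every shortest representative in `Υ^(1)` of the free homotopy class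
of `C` is contained in `Y`. -/
theorem statement_15 (g : ℕ) (hg : 2 ≤ g) (J : Subgroup (Gamma g))
    (S : SubC (cover g J)) (hS : S.IsSub)
    (hsbr : (cover g J).StronglyBoundaryReduced S.sE S.sF)
    (c : List ((cover g J).D)) (hcS : (cover g J).InSet S.sE c)
    (hc : (cover g J).Essential Set.univ Set.univ c) :
    ∀ c', (cover g J).FreelyHomotopic Set.univ Set.univ c c' →
      (cover g J).ShortestRep Set.univ Set.univ c' →
      (cover g J).InSet S.sE c' := by
  haveI : Fact (2 ≤ g) := ⟨hg⟩
  intro c' h1 h2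
  exact SG.main S hS hsbr c hcS c' h1 h2

end CS

end
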